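/- arXiv:2409.00943 — 2 statements merged into one kernel-verified Lean document; each statement's English description precedes it below -/
import Mathlib

section
/- For every integer n ≥ 1, the Schur coefficient [s_{(2^n)}] X_{GN_{n,n}} equals n! if n is even and equals 0 if n is odd, where (2^n) denotes the partition with n parts all equal to 2. -/
open scoped Classical

/-! ### Cells and Young diagrams -/

/-- A cell of a Young diagram: `(row, column)`, both 0-indexed, rows from the top. -/
abbrev Cell : Type := ℕ × ℕ

/-- The length of row `i` (0-indexed from the top) of the Young diagram of the
partition `lam`, whose parts are arranged in weakly decreasing order. -/
def rowLen {N : ℕ} (lam : Nat.Partition N) (i : ℕ) : ℕ :=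
  ((lam.parts.sort (· ≤ ·)).reverse).getD i 0

/-- The Young diagram of a partition, as a set of cells. -/
def diag {N : ℕ} (lam : Nat.Partition N) : Set Cell :=
  {c : Cell | c.2 < rowLen lam c.1}

/-- The number of rows (the length) of a partition. -/
def numRows {N : ℕ} (lam : Nat.Partition N) : ℕ := Multiset.card lam.parts

/-! ### Chromatic symmetric functions and Schur functions, as monomial-coefficient
functions.  A formal power series of bounded degree in the commuting variables
`x_0, x_1, x_2, …` is recorded by the map sending an exponent vector `μ : ℕ → ℕ`
(only finitely many nonzero entries ever matter) to the coefficient of the monomial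
`∏ i, x_i ^ μ i`.  Colors / tableau entries are positive integers, so the variable
`x_0` is never used. -/

/-- A proper coloring of `G` by positive integers. -/
def IsProperColoring {V : Type*} (G : SimpleGraph V) (f : V → ℕ) : Prop :=
  (∀ v, 0 < f v) ∧ ∀ u v, G.Adj u v → f u ≠ f v

/-- The coefficient of the monomial `∏ i, x_i ^ μ i` in the chromatic symmetric
function `X_G = ∑_{proper colorings f} ∏_{v} x_{f v}`. -/
noncomputable def XCoeff {V : Type*} [Fintype V] (G : SimpleGraph V) (μ : ℕ → ℕ) : ℚ :=
  Nat.card {f : V → ℕ //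
    IsProperColoring G f ∧ ∀ i, Nat.card {v : V // f v = i} = μ i}

/-- A semistandard Young tableau of shape `lam`: positive entries on the diagram
(normalized to `0` off the diagram), weakly increasing along rows, strictly
increasing down columns. -/
def IsSSYT {N : ℕ} (lam : Nat.Partition N) (t : Cell → ℕ) : Prop :=
  (∀ c, c ∉ diag lam → t c = 0) ∧ (∀ c ∈ diag lam, 0 < t c) ∧
  (∀ i j : ℕ, ((i, j + 1) : Cell) ∈ diag lam → t (i, j) ≤ t (i, j + 1)) ∧
  (∀ i j : ℕ, ((i + 1, j) : Cell) ∈ diag lam → t (i, j) < t (i + 1, j))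

/-- The coefficient of the monomial `∏ i, x_i ^ μ i` in the Schur function `s_lam`,
i.e. the number of SSYT of shape `lam` and weight `μ`. -/
noncomputable def schurFn {N : ℕ} (lam : Nat.Partition N) (μ : ℕ → ℕ) : ℚ :=
  Nat.card {t : Cell → ℕ // IsSSYT lam t ∧
    ∀ i, Nat.card {c : Cell // c ∈ diag lam ∧ t c = i} = μ i}

/-- The coefficient `[s_lam] f` of the Schur function `s_lam` in the (unique, when it
exists) expansion `f = ∑_{ν ⊢ N} c_ν s_ν` of a symmetric function `f`, homogeneous of
degree `N`, given by its monomial coefficients. -/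
noncomputable def sCoeff {N : ℕ} (f : (ℕ → ℕ) → ℚ) (lam : Nat.Partition N) : ℚ :=
  if h : ∃ c : Nat.Partition N →₀ ℚ, ∀ μ, f μ = c.sum fun ν a => a * schurFn ν μ
  then h.choose lam else 0

/-! ### Graphs: generalized nets, generalized spiders, disjoint unions -/

/-- The generalized net `GN_{n,m}`: the complete graph on the body `Fin n`, with a
pendant (`Sum.inr j`) attached to the anchor `Sum.inl j` for each `j : Fin m`. -/
def genNet (n m : ℕ) : SimpleGraph (Fin n ⊕ Fin m) :=
  SimpleGraph.fromRel fun a b =>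
    match a, b with
    | Sum.inl _, Sum.inl _ => True
    | Sum.inl i, Sum.inr j => (i : ℕ) = (j : ℕ)
    | Sum.inr _, _ => False

/-- The generalized spider `GS_{n,(2,1^{m-1})}`: the complete graph on the body
`Fin n`, a pendant `Sum.inr (Sum.inl j)` attached to the body vertex `Sum.inl j` for
each `j : Fin m`, and one extra vertex `Sum.inr (Sum.inr 0)` (the special pendant)
attached to the pendant `Sum.inr (Sum.inl 0)`, so that the body vertex `0` (the
special anchor) carries an attached path on two vertices. -/
def genSpider2 (n m : ℕ) : SimpleGraph (Fin n ⊕ (Fin m ⊕ Fin 1)) :=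
  SimpleGraph.fromRel fun a b =>
    match a, b with
    | Sum.inl _, Sum.inl _ => True
    | Sum.inl i, Sum.inr (Sum.inl j) => (i : ℕ) = (j : ℕ)
    | Sum.inr (Sum.inl j), Sum.inr (Sum.inr _) => (j : ℕ) = 0
    | _, _ => False

/-- Disjoint union of two simple graphs. -/
def disjUnion {α β : Type*} (G : SimpleGraph α) (H : SimpleGraph β) :
    SimpleGraph (α ⊕ β) :=
  SimpleGraph.fromRel fun a b =>
    match a, b with
    | Sum.inl a, Sum.inl b => G.Adj a b
    | Sum.inr a, Sum.inr b => H.Adj a b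
    | _, _ => False

/-- The one-vertex graph `K_1`. -/
def K1 : SimpleGraph (Fin 1) := ⊥

/-- The path (= complete graph) on two vertices `P_2`. -/
def P2 : SimpleGraph (Fin 2) := ⊤

/-! ### Operations on partitions -/

/-- `removeOnes lam t` is the partition `lam ∖ 1^t` obtained by deleting `t` parts
equal to `1` from `lam` (junk value if `lam` has fewer than `t` parts equal to `1`). -/
def removeOnes {N : ℕ} (lam : Nat.Partition N) (t : ℕ) : Nat.Partition (N - t) :=
  if h : Multiset.replicate t 1 ≤ lam.parts then
    { parts := lam.parts - Multiset.replicate t 1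
      parts_pos := fun hx =>
        lam.parts_pos (Multiset.mem_of_le (tsub_le_self) hx)
      parts_sum := by
        have h1 : (lam.parts - Multiset.replicate t 1) + Multiset.replicate t 1
            = lam.parts := tsub_add_cancel_of_le h
        have h2 := congrArg Multiset.sum h1
        rw [Multiset.sum_add, Multiset.sum_replicate, lam.parts_sum] at h2
        simp only [smul_eq_mul, mul_one] at h2
        omega }
  else Nat.Partition.indiscrete (N - t)

/-- The partition `(2^a, 1^b)` of `2*a + b`. -/
def twoOne (a b : ℕ) : Nat.Partition (2 * a + b) where
  parts := Multiset.replicate a 2 + Multiset.replicate b 1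
  parts_pos := by
    intro i hi
    rw [Multiset.mem_add] at hi
    rcases hi with hi | hi <;> · rw [Multiset.eq_of_mem_replicate hi]; omega
  parts_sum := by
    rw [Multiset.sum_add, Multiset.sum_replicate, Multiset.sum_replicate]
    simp only [smul_eq_mul, mul_one]
    omega

/-! ### Special rim hook `G`-tabloids -/

/-- Two cells are adjacent if they share an edge. -/
def cellAdj (c d : Cell) : Prop :=
  (c.1 = d.1 ∧ (c.2 + 1 = d.2 ∨ d.2 + 1 = c.2)) ∨
  (c.2 = d.2 ∧ (c.1 + 1 = d.1 ∨ d.1 + 1 = c.1))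

/-- A set of cells is (the diagram of) a Young diagram if it is closed under
decreasing either coordinate. -/
def IsYoungDiag (D : Set Cell) : Prop :=
  ∀ i j i' j' : ℕ, ((i, j) : Cell) ∈ D → i' ≤ i → j' ≤ j → ((i', j') : Cell) ∈ D

/-- A set of cells is connected (via edge-adjacency, within the set). -/
def CellConnected (S : Set Cell) : Prop :=
  ∀ c ∈ S, ∀ d ∈ S, Relation.ReflTransGen (fun a b => a ∈ S ∧ b ∈ S ∧ cellAdj a b) c d

/-- A border strip (= rim hook, as a set of cells): nonempty, connected, and
containing no 2×2 square of cells. -/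
def IsBorderStrip (H : Set Cell) : Prop :=
  H.Nonempty ∧ CellConnected H ∧
    ∀ i j : ℕ, ¬(((i, j) : Cell) ∈ H ∧ ((i + 1, j) : Cell) ∈ H ∧
      ((i, j + 1) : Cell) ∈ H ∧ ((i + 1, j + 1) : Cell) ∈ H)

/-- `H` is a rim hook of the Young diagram `D`: a border strip contained in `D`
whose removal leaves a Young diagram. -/
def IsRimHookOf (D H : Set Cell) : Prop :=
  H ⊆ D ∧ IsBorderStrip H ∧ IsYoungDiag (D \ H)

/-- `IsRemovalSeq L D` says that the sets of cells in the list `L` may be removed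
successively from the diagram `D`, each being a rim hook of what remains, with
nothing left at the end. -/
def IsRemovalSeq : List (Set Cell) → Set Cell → Prop
  | [], D => D = ∅
  | H :: L, D => IsRimHookOf D H ∧ IsRemovalSeq L (D \ H)

/-- A special rim hook `G`-tabloid of shape `lam`, with respect to an order `r` on
the vertices of `G`: the cells of the diagram of `lam` are filled bijectively with
the vertices of `G` (vertex `v` goes in cell `pos v`), and the diagram is tiled by
rim hooks, successively removable, each meeting the first column.  The rim hooks are
recorded by the labelling `hk`, which assigns to each vertex the topmost row in which
its rim hook meets the first column.  The vertices in each rim hook form a stable set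
of `G` and, read from the rim hook's (bottom) cell in the first column — i.e. in
increasing order of the diagonal index `column − row` — they increase with respect
to `r`. -/
structure SRHGTabloid {V : Type*} (G : SimpleGraph V) (r : V → V → Prop)
    {N : ℕ} (lam : Nat.Partition N) where
  /-- the cell occupied by each vertex -/
  pos : V → Cell
  /-- the label of the rim hook containing each vertex: the topmost row in which
  that rim hook meets the first column -/
  hk : V → ℕ
  pos_inj : Function.Injective pos
  pos_range : Set.range pos = diag lam
  hk_mem : ∀ v, ((hk v, 0) : Cell) ∈ pos '' {u | hk u = hk v}
  hk_min : ∀ v i, ((i, 0) : Cell) ∈ pos '' {u | hk u = hk v} → hk v ≤ i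
  removal : ∃ L : List ℕ, L.Nodup ∧ (∀ i, i ∈ L ↔ ∃ v, hk v = i) ∧
    IsRemovalSeq (L.map fun i => pos '' {u | hk u = i}) (diag lam)
  stable : ∀ u v, hk u = hk v → u ≠ v → ¬G.Adj u v
  increasing : ∀ u v, hk u = hk v →
    ((pos u).2 : ℤ) - ((pos u).1 : ℤ) < ((pos v).2 : ℤ) - ((pos v).1 : ℤ) → r u v

/-- The sign of a special rim hook `G`-tabloid: `(-1)` to the total number of north
steps, where a rim hook spanning `k` rows contributes `k - 1` north steps. -/
noncomputable def tabSign {V : Type*} {G : SimpleGraph V} {r : V → V → Prop}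
    {N : ℕ} {lam : Nat.Partition N} (T : SRHGTabloid G r lam) : ℤ :=
  (-1) ^ ∑ i ∈ Finset.range N,
    ({a : ℕ | ∃ v, T.hk v = i ∧ (T.pos v).1 = a}.ncard - 1)

/-- The cells of the head of a tabloid of shape `lam`: the rows of length `≥ 2`. -/
def headCells {N : ℕ} (lam : Nat.Partition N) : Set Cell :=
  {c : Cell | c ∈ diag lam ∧ 2 ≤ rowLen lam c.1}

/-- The cells of the tail of a tabloid of shape `lam`: the rows of length `1`. -/
def tailCells {N : ℕ} (lam : Nat.Partition N) : Set Cell :=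
  {c : Cell | c ∈ diag lam ∧ rowLen lam c.1 = 1}

/-- Two special rim hook `G`-tabloids have the same head: the same cells of the head
are occupied by the same vertices, and the rim hook structure restricted to the head
agrees. -/
def SameHead {V : Type*} {G : SimpleGraph V} {r : V → V → Prop} {N : ℕ}
    {lam : Nat.Partition N} (T T' : SRHGTabloid G r lam) : Prop :=
  (∀ v, T.pos v ∈ headCells lam ↔ T'.pos v ∈ headCells lam) ∧
  (∀ v, T.pos v ∈ headCells lam → T.pos v = T'.pos v) ∧
  (∀ u v, T.pos u ∈ headCells lam → T.pos v ∈ headCells lam →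
    (T.hk u = T.hk v ↔ T'.hk u = T'.hk v))


/-! ### Part A: horizontal strips and Kostka numbers by recursion -/

/-- Shift a finitely supported sequence by one. -/
noncomputable def shiftF (ρ : ℕ →₀ ℕ) : ℕ →₀ ℕ :=
  Finsupp.comapDomain Nat.succ ρ (Nat.succ_injective.injOn)

@[simp] theorem shiftF_apply (ρ : ℕ →₀ ℕ) (i : ℕ) : shiftF ρ i = ρ (i + 1) := rfl

/-- The `σ` such that `ρ / σ` is a horizontal strip. -/
noncomputable def HS (ρ : ℕ →₀ ℕ) : Finset (ℕ →₀ ℕ) := Finset.Icc (shiftF ρ) ρ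

theorem mem_HS {ρ σ : ℕ →₀ ℕ} : σ ∈ HS ρ ↔ ∀ i, ρ (i + 1) ≤ σ i ∧ σ i ≤ ρ i := by
  simp only [HS, Finset.mem_Icc, Finsupp.le_def, shiftF_apply]
  exact forall_and.symm

theorem sz_eq {ρ : ℕ →₀ ℕ} {R : ℕ} (h : ∀ i, R ≤ i → ρ i = 0) :
    ρ.degree = ∑ i ∈ Finset.range R, ρ i := by
  rw [Finsupp.degree_apply]
  apply Finset.sum_subset
  · intro i hi
    rw [Finsupp.mem_support_iff] at hi
    by_contra hc
    simp only [Finset.mem_range, not_lt] at hc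
    exact hi (h i hc)
  · intro i _ hi
    simpa using hi

theorem exists_bd (ρ : ℕ →₀ ℕ) : ∃ R, ∀ i, R ≤ i → ρ i = 0 := by
  refine ⟨ρ.support.sup id + 1, fun i hi => ?_⟩
  by_contra hc
  have : i ≤ ρ.support.sup id := Finset.le_sup (f := id) (Finsupp.mem_support_iff.2 hc)
  omega

/-- Kostka numbers, by recursion on the list of weights (largest label first). -/
noncomputable def KK : List ℕ → (ℕ →₀ ℕ) → ℕ
  | [], ρ => if ρ = 0 then 1 else 0
  | a :: L, ρ => ∑ σ ∈ (HS ρ).filter (fun σ => ρ.degree = σ.degree + a), KK L σ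

/-- lower bound -/
def loB (ρ τ : ℕ →₀ ℕ) (i : ℕ) : ℕ := max (ρ (i + 1)) (τ i)

/-- upper bound -/
def hiB (ρ τ : ℕ →₀ ℕ) : ℕ → ℕ
  | 0 => ρ 0
  | i + 1 => min (ρ (i + 1)) (τ i)

theorem two_step {ρ σ τ : ℕ →₀ ℕ} :
    (σ ∈ HS ρ ∧ τ ∈ HS σ) ↔ ∀ i, loB ρ τ i ≤ σ i ∧ σ i ≤ hiB ρ τ i := by
  simp only [mem_HS, loB]
  constructor
  · rintro ⟨h1, h2⟩ i
    refine ⟨max_le (h1 i).1 (h2 i).2, ?_⟩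
    cases i with
    | zero => exact (h1 0).2
    | succ i => exact le_min (h1 _).2 (h2 i).1
  · intro h
    refine ⟨fun i => ⟨(le_max_left _ _).trans (h i).1, ?_⟩,
      fun i => ⟨?_, (le_max_right _ _).trans (h i).1⟩⟩
    · cases i with
      | zero => exact (h 0).2
      | succ i => exact (h _).2.trans (min_le_left _ _)
    · exact (h (i+1)).2.trans (min_le_right _ _)

/-- The Bender-Knuth reflection. -/
noncomputable def reflF (ρ τ σ : ℕ →₀ ℕ) : ℕ →₀ ℕ :=
  Finsupp.onFinset ρ.support (fun i => if ρ i = 0 then 0 else loB ρ τ i + hiB ρ τ i - σ i)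
    (by
      intro i hi
      rw [Finsupp.mem_support_iff]
      intro h
      simp [h] at hi)

theorem reflF_apply {ρ σ τ : ℕ →₀ ℕ} (h : ∀ i, loB ρ τ i ≤ σ i ∧ σ i ≤ hiB ρ τ i) (i : ℕ) :
    reflF ρ τ σ i = loB ρ τ i + hiB ρ τ i - σ i := by
  simp only [reflF, Finsupp.onFinset_apply]
  split_ifs with h0
  · have h1 := h i
    have : hiB ρ τ i = 0 := by
      cases i with
      | zero => exact h0
      | succ i => simp [hiB, h0]
    omega
  · rfl

theorem reflF_bd {ρ σ τ : ℕ →₀ ℕ} (h : ∀ i, loB ρ τ i ≤ σ i ∧ σ i ≤ hiB ρ τ i) (i : ℕ) :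
    loB ρ τ i ≤ reflF ρ τ σ i ∧ reflF ρ τ σ i ≤ hiB ρ τ i := by
  rw [reflF_apply h]
  have := h i
  omega

theorem reflF_refl {ρ σ τ : ℕ →₀ ℕ} (h : ∀ i, loB ρ τ i ≤ σ i ∧ σ i ≤ hiB ρ τ i) :
    reflF ρ τ (reflF ρ τ σ) = σ := by
  ext i
  rw [reflF_apply (reflF_bd h), reflF_apply h]
  have := h i
  omega

theorem sum_lohi (ρ τ : ℕ →₀ ℕ) (R : ℕ) :
    ∑ i ∈ Finset.range R, (loB ρ τ i + hiB ρ τ i) + hiB ρ τ R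
      = ∑ i ∈ Finset.range (R + 1), ρ i + ∑ i ∈ Finset.range R, τ i := by
  induction R with
  | zero => simp [hiB]
  | succ R ih =>
    rw [Finset.sum_range_succ, Finset.sum_range_succ _ (R + 1), Finset.sum_range_succ τ]
    have h : loB ρ τ R + hiB ρ τ (R + 1) = ρ (R + 1) + τ R := by
      simp only [loB, hiB]
      exact max_add_min _ _
    omega

theorem reflF_degree {ρ σ τ : ℕ →₀ ℕ} (h : ∀ i, loB ρ τ i ≤ σ i ∧ σ i ≤ hiB ρ τ i) :
    (reflF ρ τ σ).degree + σ.degree = ρ.degree + τ.degree := by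
  obtain ⟨R, hR⟩ := exists_bd ρ
  have hhi : ∀ i, hiB ρ τ i ≤ ρ i := by
    intro i
    cases i with
    | zero => exact le_rfl
    | succ i => exact min_le_left _ _
  have hσ : ∀ i, R ≤ i → σ i = 0 := fun i hi => by
    have := hR i hi; have := h i; have := hhi i; omega
  have hσ' : ∀ i, R ≤ i → reflF ρ τ σ i = 0 := fun i hi => by
    have := hR i hi; have := reflF_bd h i; have := hhi i; omega
  have hτ : ∀ i, R ≤ i → τ i = 0 := fun i hi => by
    have := hR i hi; have := h i; have := hhi i
    have : τ i ≤ loB ρ τ i := le_max_right _ _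
    omega
  rw [sz_eq hσ, sz_eq hσ', sz_eq hτ, sz_eq (R := R + 1) (fun i hi => hR i (by omega)),
    ← sum_lohi, ← Finset.sum_add_distrib]
  have : hiB ρ τ R = 0 := by have := hhi R; have := hR R le_rfl; omega
  rw [this, add_zero]
  apply Finset.sum_congr rfl
  intro i _
  rw [reflF_apply h]
  have := h i
  omega

theorem KK_swap (a b : ℕ) (L : List ℕ) (ρ : ℕ →₀ ℕ) :
    KK (a :: b :: L) ρ = KK (b :: a :: L) ρ := by
  simp only [KK]
  rw [Finset.sum_sigma', Finset.sum_sigma']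
  have key : ∀ a b : ℕ, ∀ x ∈ ((HS ρ).filter (fun σ => ρ.degree = σ.degree + a)).sigma
      (fun σ => (HS σ).filter (fun τ => σ.degree = τ.degree + b)),
      (⟨reflF ρ x.2 x.1, x.2⟩ : (_ : ℕ →₀ ℕ) × (ℕ →₀ ℕ)) ∈
        ((HS ρ).filter (fun σ => ρ.degree = σ.degree + b)).sigma
      (fun σ => (HS σ).filter (fun τ => σ.degree = τ.degree + a)) := by
    rintro a b ⟨σ, τ⟩ hx
    simp only [Finset.mem_sigma, Finset.mem_filter] at hx ⊢
    have h := two_step.1 ⟨hx.1.1, hx.2.1⟩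
    have h2 := two_step.2 (reflF_bd h)
    have h3 := reflF_degree h
    refine ⟨⟨h2.1, ?_⟩, h2.2, ?_⟩ <;> omega
  have key2 : ∀ a b : ℕ, ∀ x ∈ ((HS ρ).filter (fun σ => ρ.degree = σ.degree + a)).sigma
      (fun σ => (HS σ).filter (fun τ => σ.degree = τ.degree + b)),
      (⟨reflF ρ x.2 (reflF ρ x.2 x.1), x.2⟩ : (_ : ℕ →₀ ℕ) × (ℕ →₀ ℕ)) = x := by
    rintro a b ⟨σ, τ⟩ hx
    simp only [Finset.mem_sigma, Finset.mem_filter] at hx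
    have h := two_step.1 ⟨hx.1.1, hx.2.1⟩
    simp only [reflF_refl h]
  exact Finset.sum_bij' (fun x _ => ⟨reflF ρ x.2 x.1, x.2⟩) (fun x _ => ⟨reflF ρ x.2 x.1, x.2⟩)
    (key a b) (key b a) (key2 a b) (key2 b a) (fun x _ => rfl)

theorem KK_perm {L L' : List ℕ} (h : L.Perm L') : ∀ ρ, KK L ρ = KK L' ρ := by
  induction h with
  | nil => intro ρ; rfl
  | cons a _ ih => intro ρ; simp only [KK, ih]
  | swap a b L => intro ρ; exact KK_swap _ _ _ _
  | trans _ _ h1 h2 => intro ρ; rw [h1, h2]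

theorem HS_le {ρ σ : ℕ →₀ ℕ} (h : σ ∈ HS ρ) : σ ≤ ρ := fun i => ((mem_HS.1 h) i).2

theorem eq_of_HS_degree {ρ σ : ℕ →₀ ℕ} (h : σ ∈ HS ρ) (hd : ρ.degree = σ.degree) : σ = ρ := by
  obtain ⟨τ, rfl⟩ := exists_add_of_le (HS_le h)
  rw [map_add] at hd
  have : τ.degree = 0 := by omega
  rw [Finsupp.degree_eq_zero_iff] at this
  simp [this]

theorem HS_antitone {ρ σ : ℕ →₀ ℕ} (h : σ ∈ HS ρ) : Antitone σ := by
  apply antitone_nat_of_succ_le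
  intro i
  exact (((mem_HS.1 h) (i + 1)).2).trans ((mem_HS.1 h) i).1

theorem self_mem_HS {ρ : ℕ →₀ ℕ} (h : Antitone ρ) : ρ ∈ HS ρ :=
  mem_HS.2 fun i => ⟨h (Nat.le_succ i), le_rfl⟩

theorem KK_zero_cons {ρ : ℕ →₀ ℕ} (h : Antitone ρ) (L : List ℕ) : KK (0 :: L) ρ = KK L ρ := by
  simp only [KK, add_zero]
  rw [Finset.sum_eq_single_of_mem ρ]
  · simp [self_mem_HS h]
  · intro σ hσ hne
    simp only [Finset.mem_filter] at hσ
    exact absurd (eq_of_HS_degree hσ.1 hσ.2) hne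

theorem KK_filter (L : List ℕ) : ∀ {ρ : ℕ →₀ ℕ}, Antitone ρ →
    KK (L.filter (fun a => a ≠ 0)) ρ = KK L ρ := by
  induction L with
  | nil => intro ρ _; rfl
  | cons a L ih =>
    intro ρ h
    by_cases ha : a = 0
    · subst ha
      rw [KK_zero_cons h, List.filter_cons_of_neg (by simp), ih h]
    · rw [List.filter_cons_of_pos (by simpa using ha)]
      simp only [KK]
      apply Finset.sum_congr rfl
      intro σ hσ
      exact ih (HS_antitone (Finset.mem_filter.1 hσ).1)

theorem KK_ne_zero_cons {a : ℕ} {L : List ℕ} {ρ : ℕ →₀ ℕ} (h : KK (a :: L) ρ ≠ 0) :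
    ∃ σ ∈ HS ρ, ρ.degree = σ.degree + a ∧ KK L σ ≠ 0 := by
  simp only [KK] at h
  obtain ⟨σ, hσ, hk⟩ := Finset.exists_ne_zero_of_sum_ne_zero h
  rw [Finset.mem_filter] at hσ
  exact ⟨σ, hσ.1, hσ.2, hk⟩

theorem KK_supp {L : List ℕ} : ∀ {ρ : ℕ →₀ ℕ}, KK L ρ ≠ 0 →
    (∀ i, L.length ≤ i → ρ i = 0) ∧ ρ.degree = L.sum := by
  induction L with
  | nil =>
    intro ρ h
    simp only [KK, ne_eq, ite_eq_right_iff, one_ne_zero, imp_false, not_not] at h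
    subst h
    simp
  | cons a L ih =>
    intro ρ h
    obtain ⟨σ, h1, h2, h3⟩ := KK_ne_zero_cons h
    obtain ⟨h4, h5⟩ := ih h3
    refine ⟨fun i hi => ?_, ?_⟩
    · simp only [List.length_cons] at hi
      have := (mem_HS.1 h1 (i - 1)).1
      rw [h4 (i - 1) (by omega), show i - 1 + 1 = i by omega] at this
      omega
    · rw [List.sum_cons]; omega

theorem KK_dom {L : List ℕ} : ∀ {ρ : ℕ →₀ ℕ}, KK L ρ ≠ 0 → ∀ k,
    (L.reverse.take k).sum ≤ ∑ i ∈ Finset.range k, ρ i := by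
  induction L with
  | nil => intro ρ _ k; simp
  | cons a L ih =>
    intro ρ h k
    obtain ⟨h4, h5⟩ := KK_supp h
    by_cases hk : k ≤ L.length
    · obtain ⟨σ, h1, h2, h3⟩ := KK_ne_zero_cons h
      rw [List.reverse_cons, List.take_append_of_le_length (by simpa using hk)]
      exact (ih h3 k).trans (Finset.sum_le_sum fun i _ => HS_le h1 i)
    · rw [List.take_of_length_le (by simp; omega), List.sum_reverse, ← h5,
        sz_eq (R := k) (fun i hi => h4 i (by simp; omega))]

/-- The sequence of a list. -/
noncomputable def listF (l : List ℕ) : ℕ →₀ ℕ :=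
  Finsupp.onFinset (Finset.range l.length) (fun i => l.getD i 0) (by
    intro i hi
    rw [Finset.mem_range]
    by_contra hc
    exact hi (List.getD_eq_default _ _ (by omega)))

@[simp] theorem listF_apply (l : List ℕ) (i : ℕ) : listF l i = l.getD i 0 := rfl

theorem listF_degree (l : List ℕ) : (listF l).degree = l.sum := by
  rw [sz_eq (R := l.length) (fun i hi => List.getD_eq_default _ _ hi)]
  induction l with
  | nil => simp
  | cons a l ih =>
    rw [List.length_cons, Finset.sum_range_succ']
    simp only [listF_apply, List.getD_cons_succ, List.getD_cons_zero, List.sum_cons] at ih ⊢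
    rw [ih]; omega

theorem sum_take_eq (l : List ℕ) : ∀ k, (l.take k).sum = ∑ i ∈ Finset.range k, listF l i := by
  induction l with
  | nil => intro k; simp
  | cons a l ih =>
    intro k
    cases k with
    | zero => simp
    | succ k =>
      rw [List.take_succ_cons, List.sum_cons, ih, Finset.sum_range_succ']
      simp; omega

theorem KK_pos {L : List ℕ} (h : L.Pairwise (· ≤ ·)) : KK L (listF L.reverse) ≠ 0 := by
  induction L with
  | nil =>
    have : listF ([] : List ℕ) = 0 := by ext i; simp
    simp [KK, this]
  | cons a L ih =>
    rw [List.pairwise_cons] at h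
    have ih := ih h.2
    simp only [KK]
    rw [← Nat.pos_iff_ne_zero] at ih ⊢
    refine lt_of_lt_of_le ih (Finset.single_le_sum (f := fun σ => KK L σ) (fun _ _ => Nat.zero_le _) ?_)
    rw [Finset.mem_filter, listF_degree, listF_degree]
    refine ⟨?_, by simp⟩
    rw [mem_HS]
    have hs : (a :: L).reverse.Pairwise (· ≥ ·) := by
      rw [List.pairwise_reverse]
      exact List.pairwise_cons.2 h
    intro i
    simp only [listF_apply]
    by_cases hi : i < L.length
    · have e : L.reverse.getD i 0 = (a :: L).reverse.getD i 0 := by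
        rw [List.reverse_cons, List.getD_append _ _ _ _ (by simpa using hi)]
      rw [e]
      refine ⟨?_, le_rfl⟩
      have l1 : i + 1 < (a :: L).reverse.length := by simp; omega
      have l2 : i < (a :: L).reverse.length := by simp; omega
      rw [List.getD_eq_getElem _ _ l1, List.getD_eq_getElem _ _ l2]
      exact List.pairwise_iff_getElem.1 hs i (i + 1) _ _ (Nat.lt_succ_self i)
    · rw [List.getD_eq_default L.reverse _ (by simp; omega),
        List.getD_eq_default (a :: L).reverse (n := i + 1) _ (by simp; omega)]
      omega


/-! ### Part A2: columns, binomial sequences -/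

/-- The column of height `j`. -/
noncomputable def colF (j : ℕ) : ℕ →₀ ℕ :=
  Finsupp.onFinset (Finset.range j) (fun i => if i < j then 1 else 0) (by
    intro i hi
    rw [Finset.mem_range]
    by_contra hc
    simp [hc] at hi)

@[simp] theorem colF_apply (j i : ℕ) : colF j i = if i < j then 1 else 0 := rfl

theorem colF_degree (j : ℕ) : (colF j).degree = j := by
  rw [sz_eq (R := j) (fun i hi => by simp; omega)]
  rw [Finset.sum_congr rfl (g := fun _ => 1)]
  · simp
  · intro i hi
    simpa using hi

theorem KK_col (L : List ℕ) : ∀ ρ : ℕ →₀ ℕ,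
    KK L ρ = KK (L.map Nat.succ) (ρ + colF L.length) := by
  induction L with
  | nil =>
    intro ρ
    have : colF ([] : List ℕ).length = 0 := by ext i; simp
    rw [this, add_zero]; rfl
  | cons a L ih =>
    intro ρ
    simp only [KK, List.map_cons, List.length_cons]
    apply Finset.sum_of_injOn (fun σ => σ + colF L.length)
    · intro x _ y _ h
      exact add_right_cancel h
    · intro σ hσ
      simp only [Finset.coe_filter, Set.mem_ofPred_eq, map_add, colF_degree, mem_HS] at hσ ⊢
      refine ⟨fun i => ?_, by omega⟩
      have := hσ.1 i
      simp only [Finsupp.add_apply, colF_apply]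
      split_ifs <;> omega
    · intro σ' hσ' hn
      by_contra hk
      apply hn
      have hs := (KK_supp hk).1
      simp only [List.length_map] at hs
      simp only [Finset.mem_filter, mem_HS, map_add, colF_degree, Finsupp.add_apply,
        colF_apply] at hσ'
      have hle : colF L.length ≤ σ' := by
        intro i
        have := hσ'.1 i
        simp only [colF_apply]
        split_ifs at this ⊢ <;> omega
      obtain ⟨σ, rfl⟩ := exists_add_of_le hle
      rw [add_comm (colF L.length)] at *
      refine ⟨σ, ?_, rfl⟩
      simp only [map_add, colF_degree, Finsupp.add_apply, colF_apply] at hσ' hs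
      simp only [Finset.coe_filter, Set.mem_ofPred_eq, mem_HS]
      refine ⟨fun i => ?_, by omega⟩
      have h1 := hσ'.1 i
      have h2 := hs i
      split_ifs at h1 h2 <;> omega
    · intro σ _
      exact ih σ

/-- `u` is a polynomial sequence of degree at most `d` whose value at `-1` is `e`. -/
def PolyExt (d : ℕ) (u : ℕ → ℚ) (e : ℚ) : Prop :=
  ∃ a : ℕ → ℚ, (∀ m, u m = ∑ l ∈ Finset.range (d + 1), a l * (m.choose l : ℚ)) ∧
    e = ∑ l ∈ Finset.range (d + 1), a l * (-1) ^ l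

theorem PolyExt.congr {d : ℕ} {u v : ℕ → ℚ} {e f : ℚ} (h : PolyExt d u e) (hu : ∀ m, v m = u m)
    (he : f = e) : PolyExt d v f := by
  obtain ⟨a, h1, h2⟩ := h
  exact ⟨a, fun m => by rw [hu, h1], by rw [he, h2]⟩

theorem PolyExt.mono {d d' : ℕ} {u : ℕ → ℚ} {e : ℚ} (h : PolyExt d u e) (hd : d ≤ d') : PolyExt d' u e := by
  obtain ⟨a, h1, h2⟩ := h
  have key : ∀ f : ℕ → ℚ, ∑ l ∈ Finset.range (d + 1), a l * f l =
      ∑ l ∈ Finset.range (d' + 1), (if l < d + 1 then a l else 0) * f l := by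
    intro f
    rw [← Finset.sum_subset (Finset.range_subset_range.2 (by omega : d + 1 ≤ d' + 1))]
    · apply Finset.sum_congr rfl
      intro l hl
      rw [if_pos (Finset.mem_range.1 hl)]
    · intro l _ hl
      rw [if_neg (by simpa using hl), zero_mul]
  exact ⟨fun l => if l < d + 1 then a l else 0, fun m => by rw [h1, key], by rw [h2, key]⟩

theorem PolyExt.zero (d : ℕ) : PolyExt d (fun _ => 0) 0 := ⟨fun _ => 0, by simp, by simp⟩

theorem PolyExt.add {d : ℕ} {u v : ℕ → ℚ} {e f : ℚ} (h : PolyExt d u e) (h' : PolyExt d v f) :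
    PolyExt d (fun m => u m + v m) (e + f) := by
  obtain ⟨a, h1, h2⟩ := h
  obtain ⟨b, h3, h4⟩ := h'
  refine ⟨fun l => a l + b l, fun m => ?_, ?_⟩
  · simp only [h1, h3, add_mul, Finset.sum_add_distrib]
  · simp only [h2, h4, add_mul, Finset.sum_add_distrib]

theorem PolyExt.smul {d : ℕ} {u : ℕ → ℚ} {e : ℚ} (h : PolyExt d u e) (c : ℚ) :
    PolyExt d (fun m => c * u m) (c * e) := by
  obtain ⟨a, h1, h2⟩ := h
  refine ⟨fun l => c * a l, fun m => ?_, ?_⟩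
  · simp only [h1, mul_assoc, Finset.mul_sum]
  · simp only [h2, mul_assoc, Finset.mul_sum]

theorem PolyExt.sum {ι : Type*} {d : ℕ} (s : Finset ι) {u : ι → ℕ → ℚ} {e : ι → ℚ}
    (h : ∀ i ∈ s, PolyExt d (u i) (e i)) : PolyExt d (fun m => ∑ i ∈ s, u i m) (∑ i ∈ s, e i) := by
  induction s using Finset.induction_on with
  | empty => simpa using PolyExt.zero d
  | insert i s hi ih =>
    refine ((h i (by simp)).add (ih fun j hj => h j (by simp [hj]))).congr ?_ ?_
    · intro m; rw [Finset.sum_insert hi]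
    · rw [Finset.sum_insert hi]

theorem PolyExt.antidiff {d : ℕ} {u v : ℕ → ℚ} {f : ℚ} (h : PolyExt d v f)
    (hu : ∀ m, u (m + 1) = u m + v m) : PolyExt (d + 1) u (u 0 - f) := by
  obtain ⟨b, h1, h2⟩ := h
  refine ⟨fun l => match l with | 0 => u 0 | l + 1 => b l, fun m => ?_, ?_⟩
  · induction m with
    | zero =>
      rw [Finset.sum_range_succ']
      simp
    | succ m ih =>
      rw [hu, ih, h1, Finset.sum_range_succ', Finset.sum_range_succ' _ (d + 1)]
      simp only [Nat.choose_succ_succ, Nat.choose_zero_right, Nat.cast_add, mul_add,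
        Finset.sum_add_distrib]
      ring
  · rw [Finset.sum_range_succ', h2]
    simp only [pow_succ, pow_zero, mul_one, mul_neg, Finset.sum_neg_distrib]
    ring

theorem PolyExt.mulm {d : ℕ} {u : ℕ → ℚ} {e : ℚ} (h : PolyExt d u e) :
    PolyExt (d + 1) (fun m => m * u m) (-e) := by
  obtain ⟨a, h1, h2⟩ := h
  have e1 : PolyExt (d + 1) (fun m => ∑ l ∈ Finset.range (d + 1), a l * (m * m.choose l : ℚ))
      (∑ l ∈ Finset.range (d + 1), a l * (-(-1) ^ l)) := by
    apply PolyExt.sum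
    intro l hl
    apply PolyExt.smul
    refine ⟨fun j => if j = l then (l : ℚ) else if j = l + 1 then (l + 1 : ℚ) else 0, ?_, ?_⟩
    · intro m
      have hl' : l < d + 1 := Finset.mem_range.1 hl
      rw [Finset.sum_eq_add_of_mem l (l + 1) (by simp; omega) (by simp; omega) (by omega)]
      · simp only [if_true]
        rw [if_neg (by omega)]
        have h3 := Nat.choose_succ_right_eq m l
        by_cases hml : l ≤ m
        · zify [hml] at h3
          have h3' : ((m.choose (l + 1) : ℚ)) * (l + 1) = m.choose l * (m - l) := by exact_mod_cast h3
          linear_combination -h3'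
        · rw [Nat.choose_eq_zero_of_lt (by omega : m < l), Nat.choose_eq_zero_of_lt (by omega : m < l + 1)]
          simp
      · intro c _ hc
        beta_reduce
        rw [if_neg hc.1, if_neg hc.2, zero_mul]
    · have hl' : l < d + 1 := Finset.mem_range.1 hl
      rw [Finset.sum_eq_add_of_mem l (l + 1) (by simp; omega) (by simp; omega) (by omega)]
      · simp only [if_true]
        rw [if_neg (by omega)]
        ring
      · intro c _ hc
        beta_reduce
        rw [if_neg hc.1, if_neg hc.2, zero_mul]
  refine e1.congr ?_ ?_
  · intro m
    rw [h1, Finset.mul_sum]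
    apply Finset.sum_congr rfl
    intro l _
    ring
  · rw [h2]
    simp

theorem PolyExt.unique {d : ℕ} {u : ℕ → ℚ} {e : ℚ} (h : PolyExt d u e) (hu : ∀ m ≤ d, u m = 0) :
    e = 0 := by
  obtain ⟨a, h1, h2⟩ := h
  have : ∀ l, l ≤ d → a l = 0 := by
    intro l
    induction l using Nat.strong_induction_on with
    | _ l ih =>
      intro hl
      have := hu l hl
      rw [h1, Finset.sum_eq_single l] at this
      · simpa using this
      · intro j hj hne
        rcases lt_or_gt_of_ne hne with hlt | hgt
        · rw [ih j hlt (by omega), zero_mul]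
        · rw [Nat.choose_eq_zero_of_lt hgt]; simp
      · intro hn
        simp at hn; omega
  rw [h2]
  apply Finset.sum_eq_zero
  intro l hl
  rw [this l (by simpa [Nat.lt_succ_iff] using hl), zero_mul]

theorem PolyExt.choose (k : ℕ) : PolyExt k (fun m => (m.choose k : ℚ)) ((-1) ^ k) := by
  refine ⟨fun j => if j = k then 1 else 0, fun m => ?_, ?_⟩ <;>
  simp

theorem PolyExt.choose_pow (k j : ℕ) :
    PolyExt (k + j) (fun m => (m : ℚ) ^ j * (m.choose k : ℚ)) ((-1) ^ j * (-1) ^ k) := by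
  induction j with
  | zero => simpa using PolyExt.choose k
  | succ j ih =>
    refine ih.mulm.congr ?_ ?_
    · intro m; ring
    · ring

/-- The polynomial sequence for the net. -/
theorem PolyExt.net (n : ℕ) : ∃ q : ℕ → ℚ, PolyExt n q (if Even n then 1 else 0) ∧
    ∀ m ≤ n, q m = ((m : ℚ) - 1) ^ m * (m : ℚ) ^ (n - m) := by
  refine ⟨fun m => ∑ k ∈ Finset.range (n + 1),
    (-1) ^ k * ((m : ℚ) ^ (n - k) * (m.choose k : ℚ)), ?_, ?_⟩
  · have h : PolyExt n (fun m => ∑ k ∈ Finset.range (n + 1),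
      (-1) ^ k * ((m : ℚ) ^ (n - k) * (m.choose k : ℚ)))
      (∑ k ∈ Finset.range (n + 1), (-1) ^ k * ((-1) ^ (n - k) * (-1) ^ k)) := by
      apply PolyExt.sum
      intro k hk
      apply PolyExt.smul
      have := PolyExt.choose_pow k (n - k)
      have hk' : k < n + 1 := Finset.mem_range.1 hk
      rwa [show k + (n - k) = n by omega] at this
    refine h.congr (fun _ => rfl) ?_
    have h2 : ∀ k ∈ Finset.range (n + 1),
        ((-1 : ℚ) ^ k * ((-1) ^ (n - k) * (-1) ^ k)) = (-1) ^ n * (-1) ^ k := by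
      intro k hk
      have hk' : k < n + 1 := Finset.mem_range.1 hk
      rw [← mul_assoc, ← pow_add, show k + (n - k) = n by omega]
    rw [Finset.sum_congr rfl h2, ← Finset.mul_sum, neg_one_geom_sum]
    rcases Nat.even_or_odd n with he | ho
    · rw [if_pos he, if_neg (by simpa [Nat.even_add_one] using he), he.neg_one_pow]; simp
    · have : ¬ Even n := by simpa using ho
      rw [if_neg this, if_pos (by rw [Nat.even_add_one]; exact this)]; simp
  · intro m hm
    have h3 : ((m : ℚ) - 1) ^ m = ∑ k ∈ Finset.range (m + 1),
        (-1) ^ k * (m : ℚ) ^ (m - k) * (m.choose k : ℚ) := by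
      rw [sub_eq_add_neg, add_comm, add_pow]
    rw [h3, Finset.sum_mul]
    symm
    beta_reduce
    rw [← Finset.sum_subset (Finset.range_subset_range.2 (by omega : m + 1 ≤ n + 1))]
    · apply Finset.sum_congr rfl
      intro k hk
      have hk' : k < m + 1 := Finset.mem_range.1 hk
      rw [show n - k = (m - k) + (n - m) by omega, pow_add]
      ring
    · intro k _ hk
      rw [Nat.choose_eq_zero_of_lt (by simpa using hk)]
      simp

/-- Number of semistandard tableaux with entries at most `m`. -/
noncomputable def SSn : ℕ → (ℕ →₀ ℕ) → ℚ
  | 0, ρ => if ρ = 0 then 1 else 0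
  | m + 1, ρ => ∑ σ ∈ HS ρ, SSn m σ

/-- value at `-1` -/
noncomputable def EE (ρ : ℕ →₀ ℕ) : ℚ := if ρ = colF ρ.degree then (-1) ^ ρ.degree else 0

theorem EE_col (j : ℕ) : EE (colF j) = (-1) ^ j := by
  simp [EE, colF_degree]

theorem colF_inj {i j : ℕ} (h : colF i = colF j) : i = j := by
  rw [← colF_degree i, h, colF_degree]

theorem EE_sum {ρ : ℕ →₀ ℕ} (h : Antitone ρ) (h0 : ρ ≠ 0) : ∑ σ ∈ HS ρ, EE σ = 0 := by
  obtain ⟨R, hR⟩ := exists_bd ρ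
  have hex : ∃ r, ρ r = 0 := ⟨R, hR R le_rfl⟩
  have hr := Nat.find_spec hex
  have hm : ∀ i, ρ i = 0 ↔ Nat.find hex ≤ i := by
    intro i
    refine ⟨fun hi => Nat.find_min' hex hi, fun hi => ?_⟩
    have := h hi
    omega
  generalize Nat.find hex = r at hr hm
  have hr0 : r ≠ 0 := by
    rintro rfl
    apply h0
    ext i
    exact (hm i).2 (Nat.zero_le i)
  by_cases h1 : ρ 1 ≤ 1
  · have hle : ∀ i, ρ (i + 1) ≤ 1 := fun i => (h (by omega : 1 ≤ i + 1)).trans h1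
    have m1 : colF r ∈ HS ρ := mem_HS.2 fun i => by
      have := hm i; have := hm (i + 1); have := hle i
      simp only [colF_apply]
      split_ifs <;> omega
    have m2 : colF (r - 1) ∈ HS ρ := mem_HS.2 fun i => by
      have := hm i; have := hm (i + 1); have := hle i
      simp only [colF_apply]
      split_ifs <;> omega
    rw [Finset.sum_eq_add_of_mem _ _ m1 m2 (fun hc => by have := colF_inj hc; omega), EE_col, EE_col]
    · obtain ⟨s, rfl⟩ := Nat.exists_eq_succ_of_ne_zero hr0
      simp [pow_succ]
    · intro σ hσ hne
      rw [EE, if_neg]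
      intro hc
      generalize σ.degree = j at hc
      subst hc
      have hj := mem_HS.1 hσ
      simp only [colF_apply] at hj
      have a1 : j ≠ r := fun hc => hne.1 (by rw [hc])
      have a2 : j ≠ r - 1 := fun hc => hne.2 (by rw [hc])
      rcases lt_or_gt_of_ne a1 with hlt | hgt
      · have b1 := (hj (r - 2)).1
        have b2 := hm (r - 2 + 1)
        rw [if_neg (by omega)] at b1
        omega
      · have b1 := (hj r).2
        rw [if_pos (by omega)] at b1
        omega
  · apply Finset.sum_eq_zero
    intro σ hσ
    rw [EE, if_neg]
    intro hc
    have : ρ 1 ≤ σ 0 := (mem_HS.1 hσ 0).1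
    rw [hc] at this
    simp only [colF_apply] at this
    split_ifs at this <;> omega

theorem SSn_zero (m : ℕ) : SSn m 0 = 1 := by
  induction m with
  | zero => simp [SSn]
  | succ m ih =>
    have : HS 0 = {0} := by
      ext σ
      rw [mem_HS, Finset.mem_singleton]
      constructor
      · intro hh
        ext i
        have := (hh i).2
        simpa using this
      · rintro rfl i
        simp
    simp [SSn, this, ih]

theorem SSn_ext : ∀ (d : ℕ) (ρ : ℕ →₀ ℕ), Antitone ρ → ρ.degree = d →
    PolyExt d (fun m => SSn m ρ) (EE ρ) := by
  intro d
  induction d using Nat.strong_induction_on with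
  | _ d ih =>
    intro ρ h hd
    by_cases h0 : ρ = 0
    · subst h0
      have hd0 : d = 0 := by simpa using hd.symm
      subst hd0
      refine (PolyExt.choose 0).congr (fun m => ?_) ?_
      · simp [SSn_zero]
      · have : (0 : ℕ →₀ ℕ) = colF 0 := by ext i; simp
        rw [this, EE_col]
    · have hd0 : d ≠ 0 := by
        intro hc
        rw [hc, Finsupp.degree_eq_zero_iff] at hd
        exact h0 hd
      obtain ⟨e, rfl⟩ := Nat.exists_eq_succ_of_ne_zero hd0
      have h1 : PolyExt e (fun m => ∑ σ ∈ (HS ρ).erase ρ, SSn m σ) (∑ σ ∈ (HS ρ).erase ρ, EE σ) := by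
        apply PolyExt.sum
        intro σ hσ
        rw [Finset.mem_erase] at hσ
        have hlt : σ.degree ≤ e := by
          have hle := Finsupp.degree_mono (HS_le hσ.2)
          have hne : ρ.degree ≠ σ.degree := fun hc => hσ.1 (eq_of_HS_degree hσ.2 hc)
          omega
        exact (ih σ.degree (by omega) σ (HS_antitone hσ.2) rfl).mono hlt
      have h2 := h1.antidiff (u := fun m => SSn m ρ) (fun m => by
        simp only [SSn]
        rw [Finset.add_sum_erase _ (fun σ => SSn m σ) (self_mem_HS h)])
      refine h2.congr (fun _ => rfl) ?_
      have h3 := EE_sum h h0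
      rw [← Finset.add_sum_erase _ _ (self_mem_HS h)] at h3
      simp only [SSn, if_neg h0]
      linear_combination h3

/-- Sum over all lists of length `m` with entries below `B`. -/
noncomputable def TT (B m : ℕ) (φ : List ℕ → ℚ) : ℚ :=
  ∑ a : Fin m → Fin B, φ (List.ofFn fun i => (a i : ℕ))

theorem TT_succ (B m : ℕ) (φ : List ℕ → ℚ) :
    TT B (m + 1) φ = ∑ b : Fin B, TT B m (fun L => φ ((b : ℕ) :: L)) := by
  simp only [TT]
  rw [← (Fin.consEquiv (fun _ => Fin B)).sum_comp, Fintype.sum_prod_type]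
  apply Finset.sum_congr rfl
  intro b _
  apply Finset.sum_congr rfl
  intro a _
  simp [Fin.consEquiv, List.ofFn_succ]

theorem TT_KK (B m : ℕ) : ∀ ρ : ℕ →₀ ℕ, ρ.degree < B →
    TT B m (fun L => (KK L ρ : ℚ)) = SSn m ρ := by
  induction m with
  | zero => intro ρ _; simp [TT, KK, SSn]
  | succ m ih =>
    intro ρ hρ
    rw [TT_succ]
    simp only [KK, SSn, Finset.sum_filter]
    have h1 : ∀ b : Fin B, TT B m (fun L => ((∑ σ ∈ HS ρ, if ρ.degree = σ.degree + (b : ℕ) then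
        KK L σ else 0 : ℕ) : ℚ)) =
        ∑ σ ∈ HS ρ, if ρ.degree = σ.degree + (b : ℕ) then SSn m σ else 0 := by
      intro b
      have : ∀ σ ∈ HS ρ, (if ρ.degree = σ.degree + (b : ℕ) then SSn m σ else 0) =
        ∑ a : Fin m → Fin B, ((if ρ.degree = σ.degree + (b : ℕ) then
          KK (List.ofFn fun i => (a i : ℕ)) σ else 0 : ℕ) : ℚ) := by
        intro σ hσ
        split_ifs with hc
        · rw [← ih σ ((Finsupp.degree_mono (HS_le hσ)).trans_lt hρ)]
          rfl
        · simp
      rw [Finset.sum_congr rfl this, Finset.sum_comm]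
      simp only [TT, Nat.cast_sum]
    rw [Finset.sum_congr rfl (fun b _ => h1 b), Finset.sum_comm]
    apply Finset.sum_congr rfl
    intro σ hσ
    have hle := Finsupp.degree_mono (HS_le hσ)
    rw [Finset.sum_eq_single ⟨ρ.degree - σ.degree, by omega⟩]
    · rw [if_pos]
      simp only; omega
    · intro b _ hb
      rw [if_neg]
      intro hc
      apply hb
      ext
      simp only; omega
    · simp


/-! ### Part B: counting tableaux -/

/-- list of weights, largest label first -/
def wl (μ : ℕ → ℕ) : ℕ → List ℕ
  | 0 => []
  | M + 1 => μ (M + 1) :: wl μ M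

/-- The cells of a shape. -/
noncomputable def cellsF (ρ : ℕ →₀ ℕ) : Finset Cell :=
  ρ.support.biUnion fun i => (Finset.range (ρ i)).image (Prod.mk i)

theorem mem_cellsF {ρ : ℕ →₀ ℕ} {c : Cell} : c ∈ cellsF ρ ↔ c.2 < ρ c.1 := by
  obtain ⟨i, j⟩ := c
  simp only [cellsF, Finset.mem_biUnion, Finset.mem_image, Finset.mem_range, Prod.mk.injEq,
    Finsupp.mem_support_iff]
  constructor
  · rintro ⟨a, _, b, hb, rfl, rfl⟩
    exact hb
  · intro h
    exact ⟨i, by change j < ρ i at h; omega, j, h, rfl, rfl⟩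

theorem card_cellsF (ρ : ℕ →₀ ℕ) : (cellsF ρ).card = ρ.degree := by
  rw [cellsF, Finset.card_biUnion, Finsupp.degree_apply]
  · apply Finset.sum_congr rfl
    intro i _
    rw [Finset.card_image_of_injective _ (Prod.mk_right_injective i), Finset.card_range]
  · intro i _ j _ hij
    rw [Function.onFun, Finset.disjoint_left]
    intro c hc hc'
    simp only [Finset.mem_image] at hc hc'
    obtain ⟨a, _, rfl⟩ := hc
    obtain ⟨b, _, h⟩ := hc'
    exact hij (Prod.mk.inj h).1.symm

theorem card_diff {ρ σ : ℕ →₀ ℕ} (h : σ ≤ ρ) :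
    Nat.card {c : Cell // c.2 < ρ c.1 ∧ ¬ c.2 < σ c.1} + σ.degree = ρ.degree := by
  have h1 : cellsF σ ⊆ cellsF ρ := by
    intro c hc
    rw [mem_cellsF] at *
    exact hc.trans_le (h _)
  rw [Nat.subtype_card (cellsF ρ \ cellsF σ) (fun c => by simp [mem_cellsF]),
    Finset.card_sdiff_of_subset h1, card_cellsF, card_cellsF]
  have := Finsupp.degree_mono h
  omega

/-- Semistandard tableaux with entries at most `M`. -/
def SST (ρ : ℕ →₀ ℕ) (M : ℕ) (μ : ℕ → ℕ) (t : Cell → ℕ) : Prop :=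
  (∀ i j, ρ i ≤ j → t (i, j) = 0) ∧ (∀ i j, j < ρ i → 0 < t (i, j) ∧ t (i, j) ≤ M) ∧
  (∀ i j, j + 1 < ρ i → t (i, j) ≤ t (i, j + 1)) ∧
  (∀ i j, j < ρ (i + 1) → t (i, j) < t (i + 1, j)) ∧
  ∀ k, 1 ≤ k → k ≤ M → Nat.card {c : Cell // c.2 < ρ c.1 ∧ t c = k} = μ k

/-- Extend a tableau by cells labelled `M + 1`. -/
noncomputable def extT (ρ σ : ℕ →₀ ℕ) (M : ℕ) (t : Cell → ℕ) (c : Cell) : ℕ :=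
  if c.2 < σ c.1 then t c else if c.2 < ρ c.1 then M + 1 else 0

theorem extT_le {ρ σ : ℕ →₀ ℕ} {M : ℕ} {μ : ℕ → ℕ} {t : Cell → ℕ}
    (h : SST σ M μ t) (i j : ℕ) (hr : j < ρ i) : extT ρ σ M t (i, j) ≤ M ↔ j < σ i := by
  simp only [extT]
  split_ifs with h1
  · simp [h1, (h.2.1 i j h1).2]
  · simp [h1]

theorem extT_SST {ρ σ : ℕ →₀ ℕ} {M : ℕ} {μ : ℕ → ℕ} {t : Cell → ℕ} (hσ : σ ∈ HS ρ)
    (hd : ρ.degree = σ.degree + μ (M + 1)) (h : SST σ M μ t) :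
    SST ρ (M + 1) μ (extT ρ σ M t) := by
  obtain ⟨h1, h2, h3, h4, h5⟩ := h
  have hH := mem_HS.1 hσ
  refine ⟨?_, ?_, ?_, ?_, ?_⟩
  · intro i j hij
    have := hH i
    simp only [extT]
    rw [if_neg (by omega), if_neg (by omega)]
  · intro i j hij
    simp only [extT]
    split_ifs with h
    · have := h2 i j h; omega
    · omega
  · intro i j hij
    simp only [extT]
    have a := h2 i j
    have b := h3 i j
    split_ifs <;> omega
  · intro i j hij
    simp only [extT]
    have a := h2 i j
    have b := h4 i j
    have c := hH i
    split_ifs <;> omega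
  · intro k hk1 hk
    rcases Nat.lt_or_ge M k with hlt | hge
    · obtain rfl : k = M + 1 := by omega
      have hc := card_diff (HS_le hσ)
      have : Nat.card {c : Cell // c.2 < ρ c.1 ∧ extT ρ σ M t c = M + 1} =
          Nat.card {c : Cell // c.2 < ρ c.1 ∧ ¬ c.2 < σ c.1} := by
        apply Nat.card_congr
        apply Equiv.subtypeEquivRight
        rintro ⟨i, j⟩
        simp only [extT]
        have a := h2 i j
        constructor
        · rintro ⟨h6, h7⟩
          refine ⟨h6, fun h8 => ?_⟩
          rw [if_pos h8] at h7
          omega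
        · rintro ⟨h6, h7⟩
          rw [if_neg h7, if_pos h6]
          exact ⟨h6, rfl⟩
      omega
    · rw [← h5 k hk1 hge]
      apply Nat.card_congr
      apply Equiv.subtypeEquivRight
      rintro ⟨i, j⟩
      simp only [extT]
      have a := hH i
      constructor
      · rintro ⟨h6, h7⟩
        split_ifs at h7 with h8
        · exact ⟨h8, h7⟩
        · omega
      · rintro ⟨h6, h7⟩
        rw [if_pos h6]
        exact ⟨by omega, h7⟩

theorem downclosed_card (S : Finset ℕ) (h : ∀ j ∈ S, ∀ i ≤ j, i ∈ S) (j : ℕ) :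
    j < S.card ↔ j ∈ S := by
  constructor
  · intro hj
    by_contra hc
    have : S ⊆ Finset.range j := by
      intro i hi
      rw [Finset.mem_range]
      by_contra hij
      exact hc (h i hi j (by omega))
    have := Finset.card_le_card this
    rw [Finset.card_range] at this
    omega
  · intro hj
    have : Finset.range (j + 1) ⊆ S := by
      intro i hi
      exact h j hj i (by simpa [Nat.lt_succ_iff] using hi)
    have := Finset.card_le_card this
    rw [Finset.card_range] at this
    omega

theorem SST_row {ρ : ℕ →₀ ℕ} {M : ℕ} {μ : ℕ → ℕ} {t : Cell → ℕ} (h : SST ρ M μ t) (i j : ℕ) :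
    ∀ d, j + d < ρ i → t (i, j) ≤ t (i, j + d) := by
  intro d
  induction d with
  | zero => intro _; exact le_rfl
  | succ d ih =>
    intro hd
    exact (ih (by omega)).trans (h.2.2.1 i (j + d) hd)

theorem exists_sub {ρ : ℕ →₀ ℕ} (hρ : Antitone ρ) {M : ℕ} {μ : ℕ → ℕ} {t : Cell → ℕ}
    (h : SST ρ (M + 1) μ t) :
    ∃ σ ∈ HS ρ, ρ.degree = σ.degree + μ (M + 1) ∧ ∃ t', SST σ M μ t' ∧ extT ρ σ M t' = t := by
  let σ : ℕ →₀ ℕ := Finsupp.onFinset ρ.support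
    (fun i => ((Finset.range (ρ i)).filter (fun j => t (i, j) ≤ M)).card) (by
      intro i hi
      rw [Finsupp.mem_support_iff]
      intro h0
      simp [h0] at hi)
  have hσ : ∀ i j, j < σ i ↔ j < ρ i ∧ t (i, j) ≤ M := by
    intro i j
    change j < ((Finset.range (ρ i)).filter (fun j => t (i, j) ≤ M)).card ↔ _
    rw [downclosed_card]
    · simp
    · intro a ha b hb
      simp only [Finset.mem_filter, Finset.mem_range] at ha ⊢
      have := SST_row h i b (a - b) (by omega)
      rw [show b + (a - b) = a by omega] at this
      omega
  clear_value σ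
  obtain ⟨h1, h2, h3, h4, h5⟩ := h
  have hle : ∀ i, σ i ≤ ρ i := by
    intro i
    by_contra hc
    have := (hσ i (ρ i)).1 (by omega)
    omega
  have hH : σ ∈ HS ρ := by
    rw [mem_HS]
    intro i
    refine ⟨?_, hle i⟩
    by_contra hc
    have a := h4 i (σ i) (by omega)
    have b := h2 (i + 1) (σ i) (by omega)
    have c := hρ (Nat.le_succ i)
    have d := (hσ i (σ i)).2 ⟨by simp only [Nat.succ_eq_add_one] at c; omega, by omega⟩
    omega
  refine ⟨σ, hH, ?_, fun c => if c.2 < σ c.1 then t c else 0, ⟨?_, ?_, ?_, ?_, ?_⟩, ?_⟩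
  · rw [← h5 (M + 1) (by omega) le_rfl, ← card_diff (HS_le hH), add_comm]
    congr 1
    apply Nat.card_congr
    apply Equiv.subtypeEquivRight
    rintro ⟨i, j⟩
    have a := hσ i j
    have b := h2 i j
    simp only
    constructor
    · rintro ⟨h6, h7⟩
      have := b h6
      refine ⟨h6, ?_⟩
      by_contra hc
      exact h7 (a.2 ⟨h6, by omega⟩)
    · rintro ⟨h6, h7⟩
      refine ⟨h6, fun hc => ?_⟩
      have := a.1 hc
      omega
  · intro i j hij
    simp only
    rw [if_neg (by omega)]
  · intro i j hij
    simp only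
    rw [if_pos hij]
    have := (hσ i j).1 hij
    exact ⟨(h2 i j this.1).1, this.2⟩
  · intro i j hij
    simp only
    rw [if_pos hij, if_pos (by omega)]
    exact h3 i j ((hσ i _).1 hij).1
  · intro i j hij
    have a := (hσ _ j).1 hij
    have b := h4 i j a.1
    have c := hρ (Nat.le_succ i)
    have d := (hσ i j).2 ⟨by simp only [Nat.succ_eq_add_one] at c; omega, by omega⟩
    simp only
    rw [if_pos hij, if_pos d]
    exact b
  · intro k hk1 hk
    rw [← h5 k hk1 (by omega)]
    apply Nat.card_congr
    apply Equiv.subtypeEquivRight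
    rintro ⟨i, j⟩
    have a := hσ i j
    simp only
    constructor
    · rintro ⟨h6, h7⟩
      rw [if_pos h6] at h7
      exact ⟨(a.1 h6).1, h7⟩
    · rintro ⟨h6, h7⟩
      have := a.2 ⟨h6, by omega⟩
      rw [if_pos this]
      exact ⟨this, h7⟩
  · funext ⟨i, j⟩
    have a := hσ i j
    have b := h2 i j
    have c := h1 i j
    simp only [extT]
    split_ifs with h6 h7
    · rfl
    · have : ¬ t (i, j) ≤ M := fun hc => h6 (a.2 ⟨h7, hc⟩)
      have := b h7
      omega
    · exact (c (by omega)).symm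

theorem SST_card (μ : ℕ → ℕ) : ∀ (M : ℕ) (ρ : ℕ →₀ ℕ), Antitone ρ →
    Finite {t // SST ρ M μ t} ∧ Nat.card {t // SST ρ M μ t} = KK (wl μ M) ρ := by
  intro M
  induction M with
  | zero =>
    intro ρ _
    by_cases h0 : ρ = 0
    · subst h0
      have : Unique {t // SST 0 0 μ t} :=
        { default := ⟨fun _ => 0, by simp, by simp, by simp, by simp, by intro k _ _; omega⟩
          uniq := by
            rintro ⟨t, ht⟩
            apply Subtype.ext
            funext ⟨i, j⟩
            exact ht.1 i j (by simp) }
      refine ⟨inferInstance, ?_⟩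
      simp [wl, KK]
    · have : IsEmpty {t // SST ρ 0 μ t} := by
        refine ⟨fun ⟨t, ht⟩ => h0 ?_⟩
        ext i
        by_contra hc
        have := ht.2.1 i 0 (by simp at hc; omega)
        omega
      refine ⟨inferInstance, ?_⟩
      simp [wl, KK, h0]
  | succ M ih =>
    intro ρ hρ
    let I := {σ // σ ∈ (HS ρ).filter (fun σ => ρ.degree = σ.degree + μ (M + 1))}
    letI : Fintype I := inferInstanceAs (Fintype {σ // σ ∈ (HS ρ).filter (fun σ => ρ.degree = σ.degree + μ (M + 1))})
    have hI : ∀ σ : I, σ.1 ∈ HS ρ ∧ ρ.degree = σ.1.degree + μ (M + 1) :=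
      fun σ => Finset.mem_filter.1 σ.2
    let F : (Σ σ : I, {t // SST σ.1 M μ t}) → {t // SST ρ (M + 1) μ t} :=
      fun x => ⟨extT ρ x.1.1 M x.2.1, extT_SST (hI x.1).1 (hI x.1).2 x.2.2⟩
    have hF : Function.Bijective F := by
      constructor
      · rintro ⟨⟨σ, hσ⟩, ⟨t, ht⟩⟩ ⟨⟨σ', hσ'⟩, ⟨t', ht'⟩⟩ heq
        have heq : extT ρ σ M t = extT ρ σ' M t' := congrArg Subtype.val heq
        have m1 := mem_HS.1 (Finset.mem_filter.1 hσ).1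
        have m2 := mem_HS.1 (Finset.mem_filter.1 hσ').1
        have key : ∀ i j, j < ρ i → (j < σ i ↔ j < σ' i) := by
          intro i j hj
          rw [← extT_le ht i j hj, ← extT_le ht' i j hj, heq]
        have hs : σ = σ' := by
          ext i
          have a := m1 i
          have b := m2 i
          rcases lt_trichotomy (σ i) (σ' i) with h | h | h
          · have := key i (σ i) (by omega); omega
          · exact h
          · have := key i (σ' i) (by omega); omega
        subst hs
        have ht : t = t' := by
          funext ⟨i, j⟩
          by_cases hj : j < σ i
          · have := congrFun heq (i, j)
            simpa [extT, hj] using this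
          · rw [ht.1 i j (not_lt.1 hj), ht'.1 i j (not_lt.1 hj)]
        subst ht
        rfl
      · rintro ⟨t, ht⟩
        obtain ⟨σ, h1, h2, t', h3, h4⟩ := exists_sub hρ ht
        exact ⟨⟨⟨σ, Finset.mem_filter.2 ⟨h1, h2⟩⟩, ⟨t', h3⟩⟩, Subtype.ext h4⟩
    have hfin : ∀ σ : I, Finite {t // SST σ.1 M μ t} := fun σ => (ih σ.1 (HS_antitone (hI σ).1)).1
    refine ⟨Finite.of_surjective F hF.2, ?_⟩
    rw [← Nat.card_congr (Equiv.ofBijective F hF), Nat.card_sigma]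
    simp only [wl, KK]
    rw [← Finset.sum_coe_sort ((HS ρ).filter (fun σ => ρ.degree = σ.degree + μ (M + 1)))]
    apply Finset.sum_congr rfl
    intro σ _
    exact (ih σ.1 (HS_antitone (hI σ).1)).2

/-- Row lengths as a finitely supported function. -/
noncomputable def rowF {N : ℕ} (ν : Nat.Partition N) : ℕ →₀ ℕ :=
  listF ((ν.parts.sort (· ≤ ·)).reverse)

theorem rowF_apply {N : ℕ} (ν : Nat.Partition N) (i : ℕ) : rowF ν i = rowLen ν i := rfl

theorem rowF_antitone {N : ℕ} (ν : Nat.Partition N) : Antitone (rowF ν) := by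
  apply antitone_nat_of_succ_le
  intro i
  have hs : ((ν.parts.sort (· ≤ ·)).reverse).Pairwise (· ≥ ·) := by
    rw [List.pairwise_reverse]
    exact Multiset.pairwise_sort _ _
  simp only [rowF, listF_apply]
  generalize (ν.parts.sort (· ≤ ·)).reverse = l at hs
  by_cases hi : i + 1 < l.length
  · rw [List.getD_eq_getElem _ _ hi, List.getD_eq_getElem _ _ (by omega : i < l.length)]
    exact List.pairwise_iff_getElem.1 hs i (i + 1) _ _ (Nat.lt_succ_self i)
  · rw [List.getD_eq_default (n := i + 1) _ _ (by omega)]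
    omega

theorem schurFn_eq {N : ℕ} (ν : Nat.Partition N) {μ : ℕ → ℕ} {M : ℕ} (h0 : μ 0 = 0)
    (hM : ∀ k, M < k → μ k = 0) : schurFn ν μ = (KK (wl μ M) (rowF ν) : ℚ) := by
  rw [← (SST_card μ M (rowF ν) (rowF_antitone ν)).2, schurFn]
  congr 1
  apply Nat.card_congr
  apply Equiv.subtypeEquivRight
  intro t
  have hd : ∀ c : Cell, c ∈ diag ν ↔ c.2 < rowF ν c.1 := fun c => Iff.rfl
  have hfin : ∀ p : Cell → Prop, Finite {c : Cell // c.2 < rowF ν c.1 ∧ p c} := by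
    intro p
    apply Set.Finite.subset (cellsF (rowF ν)).finite_toSet
    intro c hc
    exact mem_cellsF.2 hc.1
  simp only [IsSSYT, hd, SST]
  constructor
  · rintro ⟨⟨h1, h2, h3, h4⟩, h5⟩
    refine ⟨fun i j hij => h1 (i, j) (by simp only; omega), fun i j hij => ⟨h2 (i, j) hij, ?_⟩, h3, h4,
      fun k _ _ => h5 k⟩
    by_contra hc
    have h6 := h5 (t (i, j))
    rw [hM _ (by omega)] at h6
    have := hfin (fun c => t c = t (i, j))
    rw [Nat.card_eq_zero] at h6
    rcases h6 with h6 | h6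
    · exact h6.false ⟨(i, j), hij, rfl⟩
    · exact (not_finite_iff_infinite.2 h6) this
  · rintro ⟨h1, h2, h3, h4, h5⟩
    refine ⟨⟨fun c hc => h1 c.1 c.2 (by omega), fun c hc => (h2 c.1 c.2 hc).1, h3, h4⟩, fun k => ?_⟩
    by_cases hk : 1 ≤ k ∧ k ≤ M
    · exact h5 k hk.1 hk.2
    · have e : IsEmpty {c : Cell // c.2 < rowF ν c.1 ∧ t c = k} := by
        refine ⟨fun ⟨c, hc, hk'⟩ => ?_⟩
        have := h2 c.1 c.2 hc
        simp only [Prod.mk.eta] at this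
        omega
      rw [Nat.card_of_isEmpty]
      rcases Nat.eq_zero_or_pos k with h | h
      · rw [h, h0]
      · rw [hM k (by omega)]

/-- Weights with finite support in the positive integers. -/
def GoodW (μ : ℕ → ℕ) : Prop := μ 0 = 0 ∧ ∃ M, ∀ k, M < k → μ k = 0

theorem schurFn_bad {N : ℕ} (ν : Nat.Partition N) {μ : ℕ → ℕ} (h : ¬ GoodW μ) :
    schurFn ν μ = 0 := by
  rw [schurFn]
  have : IsEmpty {t : Cell → ℕ // IsSSYT ν t ∧
    ∀ i, Nat.card {c : Cell // c ∈ diag ν ∧ t c = i} = μ i} := by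
    refine ⟨fun ⟨t, ht, hc⟩ => h ⟨?_, (cellsF (rowF ν)).sup t, fun k hk => ?_⟩⟩
    · rw [← hc 0]
      have e : IsEmpty {c : Cell // c ∈ diag ν ∧ t c = 0} := by
        refine ⟨fun ⟨c, h1, h2⟩ => ?_⟩
        have := ht.2.1 c h1
        omega
      exact Nat.card_of_isEmpty
    · rw [← hc k]
      have e : IsEmpty {c : Cell // c ∈ diag ν ∧ t c = k} := by
        refine ⟨fun ⟨c, h1, h2⟩ => ?_⟩
        have : t c ≤ (cellsF (rowF ν)).sup t := Finset.le_sup (mem_cellsF.2 h1)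
        omega
      exact Nat.card_of_isEmpty
  rw [Nat.card_of_isEmpty]
  rfl


/-! ### Part C: partitions and existence of the Schur expansion -/

theorem rowF_degree {N : ℕ} (ν : Nat.Partition N) : (rowF ν).degree = N := by
  rw [rowF, listF_degree, List.sum_reverse, ← Multiset.sum_coe, Multiset.sort_eq, ν.parts_sum]

theorem rowF_ne_zero {N : ℕ} (ν : Nat.Partition N) (i : ℕ) :
    rowF ν i ≠ 0 ↔ i < Multiset.card ν.parts := by
  rw [rowF, listF_apply]
  have hl : ((ν.parts.sort (· ≤ ·)).reverse).length = Multiset.card ν.parts := by simp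
  constructor
  · intro h
    by_contra hc
    exact h (List.getD_eq_default _ _ (by omega))
  · intro h
    rw [List.getD_eq_getElem _ _ (by omega)]
    have hm := List.getElem_mem (l := (ν.parts.sort (· ≤ ·)).reverse) (n := i) (by omega)
    rw [List.mem_reverse, Multiset.mem_sort] at hm
    exact (ν.parts_pos hm).ne'

theorem rowF_inj {N : ℕ} {ν ν' : Nat.Partition N} (h : rowF ν = rowF ν') : ν = ν' := by
  have hc : Multiset.card ν.parts = Multiset.card ν'.parts := by
    have h1 := rowF_ne_zero ν
    have h2 := rowF_ne_zero ν'
    rw [h] at h1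
    have h3 : ∀ i, i < Multiset.card ν.parts ↔ i < Multiset.card ν'.parts :=
      fun i => (h1 i).symm.trans (h2 i)
    have a := h3 (Multiset.card ν.parts)
    have b := h3 (Multiset.card ν'.parts)
    omega
  have hl : (ν.parts.sort (· ≤ ·)).reverse = (ν'.parts.sort (· ≤ ·)).reverse := by
    apply List.ext_getElem
    · simpa using hc
    · intro i h1 h2
      have := DFunLike.congr_fun h i
      rw [rowF, rowF, listF_apply, listF_apply, List.getD_eq_getElem _ _ h1,
        List.getD_eq_getElem _ _ h2] at this
      exact this
  have hl2 := List.reverse_injective hl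
  apply Nat.Partition.ext
  rw [← Multiset.sort_eq ν.parts (· ≤ ·), hl2, Multiset.sort_eq]

theorem card_parts_le {N : ℕ} (ν : Nat.Partition N) : Multiset.card ν.parts ≤ N := by
  have := Multiset.card_nsmul_le_sum (s := ν.parts) (a := 1) (fun x hx => ν.parts_pos hx)
  rw [ν.parts_sum] at this
  simpa using this

/-- Ascending list of parts. -/
noncomputable def asc {N : ℕ} (ν : Nat.Partition N) : List ℕ := ν.parts.sort (· ≤ ·)

/-- Sum of all partial sums. -/
noncomputable def DD {N : ℕ} (ν : Nat.Partition N) : ℕ :=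
  ∑ k ∈ Finset.range (N + 1), ∑ i ∈ Finset.range k, rowF ν i

theorem KK_asc_self {N : ℕ} (ν : Nat.Partition N) : KK (asc ν) (rowF ν) ≠ 0 :=
  KK_pos (Multiset.pairwise_sort _ _)

theorem KK_asc_dom {N : ℕ} {lam ν : Nat.Partition N} (h : KK (asc lam) (rowF ν) ≠ 0) (k : ℕ) :
    ∑ i ∈ Finset.range k, rowF lam i ≤ ∑ i ∈ Finset.range k, rowF ν i := by
  have := KK_dom h k
  rw [sum_take_eq] at this
  exact this

theorem DD_eq {N : ℕ} {lam ν : Nat.Partition N} (h : KK (asc lam) (rowF ν) ≠ 0)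
    (hD : DD ν ≤ DD lam) : ν = lam := by
  have h1 : ∀ k ∈ Finset.range (N + 1),
      ∑ i ∈ Finset.range k, rowF lam i ≤ ∑ i ∈ Finset.range k, rowF ν i := fun k _ => KK_asc_dom h k
  have h2 := (Finset.sum_eq_sum_iff_of_le h1).1 (le_antisymm (Finset.sum_le_sum h1) hD)
  apply rowF_inj
  ext i
  by_cases hi : i < N
  · have a := h2 i (by simp; omega)
    have b := h2 (i + 1) (by simp; omega)
    rw [Finset.sum_range_succ, Finset.sum_range_succ] at b
    omega
  · have a := (rowF_ne_zero ν i).not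
    have b := (rowF_ne_zero lam i).not
    have := card_parts_le ν
    have := card_parts_le lam
    omega

theorem tri {N : ℕ} (c : Nat.Partition N → ℚ) (P : Nat.Partition N → Prop)
    (h : ∀ lam, P lam → ∑ ν, c ν * (KK (asc lam) (rowF ν) : ℚ) = 0)
    (hP : ∀ lam ν, P lam → KK (asc lam) (rowF ν) ≠ 0 → P ν) : ∀ lam, P lam → c lam = 0 := by
  by_contra! hc
  obtain ⟨l0, hl0, hl1⟩ := hc
  obtain ⟨lam, hm, hmax⟩ := Finset.exists_max_image
    (Finset.univ.filter fun ν : Nat.Partition N => P ν ∧ c ν ≠ 0) DD ⟨l0, by simp [hl0, hl1]⟩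
  simp only [Finset.mem_filter, Finset.mem_univ, true_and] at hm hmax
  have hs := h lam hm.1
  rw [Finset.sum_eq_single lam] at hs
  · rcases mul_eq_zero.1 hs with h1 | h1
    · exact hm.2 h1
    · exact KK_asc_self lam (by exact_mod_cast h1)
  · intro ν _ hne
    by_cases hk : KK (asc lam) (rowF ν) = 0
    · simp [hk]
    · by_cases hcν : c ν = 0
      · simp [hcν]
      · exact absurd (DD_eq hk (hmax ν ⟨hP _ _ hm.1 hk, hcν⟩)) hne
  · simp

theorem KK_surj {N : ℕ} (g : Nat.Partition N → ℚ) : ∃ c : Nat.Partition N → ℚ,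
    ∀ lam, ∑ ν, c ν * (KK (asc lam) (rowF ν) : ℚ) = g lam := by
  let T : (Nat.Partition N → ℚ) →ₗ[ℚ] (Nat.Partition N → ℚ) :=
    { toFun := fun c lam => ∑ ν, c ν * (KK (asc lam) (rowF ν) : ℚ)
      map_add' := by
        intro a b
        funext lam
        simp [add_mul, Finset.sum_add_distrib]
      map_smul' := by
        intro a b
        funext lam
        simp [mul_assoc, Finset.mul_sum] }
  have hT : Function.Injective T := by
    rw [injective_iff_map_eq_zero]
    intro c hc
    funext lam
    exact tri c (fun _ => True) (fun lam _ => congrFun hc lam) (fun _ _ _ _ => trivial) lam trivial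
  obtain ⟨c, hc⟩ := (LinearMap.injective_iff_surjective.1 hT) g
  exact ⟨c, fun lam => congrFun hc lam⟩

/-- The weight attached to a partition. -/
noncomputable def wt {N : ℕ} (lam : Nat.Partition N) (k : ℕ) : ℕ :=
  if k = 0 then 0 else rowF lam (k - 1)

theorem wl_perm (μ : ℕ → ℕ) (M : ℕ) : (wl μ M).Perm (List.ofFn fun i : Fin M => μ (i + 1)) := by
  induction M with
  | zero => simp [wl]
  | succ M ih =>
    rw [List.ofFn_succ', List.concat_eq_append, wl]
    exact (List.Perm.cons _ ih).trans (List.perm_append_singleton _ _).symm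

theorem exists_perm_of_ofFn {M : ℕ} (g h : Fin M → ℕ) (hp : (List.ofFn g).Perm (List.ofFn h)) :
    ∃ e : Equiv.Perm (Fin M), g = h ∘ e := by
  have h1 : List.ofFn (g ∘ Tuple.sort g) = List.ofFn (h ∘ Tuple.sort h) := by
    apply List.Perm.eq_of_pairwise (le := (· ≤ ·))
    · intro a b _ _ h1 h2; exact le_antisymm h1 h2
    · exact List.pairwise_ofFn.2 fun i j hij => Tuple.monotone_sort g hij.le
    · exact List.pairwise_ofFn.2 fun i j hij => Tuple.monotone_sort h hij.le
    · exact ((Equiv.Perm.ofFn_comp_perm _ _).trans hp).trans (Equiv.Perm.ofFn_comp_perm _ _).symm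
  have h2 := List.ofFn_injective h1
  refine ⟨(Tuple.sort g).symm.trans (Tuple.sort h), ?_⟩
  funext i
  have := congrFun h2 ((Tuple.sort g).symm i)
  simpa using this

theorem exists_perm_wt {μ μ' : ℕ → ℕ} {M : ℕ} (h0 : μ 0 = 0) (hM : ∀ k, M < k → μ k = 0)
    (h0' : μ' 0 = 0) (hM' : ∀ k, M < k → μ' k = 0) (hp : (wl μ M).Perm (wl μ' M)) :
    ∃ e : Equiv.Perm ℕ, e 0 = 0 ∧ μ = μ' ∘ e := by
  obtain ⟨e, he⟩ := exists_perm_of_ofFn _ _ (((wl_perm μ M).symm.trans hp).trans (wl_perm μ' M))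
  let emb : Fin M ↪ ℕ := ⟨fun i => i + 1, fun i j h => Fin.ext (by simpa using h)⟩
  refine ⟨e.viaFintypeEmbedding emb, ?_, ?_⟩
  · apply Equiv.Perm.viaFintypeEmbedding_apply_notMem_range
    rintro ⟨i, hi⟩
    simp [emb] at hi
  · funext k
    by_cases hk : k ∈ Set.range emb
    · obtain ⟨i, rfl⟩ := hk
      rw [Function.comp_apply, Equiv.Perm.viaFintypeEmbedding_apply_image]
      exact congrFun he i
    · rw [Function.comp_apply, Equiv.Perm.viaFintypeEmbedding_apply_notMem_range _ _ hk]
      have : k = 0 ∨ M < k := by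
        by_contra! hc
        exact hk ⟨⟨k - 1, by omega⟩, by change k - 1 + 1 = k; omega⟩
      rcases this with rfl | h
      · rw [h0, h0']
      · rw [hM _ h, hM' _ h]

theorem wt_zero {N : ℕ} (lam : Nat.Partition N) : wt lam 0 = 0 := by simp [wt]

theorem wt_big {N : ℕ} (lam : Nat.Partition N) (k : ℕ) (hk : Multiset.card lam.parts < k) :
    wt lam k = 0 := by
  have := (rowF_ne_zero lam (k - 1)).not
  simp only [wt]
  split_ifs <;> omega

theorem wl_wt {N : ℕ} (lam : Nat.Partition N) {M : ℕ} (hM : Multiset.card lam.parts ≤ M) :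
    (wl (wt lam) M).Perm (asc lam ++ List.replicate (M - Multiset.card lam.parts) 0) := by
  refine (wl_perm _ _).trans ?_
  have : (List.ofFn fun i : Fin M => wt lam (i + 1)) =
      (asc lam).reverse ++ List.replicate (M - Multiset.card lam.parts) 0 := by
    have hl : (asc lam).length = Multiset.card lam.parts := by simp [asc]
    apply List.ext_getElem
    · simp [hl]; omega
    · intro i h1 h2
      rw [List.getElem_ofFn]
      simp only [wt, Nat.add_one_ne_zero, if_false, Nat.add_sub_cancel, rowF, listF_apply]
      change (asc lam).reverse.getD i 0 = _
      by_cases hi : i < (asc lam).reverse.length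
      · rw [List.getD_eq_getElem _ _ hi, List.getElem_append_left hi]
      · rw [List.getD_eq_default _ _ (by omega), List.getElem_append_right (by omega),
          List.getElem_replicate]
  rw [this]
  exact List.Perm.append_right _ (List.reverse_perm _)

theorem exists_part {N : ℕ} {L : List ℕ} (hL : L.sum = N) : ∃ lam : Nat.Partition N,
    Multiset.card lam.parts ≤ L.length ∧ (L.filter (fun a => a ≠ 0)).Perm (asc lam) ∧
    L.Perm (asc lam ++ List.replicate (L.length - Multiset.card lam.parts) 0) := by
  have hperm := List.filter_append_perm (fun a => decide (a ≠ 0)) L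
  have hz : L.filter (fun a => !decide (a ≠ 0)) =
      List.replicate (L.filter (fun a => !decide (a ≠ 0))).length 0 := by
    rw [List.eq_replicate_iff]
    refine ⟨rfl, fun b hb => ?_⟩
    simpa using (List.mem_filter.1 hb).2
  have hsum : (L.filter (fun a => decide (a ≠ 0))).sum = N := by
    have := hperm.sum_eq
    rw [List.sum_append, hz, hL] at this
    simpa using this
  let lam : Nat.Partition N :=
    { parts := ((L.filter (fun a => decide (a ≠ 0)) : List ℕ) : Multiset ℕ)
      parts_pos := by
        intro i hi
        have := (List.mem_filter.1 (Multiset.mem_coe.1 hi)).2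
        simp at this
        omega
      parts_sum := by rw [Multiset.sum_coe, hsum] }
  have hasc : (L.filter (fun a => decide (a ≠ 0))).Perm (asc lam) := by
    rw [← Multiset.coe_eq_coe, asc, Multiset.sort_eq]
  have hc : Multiset.card lam.parts = (L.filter (fun a => decide (a ≠ 0))).length := by
    simp only [lam, Multiset.coe_card]
  have hlen := hperm.length_eq
  rw [List.length_append] at hlen
  refine ⟨lam, by omega, hasc, ?_⟩
  refine hperm.symm.trans ?_
  rw [hz]
  have : (L.filter (fun a => !decide (a ≠ 0))).length = L.length - Multiset.card lam.parts := by omega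
  rw [this]
  exact List.Perm.append_right _ hasc

theorem wl_length (μ : ℕ → ℕ) (M : ℕ) : (wl μ M).length = M := by
  induction M with
  | zero => rfl
  | succ M ih => simp [wl, ih]

theorem schurFn_wt {N : ℕ} (lam ν : Nat.Partition N) :
    schurFn ν (wt lam) = (KK (asc lam) (rowF ν) : ℚ) := by
  rw [schurFn_eq ν (wt_zero lam) (M := Multiset.card lam.parts) (fun k hk => wt_big lam k hk)]
  have := wl_wt lam le_rfl
  rw [KK_perm this]
  simp

theorem exists_exp {N : ℕ} (f : (ℕ → ℕ) → ℚ)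
    (hgood : ∀ μ, f μ ≠ 0 → ∃ M, μ 0 = 0 ∧ (∀ k, M < k → μ k = 0) ∧ (wl μ M).sum = N)
    (hinv : ∀ μ (e : Equiv.Perm ℕ), e 0 = 0 → f (μ ∘ e) = f μ) :
    ∃ c : Nat.Partition N →₀ ℚ, ∀ μ, f μ = c.sum fun ν a => a * schurFn ν μ := by
  obtain ⟨c, hc⟩ := KK_surj (fun lam : Nat.Partition N => f (wt lam))
  refine ⟨Finsupp.equivFunOnFinite.symm c, fun μ => ?_⟩
  rw [Finsupp.sum_fintype _ _ (by simp)]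
  simp only [Finsupp.equivFunOnFinite_symm_apply_apply]
  by_cases hμ : ∃ M, μ 0 = 0 ∧ (∀ k, M < k → μ k = 0) ∧ (wl μ M).sum = N
  · obtain ⟨M, h0, hM, hs⟩ := hμ
    obtain ⟨lam, h1, h2, h3⟩ := exists_part hs
    rw [wl_length] at h1 h3
    obtain ⟨e, he, hμe⟩ := exists_perm_wt h0 hM (wt_zero lam)
      (fun k hk => wt_big lam k (by omega)) (h3.trans (wl_wt lam h1).symm)
    have : f μ = f (wt lam) := by rw [hμe, hinv _ e he]
    rw [this, ← hc]
    apply Finset.sum_congr rfl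
    intro ν _
    rw [schurFn_eq ν h0 hM, ← KK_filter (wl μ M) (rowF_antitone ν), KK_perm h2]
  · have hf : f μ = 0 := by
      by_contra h
      exact hμ (hgood μ h)
    rw [hf, Finset.sum_eq_zero]
    intro ν _
    by_cases hg : GoodW μ
    · obtain ⟨h0, M, hM⟩ := hg
      rw [schurFn_eq ν h0 hM]
      have : KK (wl μ M) (rowF ν) = 0 := by
        by_contra h
        have := (KK_supp h).2
        rw [rowF_degree] at this
        exact hμ ⟨M, h0, hM, this.symm⟩
      simp [this]
    · rw [schurFn_bad ν hg, mul_zero]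


/-! ### Part D: the chromatic side -/

theorem proper_iff {n : ℕ} (f : Fin n ⊕ Fin n → ℕ) : IsProperColoring (genNet n n) f ↔
    (∀ v, 0 < f v) ∧ (∀ i j, f (Sum.inl i) = f (Sum.inl j) → i = j) ∧
      ∀ j, f (Sum.inl j) ≠ f (Sum.inr j) := by
  constructor
  · rintro ⟨h1, h2⟩
    refine ⟨h1, fun i j hij => ?_, fun j => ?_⟩
    · by_contra hc
      exact h2 (Sum.inl i) (Sum.inl j) (by simp [genNet, hc]) hij
    · exact h2 _ _ (by simp [genNet])
  · rintro ⟨h1, h2, h3⟩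
    refine ⟨h1, ?_⟩
    rintro (i | i) (j | j) h
    · intro hij
      have := h2 _ _ hij
      subst this
      simp at h
    · simp [genNet] at h
      have : i = j := Fin.ext h
      subst this
      exact h3 i
    · simp [genNet] at h
      have : j = i := Fin.ext h
      subst this
      exact (h3 j).symm
    · simp [genNet] at h

theorem wl_sum (μ : ℕ → ℕ) (M : ℕ) : μ 0 + (wl μ M).sum = ∑ i ∈ Finset.range (M + 1), μ i := by
  induction M with
  | zero => simp [wl]
  | succ M ih => rw [Finset.sum_range_succ, ← ih, wl, List.sum_cons]; ring

theorem X_ne {n : ℕ} {μ : ℕ → ℕ} (h : XCoeff (genNet n n) μ ≠ 0) :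
    ∃ f : Fin n ⊕ Fin n → ℕ, IsProperColoring (genNet n n) f ∧
      ∀ i, Nat.card {v // f v = i} = μ i := by
  by_contra hc
  apply h
  rw [XCoeff]
  have : IsEmpty {f : Fin n ⊕ Fin n → ℕ // IsProperColoring (genNet n n) f ∧
      ∀ i, Nat.card {v // f v = i} = μ i} := ⟨fun x => hc ⟨x.1, x.2⟩⟩
  rw [Nat.card_of_isEmpty]
  rfl

theorem X_good {n : ℕ} (μ : ℕ → ℕ) (h : XCoeff (genNet n n) μ ≠ 0) :
    ∃ M, μ 0 = 0 ∧ (∀ k, M < k → μ k = 0) ∧ (wl μ M).sum = 2 * n + 0 := by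
  obtain ⟨f, hf, hc⟩ := X_ne h
  have h0 : μ 0 = 0 := by
    rw [← hc 0]
    have : IsEmpty {v // f v = 0} := ⟨fun x => (hf.1 x.1).ne' x.2⟩
    exact Nat.card_of_isEmpty
  refine ⟨Finset.univ.sup f, h0, fun k hk => ?_, ?_⟩
  · rw [← hc k]
    have : IsEmpty {v // f v = k} := by
      refine ⟨fun x => ?_⟩
      have h1 : f x.1 ≤ Finset.univ.sup f := Finset.le_sup (Finset.mem_univ _)
      have := x.2
      omega
    exact Nat.card_of_isEmpty
  · have h1 := wl_sum μ (Finset.univ.sup f)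
    rw [h0, zero_add] at h1
    rw [h1]
    have h2 := Finset.card_eq_sum_card_fiberwise (s := (Finset.univ : Finset (Fin n ⊕ Fin n)))
      (t := Finset.range (Finset.univ.sup f + 1)) (f := f) (by
        intro v _
        simp only [Finset.coe_range, Set.mem_Iio]
        exact Nat.lt_succ_of_le (Finset.le_sup (Finset.mem_univ _)))
    rw [Finset.card_univ, Fintype.card_sum, Fintype.card_fin] at h2
    rw [add_zero, two_mul, h2]
    apply Finset.sum_congr rfl
    intro i _
    rw [← hc i, Nat.card_eq_fintype_card, Fintype.card_subtype]

theorem X_inv {n : ℕ} (μ : ℕ → ℕ) (e : Equiv.Perm ℕ) (he : e 0 = 0) :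
    XCoeff (genNet n n) (μ ∘ e) = XCoeff (genNet n n) μ := by
  rw [XCoeff, XCoeff]
  congr 1
  apply Nat.card_congr
  refine Equiv.subtypeEquiv (Equiv.arrowCongr (Equiv.refl _) e) ?_
  intro f
  have hv : ∀ v, (Equiv.arrowCongr (Equiv.refl _) e) f v = e (f v) := fun v => rfl
  simp only [proper_iff, hv, e.injective.eq_iff, e.injective.ne_iff, Function.comp_apply]
  have hp : ∀ k, 0 < e k ↔ 0 < k := by
    intro k
    rw [Nat.pos_iff_ne_zero, Nat.pos_iff_ne_zero]
    conv_lhs => rw [← he]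
    exact e.injective.ne_iff
  simp only [hp]
  refine and_congr Iff.rfl ?_
  rw [← e.forall_congr_right (q := fun i => Nat.card {v // e (f v) = i} = μ i)]
  simp only [e.injective.eq_iff]

theorem X_small {n N : ℕ} (lam : Nat.Partition N) (h : Multiset.card lam.parts < n) :
    XCoeff (genNet n n) (wt lam) = 0 := by
  by_contra hne
  obtain ⟨f, hf, hc⟩ := X_ne hne
  rw [proper_iff] at hf
  have hle : ∀ v, f v ≤ Multiset.card lam.parts := by
    intro v
    by_contra hlt
    have h1 := hc (f v)
    rw [wt_big lam _ (by omega), Nat.card_eq_zero] at h1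
    rcases h1 with h1 | h1
    · exact h1.false ⟨v, rfl⟩
    · exact not_finite_iff_infinite.2 h1 inferInstance
  have := Fintype.card_le_of_injective
    (fun i : Fin n => (⟨f (Sum.inl i) - 1, by
      have := hle (Sum.inl i)
      have := hf.1 (Sum.inl i)
      omega⟩ : Fin (Multiset.card lam.parts))) (by
      intro i j hij
      apply hf.2.1
      have h1 := congrArg Fin.val hij
      have := hf.1 (Sum.inl i)
      have := hf.1 (Sum.inl j)
      simp only at h1
      omega)
  simp only [Fintype.card_fin] at this
  omega

/-- Test weights. -/
def muA (n : ℕ) {m B : ℕ} (a : Fin m → Fin B) (k : ℕ) : ℕ :=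
  if h : 1 ≤ k ∧ k ≤ m then (a ⟨k - 1, by omega⟩ : ℕ) + 1 else if 1 ≤ k ∧ k ≤ n then 1 else 0

/-- Colorings seen as permutations with choices. -/
abbrev ColT (n m : ℕ) : Type :=
  Σ σ : Equiv.Perm (Fin n), ∀ j : Fin n, {x : Fin m // (x : ℕ) ≠ (σ j : ℕ)}

theorem card_ne (m t : ℕ) : Nat.card {x : Fin m // (x : ℕ) ≠ t} = if t < m then m - 1 else m := by
  rw [Nat.card_eq_fintype_card, Fintype.card_subtype]
  split_ifs with h
  · have : (Finset.univ.filter fun x : Fin m => (x : ℕ) ≠ t) = Finset.univ.erase ⟨t, h⟩ := by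
      ext x; simp [Fin.ext_iff]
    rw [this, Finset.card_erase_of_mem (Finset.mem_univ _), Finset.card_univ, Fintype.card_fin]
  · have : (Finset.univ.filter fun x : Fin m => (x : ℕ) ≠ t) = Finset.univ := by
      ext x; simp; omega
    rw [this, Finset.card_univ, Fintype.card_fin]

theorem card_ColT {n m : ℕ} (h : m ≤ n) :
    (Nat.card (ColT n m) : ℚ) = n.factorial * (((m : ℚ) - 1) ^ m * (m : ℚ) ^ (n - m)) := by
  obtain ⟨r, rfl⟩ := Nat.exists_eq_add_of_le h
  rw [Nat.card_sigma]
  have h1 : ∀ σ : Equiv.Perm (Fin (m + r)),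
      Nat.card (∀ j : Fin (m + r), {x : Fin m // (x : ℕ) ≠ (σ j : ℕ)}) = (m - 1) ^ m * m ^ r := by
    intro σ
    rw [Nat.card_pi]
    simp only [card_ne]
    rw [Equiv.prod_comp σ (fun j : Fin (m + r) => if (j : ℕ) < m then m - 1 else m),
      Fin.prod_univ_add]
    simp
  simp only [h1]
  rw [Finset.sum_const, Finset.card_univ, Fintype.card_perm, Fintype.card_fin, Nat.add_sub_cancel_left]
  push_cast
  rw [nsmul_eq_mul]
  cases m with
  | zero => simp
  | succ m => simp

theorem muA_ne {n m B : ℕ} (hm : m ≤ n) {a : Fin m → Fin B} {k : ℕ} (h : muA n a k ≠ 0) :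
    1 ≤ k ∧ k ≤ n := by
  by_contra hc
  apply h
  rw [muA, dif_neg (by omega), if_neg hc]

theorem muA_inj {n m B : ℕ} {a b : Fin m → Fin B} (h : ∀ k, muA n a k = muA n b k) : a = b := by
  funext i
  have := h (i + 1)
  have hi : 1 ≤ (i : ℕ) + 1 ∧ (i : ℕ) + 1 ≤ m := by omega
  rw [muA, muA, dif_pos hi, dif_pos hi] at this
  apply Fin.ext
  simpa using this

/-- The coloring attached to an element of `ColT`. -/
def toCol {n m : ℕ} (x : ColT n m) : Fin n ⊕ Fin n → ℕ :=
  Sum.elim (fun j => (x.1 j : ℕ) + 1) (fun j => ((x.2 j).1 : ℕ) + 1)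

theorem card_split {α β : Type*} [Finite α] [Finite β] (f : α ⊕ β → ℕ) (k : ℕ) :
    Nat.card {v // f v = k} =
      Nat.card {i // f (Sum.inl i) = k} + Nat.card {j // f (Sum.inr j) = k} := by
  rw [← Nat.card_sum]
  exact Nat.card_congr Equiv.subtypeSum

theorem toCol_spec {n m : ℕ} (hm : m ≤ n) (x : ColT n m) : ∃ a : Fin m → Fin (n + 1),
    IsProperColoring (genNet n n) (toCol x) ∧ ∀ k, Nat.card {v // toCol x v = k} = muA n a k := by
  refine ⟨fun i => ⟨Nat.card {j : Fin n // (x.2 j).1 = i}, ?_⟩, ?_, fun k => ?_⟩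
  · have := Finite.card_subtype_le (fun j : Fin n => (x.2 j).1 = i)
    rw [Nat.card_fin] at this
    omega
  · rw [proper_iff]
    refine ⟨?_, ?_, ?_⟩
    · rintro (j | j) <;> simp [toCol]
    · intro i j hij
      simp only [toCol, Sum.elim_inl] at hij
      exact x.1.injective (Fin.ext (by omega))
    · intro j hj
      simp only [toCol, Sum.elim_inl, Sum.elim_inr] at hj
      exact (x.2 j).2 (by omega)
  · rw [card_split]
    simp only [toCol, Sum.elim_inl, Sum.elim_inr]
    have h1 : Nat.card {i : Fin n // (x.1 i : ℕ) + 1 = k} = if 1 ≤ k ∧ k ≤ n then 1 else 0 := by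
      split_ifs with hk
      · rw [Nat.card_eq_one_iff_unique]
        refine ⟨⟨fun i j => ?_⟩, ⟨x.1.symm ⟨k - 1, by omega⟩, ?_⟩⟩
        · apply Subtype.ext
          apply x.1.injective
          have := i.2
          have := j.2
          exact Fin.ext (by omega)
        · simp; omega
      · have : IsEmpty {i : Fin n // (x.1 i : ℕ) + 1 = k} := by
          refine ⟨fun i => ?_⟩
          have := i.2
          have := (x.1 i.1).2
          omega
        exact Nat.card_of_isEmpty
    rw [h1, muA]
    by_cases hk : 1 ≤ k ∧ k ≤ m
    · rw [dif_pos hk, if_pos (by omega), add_comm]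
      congr 1
      apply Nat.card_congr
      apply Equiv.subtypeEquivRight
      intro j
      rw [Fin.ext_iff]
      simp only
      omega
    · rw [dif_neg hk]
      have : IsEmpty {j : Fin n // ((x.2 j).1 : ℕ) + 1 = k} := by
        refine ⟨fun j => ?_⟩
        have := j.2
        have := (x.2 j.1).1.2
        omega
      rw [Nat.card_of_isEmpty, add_zero]

theorem toCol_inj {n m : ℕ} : Function.Injective (toCol : ColT n m → _) := by
  rintro ⟨σ, p⟩ ⟨τ, q⟩ h
  have h1 : σ = τ := by
    ext j
    have := congrFun h (Sum.inl j)
    simpa [toCol] using this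
  subst h1
  have h2 : p = q := by
    funext j
    apply Subtype.ext
    have := congrFun h (Sum.inr j)
    simp only [toCol, Sum.elim_inr] at this
    exact Fin.ext (by omega)
  rw [h2]

theorem toCol_surj {n m : ℕ} (hm : m ≤ n) {f : Fin n ⊕ Fin n → ℕ} {a : Fin m → Fin (n + 1)}
    (hf : IsProperColoring (genNet n n) f) (hc : ∀ k, Nat.card {v // f v = k} = muA n a k) :
    ∃ x : ColT n m, toCol x = f := by
  rw [proper_iff] at hf
  have hr : ∀ v, 1 ≤ f v ∧ f v ≤ n := by
    intro v
    apply muA_ne hm (a := a)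
    rw [← hc]
    have : Nonempty {w // f w = f v} := ⟨⟨v, rfl⟩⟩
    exact Nat.card_pos.ne'
  let s : Fin n → Fin n := fun i => ⟨f (Sum.inl i) - 1, by have := hr (Sum.inl i); omega⟩
  have hs : ∀ i, (s i : ℕ) + 1 = f (Sum.inl i) := by
    intro i
    have := hr (Sum.inl i)
    simp only [s]
    omega
  have hinj : Function.Injective s := by
    intro i j hij
    apply hf.2.1
    rw [← hs, ← hs, hij]
  have hbij := Finite.injective_iff_bijective.1 hinj
  have hp : ∀ j, f (Sum.inr j) ≤ m := by
    intro j
    by_contra hlt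
    have h1 := hc (f (Sum.inr j))
    have h2 := hr (Sum.inr j)
    rw [muA, dif_neg (by omega), if_pos h2, Nat.card_eq_one_iff_unique] at h1
    obtain ⟨i, hi⟩ := hbij.2 ⟨f (Sum.inr j) - 1, by omega⟩
    have h3 : f (Sum.inl i) = f (Sum.inr j) := by
      rw [← hs, hi]
      simp only
      omega
    have h4 := h1.1.elim ⟨Sum.inl i, h3⟩ ⟨Sum.inr j, rfl⟩
    simp at h4
  refine ⟨⟨Equiv.ofBijective s hbij, fun j => ⟨⟨f (Sum.inr j) - 1, ?_⟩, ?_⟩⟩, ?_⟩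
  · have := hr (Sum.inr j)
    have := hp j
    omega
  · have h1 := hf.2.2 j
    rw [← hs] at h1
    have := hr (Sum.inr j)
    simp only [Equiv.ofBijective_apply]
    omega
  · funext v
    rcases v with j | j
    · simp [toCol, hs]
    · have := hr (Sum.inr j)
      simp only [toCol, Sum.elim_inr]
      omega

theorem X_sum {n m : ℕ} (hm : m ≤ n) :
    ∑ a : Fin m → Fin (n + 1), XCoeff (genNet n n) (muA n a) =
      n.factorial * (((m : ℚ) - 1) ^ m * (m : ℚ) ^ (n - m)) := by
  rw [← card_ColT hm]
  simp only [XCoeff]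
  rw [← Nat.cast_sum]
  congr 1
  let P : (Fin m → Fin (n + 1)) → (Fin n ⊕ Fin n → ℕ) → Prop := fun a f =>
    IsProperColoring (genNet n n) f ∧ ∀ k, Nat.card {v // f v = k} = muA n a k
  change ∑ a, Nat.card {f // P a f} = _
  let F : (Σ a, {f // P a f}) → ColT n m := fun y => (toCol_surj hm y.2.2.1 y.2.2.2).choose
  have hF : ∀ y, toCol (F y) = y.2.1 := fun y => (toCol_surj hm y.2.2.1 y.2.2.2).choose_spec
  have hinj : Function.Injective F := by
    intro y z hyz
    have h1 : y.2.1 = z.2.1 := by rw [← hF, ← hF, hyz]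
    obtain ⟨a, f, hf⟩ := y
    obtain ⟨b, g, hg⟩ := z
    simp only at h1
    subst h1
    have : a = b := muA_inj fun k => by rw [← hf.2, ← hg.2]
    subst this
    rfl
  have hsurj : Function.Surjective F := by
    intro x
    obtain ⟨a, ha⟩ := toCol_spec hm x
    refine ⟨⟨a, toCol x, ha⟩, ?_⟩
    apply toCol_inj
    rw [hF]
  have hfin : ∀ a, Finite {f // P a f} := by
    intro a
    apply Finite.of_injective (fun f => F ⟨a, f⟩)
    intro f g hfg
    have := hinj hfg
    simpa using this
  rw [← Nat.card_sigma]
  exact Nat.card_congr (Equiv.ofBijective F ⟨hinj, hsurj⟩)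


/-! ### Part E: conclusion -/

theorem wl_muA_perm {n m B : ℕ} (hm : m ≤ n) (a : Fin m → Fin B) :
    (wl (muA n a) n).Perm
      ((List.replicate (n - m) 0 ++ List.ofFn fun i => (a i : ℕ)).map Nat.succ) := by
  refine (wl_perm _ _).trans ?_
  have : (List.ofFn fun i : Fin n => muA n a (i + 1)) =
      ((List.ofFn fun i => (a i : ℕ)) ++ List.replicate (n - m) 0).map Nat.succ := by
    apply List.ext_getElem
    · simp; omega
    · intro i h1 h2
      rw [List.getElem_ofFn, List.getElem_map]
      rw [List.length_ofFn] at h1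
      by_cases hi : i < m
      · rw [List.getElem_append_left (by simpa using hi), List.getElem_ofFn]
        have hi' : 1 ≤ i + 1 ∧ i + 1 ≤ m := by omega
        simp only [muA]
        rw [dif_pos hi']
        rfl
      · rw [List.getElem_append_right (by simpa using hi), List.getElem_replicate]
        simp only [muA]
        rw [dif_neg (by omega), if_pos (by omega)]
  rw [this]
  exact List.perm_append_comm.map _

theorem KK_replicate {ρ : ℕ →₀ ℕ} (h : Antitone ρ) (L : List ℕ) (r : ℕ) :
    KK (List.replicate r 0 ++ L) ρ = KK L ρ := by
  induction r with
  | zero => simp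
  | succ r ih => rw [List.replicate_succ, List.cons_append, KK_zero_cons h, ih]

theorem schurFn_muA {n m N : ℕ} (hm : m ≤ n) (a : Fin m → Fin (n + 1)) (ν : Nat.Partition N) :
    schurFn ν (muA n a) = (KK (wl (muA n a) n) (rowF ν) : ℚ) := by
  apply schurFn_eq
  · by_contra h
    have := muA_ne hm h
    omega
  · intro k hk
    by_contra h
    have := muA_ne hm h
    omega

/-- Remove the first column. -/
noncomputable def rem {N : ℕ} (ν : Nat.Partition N) : ℕ →₀ ℕ :=
  (rowF ν).mapRange (fun k => k - 1) rfl

theorem rem_antitone {N : ℕ} (ν : Nat.Partition N) : Antitone (rem ν) := by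
  intro i j hij
  exact Nat.sub_le_sub_right (rowF_antitone ν hij) 1

theorem rem_add {N n : ℕ} (ν : Nat.Partition N) (h : Multiset.card ν.parts = n) :
    rowF ν = rem ν + colF n := by
  ext i
  have := rowF_ne_zero ν i
  simp only [rem, Finsupp.add_apply, Finsupp.mapRange_apply, colF_apply]
  split_ifs <;> omega

theorem rem_degree {n : ℕ} (ν : Nat.Partition (2 * n + 0)) (h : Multiset.card ν.parts = n) :
    (rem ν).degree = n := by
  have h1 := rowF_degree ν
  rw [rem_add ν h, map_add, colF_degree] at h1
  omega

theorem sum_schur {n m : ℕ} (hm : m ≤ n) (ν : Nat.Partition (2 * n + 0))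
    (h : Multiset.card ν.parts = n) :
    ∑ a : Fin m → Fin (n + 1), schurFn ν (muA n a) = SSn m (rem ν) := by
  rw [← TT_KK (n + 1) m (rem ν) (by rw [rem_degree ν h]; omega), TT]
  apply Finset.sum_congr rfl
  intro a _
  rw [schurFn_muA hm, KK_perm (wl_muA_perm hm a), rem_add ν h]
  have hl : (List.replicate (n - m) 0 ++ List.ofFn fun i => (a i : ℕ)).length = n := by
    simp; omega
  have h1 := KK_col (List.replicate (n - m) 0 ++ List.ofFn fun i => (a i : ℕ)) (rem ν)
  rw [hl] at h1
  rw [← h1, KK_replicate (rem_antitone ν)]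

theorem sum_schur_big {n m : ℕ} (hm : m ≤ n) (ν : Nat.Partition (2 * n + 0))
    (h : n < Multiset.card ν.parts) (a : Fin m → Fin (n + 1)) : schurFn ν (muA n a) = 0 := by
  rw [schurFn_muA hm]
  norm_cast
  by_contra hne
  have h1 := (KK_supp hne).1 n (by rw [wl_length])
  exact (rowF_ne_zero ν n).2 h h1

theorem twoOne_card (n : ℕ) : Multiset.card (twoOne n 0).parts = n := by
  simp [twoOne]

theorem rem_twoOne (n : ℕ) : rem (twoOne n 0) = colF n := by
  ext i
  have h := rowF_ne_zero (twoOne n 0) i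
  rw [twoOne_card] at h
  have h2 : i < n → rowF (twoOne n 0) i = 2 := by
    intro hi
    rw [rowF, listF_apply]
    have hlen : i < (((twoOne n 0).parts.sort (· ≤ ·)).reverse).length := by
      simpa [twoOne_card] using hi
    rw [List.getD_eq_getElem _ _ hlen]
    have hmem := List.getElem_mem hlen
    rw [List.mem_reverse, Multiset.mem_sort] at hmem
    generalize (((twoOne n 0).parts.sort (· ≤ ·)).reverse)[i] = x at hmem
    simp only [twoOne, Multiset.replicate_zero, add_zero] at hmem
    exact Multiset.eq_of_mem_replicate hmem
  simp only [rem, Finsupp.mapRange_apply, colF_apply]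
  split_ifs with hi
  · rw [h2 hi]
  · omega

theorem coeff_main (n : ℕ) (c : Nat.Partition (2 * n + 0) →₀ ℚ)
    (hc : ∀ μ, XCoeff (genNet n n) μ = c.sum fun ν a => a * schurFn ν μ) :
    c (twoOne n 0) = if Even n then (n.factorial : ℚ) else 0 := by
  have hc' : ∀ μ, XCoeff (genNet n n) μ = ∑ ν, c ν * schurFn ν μ := by
    intro μ
    rw [hc μ, Finsupp.sum_fintype _ _ (by simp)]
  have hsmall : ∀ ν : Nat.Partition (2 * n + 0), Multiset.card ν.parts < n → c ν = 0 := by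
    apply tri
    · intro lam hlam
      rw [← X_small lam hlam, hc']
      apply Finset.sum_congr rfl
      intro ν _
      rw [schurFn_wt]
    · intro lam ν hlam hk
      have h1 := (KK_supp hk).1 (Multiset.card lam.parts) (by simp [asc])
      have h2 := (rowF_ne_zero ν (Multiset.card lam.parts)).not
      omega
  obtain ⟨q, hq, hqm⟩ := PolyExt.net n
  let S := Finset.univ.filter fun ν : Nat.Partition (2 * n + 0) => Multiset.card ν.parts = n
  have hS : ∀ ν ∈ S, Multiset.card ν.parts = n := fun ν hν => (Finset.mem_filter.1 hν).2
  have hsum : ∀ m ≤ n, ∑ ν ∈ S, c ν * SSn m (rem ν) = n.factorial * q m := by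
    intro m hm
    rw [hqm m hm, ← X_sum hm]
    simp only [hc']
    rw [Finset.sum_comm]
    rw [← Finset.sum_subset (Finset.subset_univ S)]
    · apply Finset.sum_congr rfl
      intro ν hν
      rw [← Finset.mul_sum, sum_schur hm ν (hS ν hν)]
    · intro ν _ hν
      rw [← Finset.mul_sum]
      have hne : Multiset.card ν.parts ≠ n := fun h => hν (Finset.mem_filter.2 ⟨Finset.mem_univ _, h⟩)
      rcases lt_or_gt_of_ne hne with h | h
      · rw [hsmall ν h, zero_mul]
      · rw [Finset.sum_eq_zero (fun a _ => sum_schur_big hm ν h a), mul_zero]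
  have h1 : PolyExt n (fun m => ∑ ν ∈ S, c ν * SSn m (rem ν)) (∑ ν ∈ S, c ν * EE (rem ν)) := by
    apply PolyExt.sum
    intro ν hν
    exact (SSn_ext n (rem ν) (rem_antitone ν) (rem_degree ν (hS ν hν))).smul (c ν)
  have h2 := (h1.add (hq.smul (-(n.factorial : ℚ)))).unique (by
    intro m hm
    rw [hsum m hm]
    ring)
  have h3 : ∑ ν ∈ S, c ν * EE (rem ν) = c (twoOne n 0) * (-1) ^ n := by
    rw [Finset.sum_eq_single (twoOne n 0)]
    · rw [rem_twoOne, EE_col]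
    · intro ν hν hne
      rw [EE, rem_degree ν (hS ν hν), if_neg, mul_zero]
      intro hr
      apply hne
      apply rowF_inj
      rw [rem_add ν (hS ν hν), rem_add _ (twoOne_card n), hr, rem_twoOne]
    · intro h
      exact (h (Finset.mem_filter.2 ⟨Finset.mem_univ _, twoOne_card n⟩)).elim
  rw [h3] at h2
  split_ifs at h2 ⊢ with he
  · rw [he.neg_one_pow] at h2
    linarith
  · rw [(Nat.not_even_iff_odd.1 he).neg_one_pow] at h2
    linarith

/-- For `n ≥ 1`, the Schur coefficient `[s_{(2^n)}] X_{GN_{n,n}}`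
equals `n!` if `n` is even and `0` if `n` is odd. -/
theorem schurCoeff_genNet_two_pow (n : ℕ) (hn : 1 ≤ n) :
    sCoeff (XCoeff (genNet n n)) (twoOne n 0) =
      if Even n then (n.factorial : ℚ) else 0 := by
  have h : ∃ c : Nat.Partition (2 * n + 0) →₀ ℚ,
      ∀ μ, XCoeff (genNet n n) μ = c.sum fun ν a => a * schurFn ν μ :=
    exists_exp _ X_good X_inv
  rw [sCoeff, dif_pos h]
  exact coeff_main n _ h.choose_spec
end

section
/- For all integers n ≥ 1 and n ≥ m ≥ 0, the generalized net GN_{n,m} is Schur-positive; that is, [s_λ]X_{GN_{n,m}} ≥ 0 for every partition λ of n+m. -/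
open scoped Classical

section NetHelpers

open Finset

/-- alternant: determinant of powers. -/
noncomputable def alt {R : Type*} [CommRing R] {r : ℕ} (y : Fin r → R) (α : Fin r → ℕ) : R :=
  Matrix.det (Matrix.of fun i j : Fin r => y i ^ α j)

lemma det_col_succ {R : Type*} [CommRing R] {r : ℕ}
    (A B : Matrix (Fin (r+1)) (Fin (r+1)) R) (c : Fin r → R)
    (h0 : ∀ i, A i (Fin.last r) = B i (Fin.last r))
    (h1 : ∀ i (j : Fin r), A i j.castSucc = B i j.castSucc + c j * A i j.succ) :
    A.det = B.det := by
  rw [← Matrix.det_submatrix_equiv_self Fin.revPerm A, ← Matrix.det_submatrix_equiv_self Fin.revPerm B]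
  apply Matrix.det_eq_of_forall_col_eq_smul_add_pred (fun j => c (Fin.rev j))
  · intro i; simp [Matrix.submatrix_apply, h0]
  · intro i j
    simp only [Matrix.submatrix_apply, Fin.revPerm_apply, Fin.rev_succ, Fin.rev_castSucc]
    exact h1 _ _

lemma det_col_sum {R : Type*} [CommRing R] {r : ℕ} (y : Fin r → R) (I : Fin r → Finset ℕ)
    (e : Fin r → ℕ → ℕ) (w : Fin r → ℕ → R) :
    Matrix.det (Matrix.of fun i j : Fin r => ∑ p ∈ I j, w j p * y i ^ e j p)
      = ∑ κ ∈ Fintype.piFinset I, (∏ j, w j (κ j)) * alt y (fun j => e j (κ j)) := by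
  simp only [alt, Matrix.det_apply', Matrix.of_apply, Finset.prod_univ_sum, Finset.mul_sum]
  rw [Finset.sum_comm]
  refine Finset.sum_congr rfl fun κ _ => Finset.sum_congr rfl fun σ _ => ?_
  rw [Finset.prod_mul_distrib]; ring

lemma alt_step {R : Type*} [CommRing R] {r : ℕ} (x : ℕ → R) (ν : ℕ → ℕ) (hν : Antitone ν) :
    alt (r := r+1) (fun i => x (i+1)) (fun j => ν j + (r - j))
      = x (r+1) ^ ν r * (∏ i : Fin r, (x (i+1) - x (r+1))) *
        ∑ κ ∈ Fintype.piFinset (fun j : Fin r => Finset.Icc (ν (j+1)) (ν j)),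
          (∏ j : Fin r, x (r+1) ^ (ν j - κ j)) *
            alt (r := r) (fun i => x (i+1)) (fun j => κ j + (r - 1 - j)) := by
  set X := x (r+1) with hX
  let B : Matrix (Fin (r+1)) (Fin (r+1)) R := Matrix.of fun i j =>
    if h : (j:ℕ) < r then
      (x (i+1) - X) * ∑ p ∈ Finset.Icc (ν (j+1)) (ν j), X ^ (ν j - p) * x (i+1) ^ (p + (r - 1 - j))
    else x (i+1) ^ ν r
  have hAB : alt (r := r+1) (fun i => x (i+1)) (fun j => ν j + (r - j)) = B.det := by
    unfold alt
    apply det_col_succ _ B (fun j => X ^ (ν j - ν (j+1) + 1))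
    · intro i; simp [B]
    · intro i j
      have hj := j.2
      have hm : ν (j+1) ≤ ν j := hν (by omega)
      simp only [Matrix.of_apply, B, Fin.val_castSucc, hj, dif_pos, Fin.val_succ]
      generalize x (i+1) = z
      obtain ⟨d, hd⟩ := Nat.exists_eq_add_of_le hm
      have h1 : (Finset.Icc (ν (j+1)) (ν j)) = (Finset.range (d+1)).map (addLeftEmbedding (ν (j+1))) := by
        ext a; simp only [Finset.mem_Icc, Finset.mem_map, Finset.mem_range, addLeftEmbedding_apply]
        constructor
        · intro h; exact ⟨a - ν (j+1), by omega, by omega⟩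
        · rintro ⟨b, hb, rfl⟩; omega
      rw [h1, Finset.sum_map]
      simp only [addLeftEmbedding_apply]
      have h2 : ∀ p ∈ Finset.range (d+1), X ^ (ν j - (ν (j+1) + p)) * z ^ (ν (j+1) + p + (r - 1 - j))
          = z ^ (ν (j+1) + (r - 1 - j)) * (z ^ p * X ^ (d + 1 - 1 - p)) := by
        intro p hp
        rw [Finset.mem_range] at hp
        rw [show ν j - (ν (j+1) + p) = d + 1 - 1 - p by omega]; ring
      rw [Finset.sum_congr rfl h2, ← Finset.mul_sum]
      have h3 := (Commute.all z X).mul_geom_sum₂ (d+1)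
      rw [show ν j - ν (j+1) = d by omega, show ν j + (r - j) = (ν (j+1) + (r - 1 - j)) + (d + 1) by omega,
        show r - (↑j + 1) = r - 1 - j by omega]
      rw [mul_left_comm, h3, pow_add z _ (d+1)]; ring
  rw [hAB, Matrix.det_succ_row B (Fin.last r), Fin.sum_univ_castSucc]
  have hz : ∀ j : Fin r, B (Fin.last r) j.castSucc = 0 := by
    intro j; simp [B, hX]
  simp only [hz, mul_zero, zero_mul, Finset.sum_const_zero, zero_add]
  have hl : B (Fin.last r) (Fin.last r) = X ^ ν r := by simp [B, hX]
  rw [hl, Even.neg_one_pow (by simp), one_mul, mul_assoc]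
  congr 1
  rw [← det_col_sum (fun i : Fin r => x (i+1)) (fun j : Fin r => Finset.Icc (ν (j+1)) (ν j))
    (fun j p => p + (r - 1 - j)) (fun j p => X ^ (ν j - p)), ← Matrix.det_mul_column]
  congr 1
  ext i j
  simp [B, Matrix.of_apply, Fin.succAbove_last]


/-- A finset of naturals closed downward is an initial segment. -/
lemma lower_eq_range (s : Finset ℕ) (h : ∀ a ∈ s, ∀ b, b ≤ a → b ∈ s) : s = Finset.range s.card := by
  apply Finset.eq_of_subset_of_card_le
  · intro a ha
    rw [Finset.mem_range]
    have : Finset.range (a+1) ⊆ s := by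
      intro b hb; rw [Finset.mem_range] at hb; exact h a ha b (by omega)
    have := Finset.card_le_card this
    rw [Finset.card_range] at this; omega
  · simp

/-- Tableau with row lengths `ν`, and entries at most `r`. -/
def IsT (ν : ℕ → ℕ) (r : ℕ) (t : ℕ × ℕ → ℕ) : Prop :=
  (∀ c : ℕ × ℕ, ¬ c.2 < ν c.1 → t c = 0) ∧ (∀ c : ℕ × ℕ, c.2 < ν c.1 → 0 < t c ∧ t c ≤ r) ∧
  (∀ i j : ℕ, j + 1 < ν i → t (i, j) ≤ t (i, j + 1)) ∧
  (∀ i j : ℕ, j < ν (i + 1) → t (i, j) < t (i + 1, j))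

def extf {r : ℕ} (κ : Fin r → ℕ) : ℕ → ℕ := fun i => if h : i < r then κ ⟨i, h⟩ else 0

def growT (ν κ : ℕ → ℕ) (r : ℕ) (t : ℕ × ℕ → ℕ) : ℕ × ℕ → ℕ :=
  fun c => if c.2 < ν c.1 ∧ ¬ c.2 < κ c.1 then r + 1 else t c

def interl (r : ℕ) (ν : ℕ → ℕ) : Finset (Fin r → ℕ) :=
  Fintype.piFinset (fun j : Fin r => Finset.Icc (ν (j+1)) (ν j))

noncomputable def Tab : ℕ → (ℕ → ℕ) → Finset (ℕ × ℕ → ℕ)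
  | 0, _ => {fun _ => 0}
  | (r+1), ν => (interl r ν).biUnion fun κ => (Tab r (extf κ)).image (growT ν (extf κ) r)

lemma extf_interl {r : ℕ} {ν : ℕ → ℕ} (h0 : ∀ i, r + 1 ≤ i → ν i = 0)
    {κ : Fin r → ℕ} (hκ : κ ∈ interl r ν) :
    (∀ i, ν (i+1) ≤ extf κ i ∧ extf κ i ≤ ν i) ∧ (∀ i, r ≤ i → extf κ i = 0) := by
  rw [interl, Fintype.mem_piFinset] at hκ
  constructor
  · intro i
    unfold extf
    split_ifs with h
    · simpa using hκ ⟨i, h⟩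
    · rw [h0 (i+1) (by omega)]; simp
  · intro i hi; simp [extf, hi]

lemma extf_anti {r : ℕ} {ν : ℕ → ℕ} (h0 : ∀ i, r + 1 ≤ i → ν i = 0)
    {κ : Fin r → ℕ} (hκ : κ ∈ interl r ν) : Antitone (extf κ) :=
  antitone_nat_of_succ_le fun i =>
    ((extf_interl h0 hκ).1 (i+1)).2.trans ((extf_interl h0 hκ).1 i).1

lemma IsT_grow {r : ℕ} {ν κ : ℕ → ℕ} (hi : ∀ i, ν (i+1) ≤ κ i ∧ κ i ≤ ν i)
    {t : ℕ × ℕ → ℕ} (ht : IsT κ r t) : IsT ν (r+1) (growT ν κ r t) := by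
  obtain ⟨h1, h2, h3, h4⟩ := ht
  refine ⟨?_, ?_, ?_, ?_⟩
  · intro c hc
    have := hi c.1
    rw [growT, if_neg (by tauto)]
    exact h1 c (by omega)
  · intro c hc
    unfold growT
    split_ifs with h
    · omega
    · have := h2 c (by tauto); omega
  · intro i j hj
    unfold growT
    have := hi i
    by_cases h : j + 1 < κ i
    · rw [if_neg (by simp; omega), if_neg (by simp; omega)]; exact h3 i j h
    · rw [if_pos (show (_ ∧ _) from ⟨hj, h⟩)]
      split_ifs with h'
      · rfl
      · have := h2 (i,j) (by simp at h' ⊢; omega); omega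
  · intro i j hj
    unfold growT
    have a := hi i
    have b := hi (i+1)
    rw [if_neg (by simp; omega)]
    split_ifs with h
    · have := h2 (i,j) (by simp; omega); omega
    · exact h4 i j (by simp at h; omega)

lemma IsT_ge {r : ℕ} {ν : ℕ → ℕ} (hν : Antitone ν) {t : ℕ × ℕ → ℕ} (ht : IsT ν r t) :
    ∀ i j, j < ν i → i + 1 ≤ t (i, j) := by
  intro i
  induction i with
  | zero => intro j hj; exact (ht.2.1 (0,j) hj).1
  | succ i ih =>
    intro j hj
    have h1 := ih j (lt_of_lt_of_le hj (hν (by omega)))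
    have h2 := ht.2.2.2 i j hj
    omega

lemma IsT_mono {r : ℕ} {ν : ℕ → ℕ} {t : ℕ × ℕ → ℕ} (ht : IsT ν r t) (i : ℕ) :
    ∀ a b, a ≤ b → b < ν i → t (i, a) ≤ t (i, b) := by
  intro a b hab
  induction b, hab using Nat.le_induction with
  | base => intro _; rfl
  | succ b hb ih => intro h; exact (ih (by omega)).trans (ht.2.2.1 i b h)

lemma IsT_shrink {r : ℕ} {ν : ℕ → ℕ} (hν : Antitone ν) (h0 : ∀ i, r + 1 ≤ i → ν i = 0)
    {t : ℕ × ℕ → ℕ} (ht : IsT ν (r+1) t) :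
    ∃ κ ∈ interl r ν, ∃ t', IsT (extf κ) r t' ∧ growT ν (extf κ) r t' = t := by
  let κ : ℕ → ℕ := fun i => ((Finset.range (ν i)).filter (fun j => t (i,j) ≤ r)).card
  have hκ : ∀ i j, j < κ i ↔ j < ν i ∧ t (i,j) ≤ r := by
    intro i j
    have := lower_eq_range ((Finset.range (ν i)).filter (fun j => t (i,j) ≤ r)) (by
      intro a ha b hb
      simp only [Finset.mem_filter, Finset.mem_range] at ha ⊢
      exact ⟨by omega, (IsT_mono ht i b a hb ha.1).trans ha.2⟩)
    rw [← Finset.mem_range, ← this]; simp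
  have hle : ∀ i, κ i ≤ ν i := by
    intro i
    by_contra hc
    have := (hκ i (ν i)).1 (by omega)
    omega
  have hge : ∀ i, ν (i+1) ≤ κ i := by
    intro i
    by_contra hc
    have h5 := (hκ i (κ i)).not.1 (by omega)
    have h6 := ht.2.2.2 i (κ i) (by omega)
    have h7 := ht.2.1 (i+1, κ i) (by simp; omega)
    have h8 : ν (i+1) ≤ ν i := hν (by omega)
    exact h5 ⟨by omega, by omega⟩
  have hz : ∀ i, r ≤ i → κ i = 0 := by
    intro i hi
    by_contra hc
    have h5 := (hκ i 0).1 (by omega)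
    have := IsT_ge hν ht i 0 h5.1
    omega
  have he : extf (fun j : Fin r => κ j) = κ := by
    funext i
    unfold extf
    split_ifs with h
    · rfl
    · exact (hz i (by omega)).symm
  refine ⟨fun j => κ j, ?_, fun c => if c.2 < κ c.1 then t c else 0, ?_, ?_⟩
  · rw [interl, Fintype.mem_piFinset]; intro j; simp [hle, hge]
  · rw [he]
    refine ⟨?_, ?_, ?_, ?_⟩
    · intro c hc; simp [hc]
    · intro c hc
      simp only [hc, if_true]
      exact ⟨(ht.2.1 c ((hκ _ _).1 hc).1).1, ((hκ _ _).1 hc).2⟩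
    · intro i j hj
      have : j < κ i := by omega
      simp only [hj, this, if_true]
      exact ht.2.2.1 i j (lt_of_lt_of_le hj (hle i))
    · intro i j hj
      have : j < κ i := by have := hle (i+1); have := hge i; omega
      simp only [hj, this, if_true]
      exact ht.2.2.2 i j (lt_of_lt_of_le hj (hle _))
  · rw [he]
    funext c
    unfold growT
    by_cases h1 : c.2 < ν c.1
    · by_cases h2 : c.2 < κ c.1
      · simp [h2]
      · rw [if_pos ⟨h1, h2⟩]
        have h3 := (hκ c.1 c.2).not.1 h2
        have h4 := ht.2.1 c h1
        simp only [Prod.mk.eta] at h3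
        by_contra hne
        exact h3 ⟨h1, by omega⟩
    · have h2 : ¬ c.2 < κ c.1 := by have := hle c.1; omega
      simp [h1, h2, ht.1 c h1]

lemma mem_Tab (r : ℕ) : ∀ (ν : ℕ → ℕ), Antitone ν → (∀ i, r ≤ i → ν i = 0) →
    ∀ t, t ∈ Tab r ν ↔ IsT ν r t := by
  induction r with
  | zero =>
    intro ν hν h0 t
    simp only [Tab, Finset.mem_singleton]
    constructor
    · rintro rfl
      refine ⟨by simp, ?_, ?_, ?_⟩ <;> simp [h0]
    · intro h
      funext c
      exact h.1 c (by simp [h0])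
  | succ r ih =>
    intro ν hν h0 t
    simp only [Tab, Finset.mem_biUnion, Finset.mem_image]
    constructor
    · rintro ⟨κ, hκ, t', ht', rfl⟩
      have h := extf_interl h0 hκ
      exact IsT_grow h.1 ((ih _ (extf_anti h0 hκ) h.2 t').1 ht')
    · intro ht
      obtain ⟨κ, hκ, t', ht', h⟩ := IsT_shrink hν h0 ht
      have h' := extf_interl h0 hκ
      exact ⟨κ, hκ, t', (ih _ (extf_anti h0 hκ) h'.2 t').2 ht', h⟩

noncomputable def wtT {R : Type*} [CommRing R] (x : ℕ → R) (r : ℕ) (ν : ℕ → ℕ) (t : ℕ × ℕ → ℕ) : R :=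
  ∏ i ∈ Finset.range r, ∏ j ∈ Finset.range (ν i), x (t (i, j))

noncomputable def Sch {R : Type*} [CommRing R] (x : ℕ → R) (r : ℕ) (ν : ℕ → ℕ) : R :=
  ∑ t ∈ Tab r ν, wtT x r ν t

lemma grow_lt_iff {r : ℕ} {ν κ : ℕ → ℕ} (hi : ∀ i, ν (i+1) ≤ κ i ∧ κ i ≤ ν i)
    {t : ℕ × ℕ → ℕ} (ht : IsT κ r t) (i j : ℕ) :
    j < κ i ↔ j < ν i ∧ growT ν κ r t (i, j) ≤ r := by
  have := hi i
  unfold growT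
  by_cases h : j < κ i
  · have := ht.2.1 (i,j) h
    simp [h]; omega
  · simp only [h, false_iff, not_and, not_false_eq_true, and_true]
    intro h'
    simp [h']

lemma Sch_succ {R : Type*} [CommRing R] (x : ℕ → R) (r : ℕ) (ν : ℕ → ℕ)
    (h0 : ∀ i, r + 1 ≤ i → ν i = 0) :
    Sch x (r+1) ν = ∑ κ ∈ interl r ν, x (r+1) ^ ν r * (∏ j : Fin r, x (r+1) ^ (ν j - κ j)) *
      Sch x r (extf κ) := by
  have hT : ∀ κ ∈ interl r ν, ∀ t ∈ Tab r (extf κ), IsT (extf κ) r t := fun κ hκ t ht =>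
    (mem_Tab r _ (extf_anti h0 hκ) (extf_interl h0 hκ).2 t).1 ht
  rw [Sch, Tab, Finset.sum_biUnion]
  · refine Finset.sum_congr rfl fun κ hκ => ?_
    have hI := extf_interl h0 hκ
    rw [Finset.sum_image, Sch, Finset.mul_sum]
    · refine Finset.sum_congr rfl fun t ht => ?_
      unfold wtT
      rw [Finset.prod_range_succ]
      have hlast : ∏ j ∈ Finset.range (ν r), x (growT ν (extf κ) r t (r, j)) = x (r+1) ^ ν r := by
        rw [Finset.prod_congr rfl (g := fun _ => x (r+1))]
        · simp
        · intro j hj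
          rw [Finset.mem_range] at hj
          simp [growT, hj, hI.2 r le_rfl]
      rw [hlast]
      have hrow : ∀ i ∈ Finset.range r, ∏ j ∈ Finset.range (ν i), x (growT ν (extf κ) r t (i, j))
          = x (r+1) ^ (ν i - extf κ i) * ∏ j ∈ Finset.range (extf κ i), x (t (i, j)) := by
        intro i _
        have h := (hI.1 i).2
        obtain ⟨d, hd⟩ := Nat.exists_eq_add_of_le h
        rw [hd, Finset.prod_range_add, mul_comm]
        congr 1
        · rw [Finset.prod_congr rfl (g := fun _ => x (r+1))]
          · simp
          · intro j hj
            rw [Finset.mem_range] at hj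
            simp [growT, hd, hj]
        · refine Finset.prod_congr rfl fun j hj => ?_
          rw [Finset.mem_range] at hj
          simp [growT, hj]
      rw [Finset.prod_congr rfl hrow, Finset.prod_mul_distrib,
        Finset.prod_range (fun i => x (r+1) ^ (ν i - extf κ i))]
      have : ∀ j : Fin r, extf κ j = κ j := by intro j; simp [extf]
      simp only [this]; ring
    · intro t ht t' ht' h
      have h1 := hT κ hκ t ht
      have h2 := hT κ hκ t' ht'
      funext c
      by_cases hc : c.2 < extf κ c.1
      · have := congrFun h c
        simpa [growT, hc] using this
      · rw [h1.1 c hc, h2.1 c hc]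
  · intro κ hκ κ' hκ' hne
    rw [Function.onFun, Finset.disjoint_left]
    intro t ht ht'
    rw [Finset.mem_image] at ht ht'
    obtain ⟨t1, h1, rfl⟩ := ht
    obtain ⟨t2, h2, h⟩ := ht'
    apply hne
    funext j
    have e : ∀ κ : Fin r → ℕ, extf κ j = κ j := by intro κ; simp [extf]
    rw [← e κ, ← e κ']
    have a1 := grow_lt_iff (extf_interl h0 hκ).1 (hT κ hκ _ h1) j
    have a2 := grow_lt_iff (extf_interl h0 hκ').1 (hT κ' hκ' _ h2) j
    rw [h] at a2
    have a3 : ∀ k, k < extf κ j ↔ k < extf κ' j := fun k => (a1 k).trans (a2 k).symm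
    have := a3 (extf κ j); have := a3 (extf κ' j)
    omega

noncomputable def vdm {R : Type*} [CommRing R] (x : ℕ → R) : ℕ → R
  | 0 => 1
  | (r+1) => (∏ i : Fin r, (x (i+1) - x (r+1))) * vdm x r

lemma alt_eq_Sch {R : Type*} [CommRing R] (x : ℕ → R) (r : ℕ) : ∀ (ν : ℕ → ℕ), Antitone ν →
    (∀ i, r ≤ i → ν i = 0) →
    alt (r := r) (fun i => x (i+1)) (fun j => ν j + (r - 1 - j)) = vdm x r * Sch x r ν := by
  induction r with
  | zero => intro ν _ _; simp [alt, vdm, Sch, Tab, wtT]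
  | succ r ih =>
    intro ν hν h0
    simp only [Nat.add_sub_cancel]
    rw [alt_step x ν hν, Sch_succ x r ν h0, vdm, Finset.mul_sum, Finset.mul_sum]
    refine Finset.sum_congr rfl fun κ hκ => ?_
    have hκ : κ ∈ interl r ν := hκ
    have := ih (extf κ) (extf_anti h0 hκ) (extf_interl h0 hκ).2
    have e : ∀ j : Fin r, extf κ j = κ j := by intro j; simp [extf]
    simp only [e] at this
    rw [this]; ring

lemma vdm_eq_alt {R : Type*} [CommRing R] (x : ℕ → R) (r : ℕ) :
    vdm x r = alt (r := r) (fun i => x (i+1)) (fun j => (r - 1 - j)) := by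
  induction r with
  | zero => simp [vdm, alt]
  | succ r ih =>
    have := alt_step (r := r) x (fun _ => 0) antitone_const
    simp only [Nat.add_sub_cancel]
    simp only [zero_add, Finset.Icc_self, pow_zero, one_mul] at this
    rw [this, vdm, ih, Fintype.piFinset_singleton]
    simp

/-- elementary symmetric polynomial of the family `y` on the finset `s`. -/
noncomputable def Es {R ι : Type*} [CommRing R] (y : ι → R) (s : Finset ι) (k : ℕ) : R :=
  ∑ B ∈ s.powersetCard k, ∏ i ∈ B, y i

lemma alt_apply {R : Type*} [CommRing R] {r : ℕ} (y : Fin r → R) (α : Fin r → ℕ) :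
    alt y α = ∑ σ : Equiv.Perm (Fin r), ((Equiv.Perm.sign σ : ℤ) : R) * ∏ i, y (σ i) ^ α i := by
  simp [alt, Matrix.det_apply']

lemma alt_not_inj {R : Type*} [CommRing R] {r : ℕ} (y : Fin r → R) (α : Fin r → ℕ)
    (h : ¬ Function.Injective α) : alt y α = 0 := by
  simp only [Function.Injective, not_forall] at h
  obtain ⟨i, j, hij, hne⟩ := h
  exact Matrix.det_zero_of_column_eq hne (by intro k; simp [hij])

lemma Es_mul_alt {R : Type*} [CommRing R] {r : ℕ} (y : Fin r → R) (α : Fin r → ℕ) (b : ℕ) :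
    Es y Finset.univ b * alt y α = ∑ B ∈ (Finset.univ : Finset (Fin r)).powersetCard b,
      alt y (fun i => α i + if i ∈ B then 1 else 0) := by
  simp only [alt_apply, Finset.mul_sum]
  rw [Finset.sum_comm]
  refine Finset.sum_congr rfl fun σ _ => ?_
  have h : Es y Finset.univ b = ∑ B ∈ (Finset.univ : Finset (Fin r)).powersetCard b,
      ∏ i ∈ B, y (σ i) := by
    unfold Es
    symm
    apply Finset.sum_equiv (Equiv.finsetCongr σ)
    · intro B; simp [Finset.mem_powersetCard]
    · intro B _; simp
  rw [h, Finset.sum_mul]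
  refine Finset.sum_congr rfl fun B _ => ?_
  simp only [pow_add, Finset.prod_mul_distrib, pow_ite, pow_one, pow_zero]
  rw [Finset.prod_ite_mem]
  simp; ring

lemma sum_mul_alt {R : Type*} [CommRing R] {r : ℕ} (y : Fin r → R) (α : Fin r → ℕ) :
    (∑ i, y i) * alt y α = ∑ k, alt y (fun i => α i + if i = k then 1 else 0) := by
  simp only [alt_apply, Finset.mul_sum]
  rw [Finset.sum_comm]
  refine Finset.sum_congr rfl fun σ _ => ?_
  rw [← Equiv.sum_comp σ y, Finset.sum_mul]
  refine Finset.sum_congr rfl fun k _ => ?_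
  simp only [pow_add, Finset.prod_mul_distrib, pow_ite, pow_one, pow_zero]
  rw [Finset.prod_ite_eq']
  simp; ring

/-- exponent vector of the two-column shape with column heights `c₁, c₂`. -/
def gam (r c₁ c₂ : ℕ) : Fin r → ℕ := fun i =>
  (r - 1 - i) + (if (i:ℕ) < c₁ then 1 else 0) + (if (i:ℕ) < c₂ then 1 else 0)

def twoSet (r a b p : ℕ) : Finset (Fin r) :=
  Finset.univ.filter (fun i : Fin r => (i:ℕ) < p ∨ (a ≤ (i:ℕ) ∧ (i:ℕ) < a + b - p))

lemma twoSet_map (r a b p : ℕ) (hp : p ≤ a) (hpb : p ≤ b) (hr : a + b ≤ r) :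
    (twoSet r a b p).map Fin.valEmbedding = Finset.range p ∪ Finset.Ico a (a + b - p) := by
  ext k
  simp only [twoSet, Finset.mem_map, Finset.mem_filter, Finset.mem_univ, true_and,
    Fin.valEmbedding_apply, Finset.mem_union, Finset.mem_range, Finset.mem_Ico]
  constructor
  · rintro ⟨i, hi, rfl⟩; exact hi
  · intro h; exact ⟨⟨k, by omega⟩, h, rfl⟩

lemma twoSet_card (r a b p : ℕ) (hp : p ≤ a) (hpb : p ≤ b) (hr : a + b ≤ r) :
    (twoSet r a b p).card = b := by
  rw [← Finset.card_map Fin.valEmbedding, twoSet_map r a b p hp hpb hr, Finset.card_union_of_disjoint]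
  · simp; omega
  · rw [Finset.disjoint_left]; intro k; simp; omega

lemma survivor (r a b : ℕ) (B : Finset (Fin r)) (hB : B.card = b)
    (hinj : Function.Injective (fun i => gam r a 0 i + if i ∈ B then 1 else 0)) :
    ∃ p, p ≤ a ∧ p ≤ b ∧ B = twoSet r a b p := by
  have hstep : ∀ k (hk : k + 1 < r), (⟨k+1, hk⟩ : Fin r) ∈ B → k + 1 ≠ a →
      (⟨k, by omega⟩ : Fin r) ∈ B := by
    intro k hk h1 h2
    by_contra h3
    have := @hinj ⟨k+1, hk⟩ ⟨k, by omega⟩ (by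
      simp only [gam, h1, h3, if_true, if_false]
      split_ifs <;> omega)
    simp at this
  set C := B.map Fin.valEmbedding with hC
  have memC : ∀ i : Fin r, (i:ℕ) ∈ C ↔ i ∈ B := by
    intro i; simp [hC, Fin.val_inj]
  have ltC : ∀ k ∈ C, k < r := by
    intro k hk; simp only [hC, Finset.mem_map, Fin.valEmbedding_apply] at hk
    obtain ⟨i, _, rfl⟩ := hk; exact i.2
  have stepC : ∀ k, k + 1 ∈ C → k + 1 ≠ a → k ∈ C := by
    intro k hk hne
    have hlt := ltC _ hk
    exact (memC ⟨k, by omega⟩).2 (hstep k hlt ((memC ⟨k+1, hlt⟩).1 hk) hne)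
  have h1 : ∀ k ∈ C.filter (· < a), ∀ l, l ≤ k → l ∈ C.filter (· < a) := by
    intro k hk l hl
    rw [Finset.mem_filter] at hk
    have : ∀ d, d ≤ k → k - d ∈ C := by
      intro d
      induction d with
      | zero => intro _; exact hk.1
      | succ d ih =>
        intro hd
        apply stepC
        · rw [show k - (d+1) + 1 = k - d by omega]; exact ih (by omega)
        · omega
    have := this (k - l) (by omega)
    rw [show k - (k - l) = l by omega] at this
    rw [Finset.mem_filter]; exact ⟨this, by omega⟩
  have h2 : ∀ k ∈ (C.filter (a ≤ ·)).image (· - a), ∀ l, l ≤ k → l ∈ (C.filter (a ≤ ·)).image (· - a) := by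
    intro k hk l hl
    simp only [Finset.mem_image, Finset.mem_filter] at hk ⊢
    obtain ⟨u, ⟨hu, hua⟩, rfl⟩ := hk
    have : ∀ d, d ≤ u - a → u - d ∈ C := by
      intro d
      induction d with
      | zero => intro _; exact hu
      | succ d ih =>
        intro hd
        apply stepC
        · rw [show u - (d+1) + 1 = u - d by omega]; exact ih (by omega)
        · omega
    have := this (u - a - l) (by omega)
    exact ⟨_, ⟨this, by omega⟩, by omega⟩
  have e1 := lower_eq_range _ h1
  have e2 := lower_eq_range _ h2
  have c2 : ((C.filter (a ≤ ·)).image (· - a)).card = (C.filter (a ≤ ·)).card := by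
    apply Finset.card_image_of_injOn
    intro u hu v hv huv
    simp at hu hv huv
    omega
  have c3 : (C.filter (· < a)).card + (C.filter (a ≤ ·)).card = b := by
    rw [← hB, ← Finset.card_map Fin.valEmbedding, ← Finset.card_filter_add_card_filter_not (s := C) (· < a)]
    simp only [not_lt]
  rw [c2] at e2
  set p := (C.filter (· < a)).card with hp
  have m1 : ∀ k, (k ∈ C ∧ k < a) ↔ k < p := by
    intro k; simpa using Finset.ext_iff.1 e1 k
  have m2 : ∀ k, a ≤ k → (k ∈ C ↔ k - a < (C.filter (a ≤ ·)).card) := by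
    intro k hk
    rw [← Finset.mem_range, ← e2, Finset.mem_image]
    constructor
    · intro h; exact ⟨k, by simp [h, hk], rfl⟩
    · rintro ⟨u, hu, huk⟩
      rw [Finset.mem_filter] at hu
      have : u = k := by omega
      rw [← this]; exact hu.1
  have hpa : p ≤ a := by
    by_contra hc
    have := (m1 a).2 (by omega)
    omega
  refine ⟨p, hpa, by omega, ?_⟩
  ext i
  rw [← memC]
  simp only [twoSet, Finset.mem_filter, Finset.mem_univ, true_and]
  have a1 := m1 i
  have a2 := m2 i
  by_cases h : (i:ℕ) < a
  · constructor
    · intro hi; left; exact a1.1 ⟨hi, h⟩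
    · intro hi; exact (a1.2 (by omega)).1
  · rw [a2 (by omega)]
    omega

lemma pieri_two {R : Type*} [CommRing R] {r : ℕ} (y : Fin r → R) (a b : ℕ) (hr : a + b ≤ r) :
    Es y Finset.univ b * alt y (gam r a 0) =
      ∑ p ∈ Finset.range (min a b + 1), alt y (gam r (a + b - p) p) := by
  rw [Es_mul_alt]
  symm
  apply Finset.sum_of_injOn (twoSet r a b)
  · intro p hp q hq h
    simp only [Finset.coe_range, Set.mem_Iio] at hp hq
    have := congrArg (Finset.map Fin.valEmbedding) h
    rw [twoSet_map _ _ _ _ (by omega) (by omega) hr, twoSet_map _ _ _ _ (by omega) (by omega) hr] at this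
    have k1 := Finset.ext_iff.1 this p
    have k2 := Finset.ext_iff.1 this q
    simp at k1 k2
    omega
  · intro p hp
    simp only [Finset.coe_range, Set.mem_Iio] at hp
    simp [Finset.mem_powersetCard, twoSet_card r a b p (by omega) (by omega) hr]
  · intro B hB hB'
    apply alt_not_inj
    intro hinj
    rw [Finset.mem_powersetCard] at hB
    obtain ⟨p, h1, h2, rfl⟩ := survivor r a b B hB.2 hinj
    apply hB'
    exact ⟨p, by simp; omega, rfl⟩
  · intro p hp
    rw [Finset.mem_range] at hp
    congr 1
    funext i
    simp only [gam, twoSet, Finset.mem_filter, Finset.mem_univ, true_and]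
    split_ifs <;> omega

lemma Es_zero {R ι : Type*} [CommRing R] (y : ι → R) (s : Finset ι) : Es y s 0 = 1 := by
  simp [Es]

lemma sum_pc_insert {R ι : Type*} [CommRing R] (F : Finset ι → R) (s : Finset ι) (c : ι)
    (hc : c ∉ s) (k : ℕ) :
    ∑ A ∈ (insert c s).powersetCard (k+1), F A =
      ∑ A ∈ s.powersetCard (k+1), F A + ∑ A ∈ s.powersetCard k, F (insert c A) := by
  rw [Finset.powersetCard_succ_insert hc, Finset.sum_union, Finset.sum_image]
  · intro A hA B hB h
    have hA' := (Finset.mem_powersetCard.1 hA).1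
    have hB' := (Finset.mem_powersetCard.1 hB).1
    have h1 : c ∉ A := fun h => hc (hA' h)
    have h2 : c ∉ B := fun h => hc (hB' h)
    rw [← Finset.erase_insert h1, h, Finset.erase_insert h2]
  · rw [Finset.disjoint_left]
    intro A hA hB
    obtain ⟨B, _, rfl⟩ := Finset.mem_image.1 hB
    exact hc ((Finset.mem_powersetCard.1 hA).1 (Finset.mem_insert_self _ _))

lemma Es_insert {R ι : Type*} [CommRing R] (y : ι → R) (s : Finset ι) (c : ι)
    (hc : c ∉ s) (k : ℕ) : Es y (insert c s) (k+1) = Es y s (k+1) + y c * Es y s k := by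
  unfold Es
  rw [sum_pc_insert _ s c hc, Finset.mul_sum]
  congr 1
  refine Finset.sum_congr rfl fun A hA => ?_
  rw [Finset.prod_insert (fun h => hc ((Finset.mem_powersetCard.1 hA).1 h))]

noncomputable def Ez {R ι : Type*} [CommRing R] (y : ι → R) (s : Finset ι) (k : ℤ) : R :=
  if 0 ≤ k then Es y s k.toNat else 0

lemma Ez_nat {R ι : Type*} [CommRing R] (y : ι → R) (s : Finset ι) (k : ℕ) :
    Ez y s (k : ℤ) = Es y s k := by simp [Ez]

lemma Ez_neg {R ι : Type*} [CommRing R] (y : ι → R) (s : Finset ι) (k : ℤ) (h : k < 0) :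
    Ez y s k = 0 := by simp [Ez, h]

lemma Ez_insert {R ι : Type*} [CommRing R] (y : ι → R) (s : Finset ι) (c : ι)
    (hc : c ∉ s) (k : ℤ) : Ez y (insert c s) k = Ez y s k + y c * Ez y s (k-1) := by
  rcases lt_or_ge k 0 with h | h
  · rw [Ez_neg _ _ _ h, Ez_neg _ _ _ h, Ez_neg _ _ _ (by omega)]; simp
  · obtain ⟨n, rfl⟩ := Int.eq_ofNat_of_zero_le h
    cases n with
    | zero =>
      rw [Ez_neg y s (((0:ℕ):ℤ)-1) (by simp), Ez_nat, Ez_nat, Es_zero, Es_zero]; simp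
    | succ n =>
      rw [show (((n+1 : ℕ) : ℤ) - 1) = (n : ℤ) by push_cast; ring, Ez_nat, Ez_nat, Ez_nat,
        Es_insert _ _ _ hc]

noncomputable def SS {R ι : Type*} [CommRing R] (y : ι → R) (s : Finset ι) (a b : ℤ) : R :=
  Ez y s a * Ez y s b - Ez y s (a+1) * Ez y s (b-1)

lemma SS_insert {R ι : Type*} [CommRing R] (y : ι → R) (s : Finset ι) (c : ι)
    (hc : c ∉ s) (a b : ℤ) : SS y (insert c s) a b = SS y s a b
      + y c * (SS y s (a-1) b + SS y s a (b-1)) + y c ^ 2 * SS y s (a-1) (b-1) := by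
  simp only [SS, Ez_insert y s c hc, add_sub_cancel_right, sub_add_cancel]
  ring

lemma SS_neg {R ι : Type*} [CommRing R] (y : ι → R) (s : Finset ι) (a b : ℤ) (h : b < 0) :
    SS y s a b = 0 := by
  rw [SS, Ez_neg _ _ b h, Ez_neg _ _ (b-1) (by omega)]; simp

lemma SS_diag {R ι : Type*} [CommRing R] (y : ι → R) (s : Finset ι) (b : ℤ) :
    SS y s (b-1) b = 0 := by
  rw [SS, sub_add_cancel]; ring

/-- The monomial symmetric function `m_{2^k 1^l}` written in two-column Schur functions. -/
noncomputable def Mf {R ι : Type*} [CommRing R] (y : ι → R) (s : Finset ι) (K : ℕ) (k : ℤ) (l : ℕ) : R :=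
  ∑ p ∈ Finset.range K, (-1)^p * ((l+p).choose l : R) * SS y s (k+l+p) (k-p)

lemma tele1 {R : Type*} [CommRing R] (f : ℕ → R) (l K : ℕ) :
    ∑ p ∈ Finset.range K, (-1)^p * ((l+1+p).choose (l+1) : R) * (f p + f (p+1)) =
    ∑ p ∈ Finset.range K, (-1)^p * ((l+p).choose l : R) * f p
      - (-1)^K * ((l+K).choose (l+1) : R) * f K := by
  induction K with
  | zero => simp
  | succ K ih =>
    rw [Finset.sum_range_succ, ih, Finset.sum_range_succ]
    have h1 : ((l+1+K).choose (l+1) : R) = ((l+K).choose l : R) + ((l+K).choose (l+1) : R) := by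
      rw [show l+1+K = l+K+1 by ring, Nat.choose_succ_succ]; push_cast; ring
    rw [show l + (K+1) = l+1+K by ring, h1]; ring

lemma tele0 {R : Type*} [CommRing R] (f : ℕ → R) (K : ℕ) :
    ∑ p ∈ Finset.range K, (-1)^p * (f p + f (p+1)) = f 0 - (-1)^K * f K := by
  induction K with
  | zero => simp
  | succ K ih => rw [Finset.sum_range_succ, ih]; ring

lemma Mf_insert_succ {R ι : Type*} [CommRing R] (y : ι → R) (s : Finset ι) (c : ι)
    (hc : c ∉ s) (K : ℕ) (k : ℤ) (hk : k < K) (l : ℕ) :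
    Mf y (insert c s) K k (l+1) = Mf y s K k (l+1) + y c * Mf y s K k l
      + y c ^ 2 * Mf y s K (k-1) (l+1) := by
  have h := tele1 (fun p : ℕ => SS y s (k+l+p) (k-p)) l K
  rw [SS_neg y s _ _ (by omega)] at h
  simp only [mul_zero, sub_zero] at h
  unfold Mf
  rw [← h, Finset.mul_sum, Finset.mul_sum, ← Finset.sum_add_distrib, ← Finset.sum_add_distrib]
  refine Finset.sum_congr rfl fun p _ => ?_
  rw [SS_insert y s c hc]
  rw [show k + ((l+1:ℕ):ℤ) + p - 1 = k + l + p by push_cast; ring,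
    show k + (l:ℤ) + ((p+1:ℕ):ℤ) = k + ((l+1:ℕ):ℤ) + p by push_cast; ring,
    show k - ((p+1:ℕ):ℤ) = k - p - 1 by push_cast; ring,
    show k - 1 + ((l+1:ℕ):ℤ) + p = k + l + p by push_cast; ring,
    show k - 1 - (p:ℤ) = k - p - 1 by ring]
  ring

lemma Mf_insert_zero {R ι : Type*} [CommRing R] (y : ι → R) (s : Finset ι) (c : ι)
    (hc : c ∉ s) (K : ℕ) (k : ℤ) (hk : k < K) :
    Mf y (insert c s) K k 0 = Mf y s K k 0 + y c ^ 2 * Mf y s K (k-1) 0 := by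
  have h := tele0 (fun p : ℕ => SS y s (k+p-1) (k-p)) K
  rw [SS_neg y s _ (k-(K:ℤ)) (by omega)] at h
  simp only [mul_zero, sub_zero, Nat.cast_zero, add_zero, SS_diag] at h
  have h' : Mf y s K k 0 + y c ^ 2 * Mf y s K (k-1) 0 = Mf y s K k 0 + y c * 0
    + y c ^ 2 * Mf y s K (k-1) 0 := by ring
  rw [h', ← h]
  unfold Mf
  rw [Finset.mul_sum, Finset.mul_sum, ← Finset.sum_add_distrib, ← Finset.sum_add_distrib]
  refine Finset.sum_congr rfl fun p _ => ?_
  rw [SS_insert y s c hc]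
  simp only [Nat.cast_zero, add_zero, Nat.choose_zero_right, Nat.cast_one]
  rw [show k + ((p+1:ℕ):ℤ) - 1 = k + p by push_cast; ring,
    show k - ((p+1:ℕ):ℤ) = k - p - 1 by push_cast; ring,
    show k - 1 + (p:ℤ) = k + p - 1 by ring,
    show k - 1 - (p:ℤ) = k - p - 1 by ring]
  ring

lemma Mf_neg {R ι : Type*} [CommRing R] (y : ι → R) (s : Finset ι) (K : ℕ) (k : ℤ) (hk : k < 0)
    (l : ℕ) : Mf y s K k l = 0 := by
  unfold Mf
  refine Finset.sum_eq_zero fun p _ => ?_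
  rw [SS_neg _ _ _ _ (by omega)]; simp

lemma Ez_empty {R ι : Type*} [CommRing R] (y : ι → R) (k : ℤ) :
    Ez y ∅ k = if k = 0 then 1 else 0 := by
  rcases lt_trichotomy k 0 with h | h | h
  · rw [Ez_neg _ _ _ h, if_neg (by omega)]
  · subst h; rw [show (0:ℤ) = ((0:ℕ):ℤ) by rfl, Ez_nat, Es_zero]; simp
  · obtain ⟨n, rfl⟩ := Int.eq_ofNat_of_zero_le h.le
    rw [Ez_nat, if_neg (by omega), Es, Finset.powersetCard_eq_empty.2]
    · simp
    · simp at h ⊢; omega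

lemma Mf_empty {R ι : Type*} [CommRing R] (y : ι → R) (K k l : ℕ) (hK : 0 < K) :
    Mf y ∅ K (k:ℤ) l = if k = 0 ∧ l = 0 then 1 else 0 := by
  unfold Mf
  split_ifs with h
  · obtain ⟨rfl, rfl⟩ := h
    rw [Finset.sum_eq_single 0]
    · simp [SS, Ez_empty]
    · intro p _ hp
      rw [SS_neg _ _ _ _ (by omega)]; simp
    · intro h; simp at h; omega
  · refine Finset.sum_eq_zero fun p _ => ?_
    have : SS y ∅ ((k:ℤ) + l + p) (k - p) = 0 := by
      have h1 : ¬((k:ℤ)+l+p=0) := by omega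
      have h2 : ¬((k:ℤ)+l+p+1=0) := by omega
      simp [SS, Ez_empty, h1, h2]
    rw [this]; simp

noncomputable def Ns {R ι : Type*} [CommRing R] (u v : ι → R) (s : Finset ι) (a b : ℕ) : R :=
  ∑ A ∈ s.powersetCard a, (∏ i ∈ A, u i) * Es v (s \ A) b

lemma Ns_zero {R ι : Type*} [CommRing R] (u v : ι → R) (s : Finset ι) (b : ℕ) :
    Ns u v s 0 b = Es v s b := by simp [Ns]

lemma Ns_insert_aux {R ι : Type*} [CommRing R] (u v : ι → R) (s : Finset ι) (c : ι)
    (hc : c ∉ s) (a b : ℕ) :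
    Ns u v (insert c s) (a+1) b =
      ∑ A ∈ s.powersetCard (a+1), (∏ i ∈ A, u i) * Es v (insert c (s \ A)) b + u c * Ns u v s a b := by
  unfold Ns
  rw [sum_pc_insert _ s c hc, Finset.mul_sum]
  congr 1
  · refine Finset.sum_congr rfl fun A hA => ?_
    rw [Finset.insert_sdiff_of_notMem _ (fun h => hc ((Finset.mem_powersetCard.1 hA).1 h))]
  · refine Finset.sum_congr rfl fun A hA => ?_
    have h1 : c ∉ A := fun h => hc ((Finset.mem_powersetCard.1 hA).1 h)
    rw [Finset.prod_insert h1, Finset.insert_sdiff_insert, Finset.sdiff_insert_of_notMem hc]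
    ring

lemma Ns_insert_zero {R ι : Type*} [CommRing R] (u v : ι → R) (s : Finset ι) (c : ι)
    (hc : c ∉ s) (a : ℕ) :
    Ns u v (insert c s) (a+1) 0 = Ns u v s (a+1) 0 + u c * Ns u v s a 0 := by
  rw [Ns_insert_aux _ _ _ _ hc]
  simp [Ns, Es_zero]

lemma Ns_insert_succ {R ι : Type*} [CommRing R] (u v : ι → R) (s : Finset ι) (c : ι)
    (hc : c ∉ s) (a b : ℕ) :
    Ns u v (insert c s) (a+1) (b+1) = Ns u v s (a+1) (b+1) + v c * Ns u v s (a+1) b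
      + u c * Ns u v s a (b+1) := by
  rw [Ns_insert_aux _ _ _ _ hc]
  congr 1
  unfold Ns
  rw [Finset.mul_sum, ← Finset.sum_add_distrib]
  refine Finset.sum_congr rfl fun A hA => ?_
  rw [Es_insert _ _ _ (by simp [hc])]; ring

noncomputable def Nf {R ι : Type*} [CommRing R] (P : R) (y : ι → R) (s : Finset ι) (K a b : ℕ) : R :=
  ∑ k ∈ Finset.range (a+1), (-1)^k * ((a+b-k).choose b : R) * P^(a-k) * Mf y s K (k:ℤ) (a+b-k)

lemma Ns_formula {R ι : Type*} [CommRing R] (P : R) (y : ι → R) (K : ℕ) (s : Finset ι) :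
    ∀ a b : ℕ, a < K → Ns (fun i => P * y i - y i ^ 2) y s a b = Nf P y s K a b := by
  induction s using Finset.induction_on with
  | empty =>
    intro a b hK
    unfold Nf
    have hM : ∀ k ∈ Finset.range (a+1), (-1)^k * ((a+b-k).choose b : R) * P^(a-k) *
        Mf y (∅ : Finset ι) K (k:ℤ) (a+b-k) = if k = 0 then (if a + b = 0 then 1 else 0) else 0 := by
      intro k hk
      rw [Mf_empty y K k _ (by omega)]
      by_cases h : k = 0
      · subst h
        by_cases h' : a + b = 0
        · obtain ⟨rfl, rfl⟩ : a = 0 ∧ b = 0 := by omega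
          simp
        · rw [if_neg (by omega), if_pos rfl, if_neg h']; simp
      · rw [if_neg (by omega), if_neg h]; simp
    rw [Finset.sum_congr rfl hM]
    simp only [Finset.sum_ite_eq', Finset.mem_range, Nat.succ_pos, if_true]
    cases a with
    | zero =>
      rw [Ns_zero]
      cases b with
      | zero => simp [Es_zero]
      | succ b => rw [Es, Finset.powersetCard_eq_empty.2 (by simp)]; simp
    | succ a => rw [Ns, Finset.powersetCard_eq_empty.2 (by simp)]; simp
  | insert c s hc ih =>
    intro a b hK
    cases a with
    | zero =>
      rw [Ns_zero]
      have h0 : ∀ b s, Nf P y s K 0 b = Mf y s K 0 b := by intro b s; simp [Nf]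
      rw [h0]
      cases b with
      | zero =>
        rw [Mf_insert_zero y s c hc K 0 (by omega), Mf_neg y s K (0-1) (by omega), Es_zero,
          ← h0, ← ih 0 0 hK, Ns_zero, Es_zero]; simp
      | succ b =>
        rw [Mf_insert_succ y s c hc K 0 (by omega), Mf_neg y s K (0-1) (by omega), Es_insert _ _ _ hc,
          ← h0, ← h0, ← ih 0 (b+1) hK, ← ih 0 b hK, Ns_zero, Ns_zero]; simp
    | succ a =>
      -- the quadratic part is common to both cases
      have hquad : ∀ b : ℕ, ∑ k ∈ Finset.range (a+1+1), (-1)^k * ((a+1+b-k).choose b : R) * P^(a+1-k) *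
          Mf y s K ((k:ℤ)-1) (a+1+b-k) = - Nf P y s K a b := by
        intro b
        rw [Finset.sum_range_succ', Nf, ← Finset.sum_neg_distrib,
          Mf_neg y s K (((0:ℕ):ℤ)-1) (by simp)]
        simp only [mul_zero, add_zero]
        refine Finset.sum_congr rfl fun k hk => ?_
        rw [show a + 1 + b - (k+1) = a + b - k by omega, show a + 1 - (k+1) = a - k by omega,
          show ((k+1:ℕ):ℤ) - 1 = k by push_cast; ring]
        ring
      cases b with
      | zero =>
        rw [Ns_insert_zero _ _ _ _ hc, ih _ _ hK, ih _ _ (by omega)]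
        have hq := hquad 0
        have : Nf P y (insert c s) K (a+1) 0 = Nf P y s K (a+1) 0 + y c * (P * Nf P y s K a 0)
            + y c ^ 2 * ∑ k ∈ Finset.range (a+1+1), (-1)^k * ((a+1+0-k).choose 0 : R) * P^(a+1-k) *
              Mf y s K ((k:ℤ)-1) (a+1+0-k) := by
          unfold Nf
          rw [Finset.sum_range_succ _ (a+1), Finset.sum_range_succ _ (a+1), Finset.sum_range_succ _ (a+1)]
          simp only [Finset.mul_sum, mul_add]
          have e : ∀ k ∈ Finset.range (a+1), (-1)^k * ((a+1+0-k).choose 0 : R) * P^(a+1-k) *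
              Mf y (insert c s) K (k:ℤ) (a+1+0-k) =
              (-1)^k * ((a+1+0-k).choose 0 : R) * P^(a+1-k) * Mf y s K (k:ℤ) (a+1+0-k)
              + y c * (P * ((-1)^k * ((a+0-k).choose 0 : R) * P^(a-k) * Mf y s K (k:ℤ) (a+0-k)))
              + y c ^ 2 * ((-1)^k * ((a+1+0-k).choose 0 : R) * P^(a+1-k) *
              Mf y s K ((k:ℤ)-1) (a+1+0-k)) := by
            intro k hk
            rw [Finset.mem_range] at hk
            have e1 : a + 1 - k = (a - k) + 1 := by omega
            simp only [add_zero, e1]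
            rw [Mf_insert_succ y s c hc K k (by omega)]
            simp only [Nat.choose_zero_right]
            ring
          rw [Finset.sum_congr rfl e, Finset.sum_add_distrib, Finset.sum_add_distrib]
          rw [show a + 1 + 0 - (a+1) = 0 by omega, Mf_insert_zero y s c hc K _ (by omega)]
          ring
        rw [this, hq]; ring
      | succ b =>
        rw [Ns_insert_succ _ _ _ _ hc, ih _ _ hK, ih _ _ hK, ih _ _ (by omega)]
        have hq := hquad (b+1)
        have : Nf P y (insert c s) K (a+1) (b+1) = Nf P y s K (a+1) (b+1)
            + y c * (Nf P y s K (a+1) b + P * Nf P y s K a (b+1))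
            + y c ^ 2 * ∑ k ∈ Finset.range (a+1+1), (-1)^k * ((a+1+(b+1)-k).choose (b+1) : R) * P^(a+1-k) *
              Mf y s K ((k:ℤ)-1) (a+1+(b+1)-k) := by
          have hext : P * Nf P y s K a (b+1) = ∑ k ∈ Finset.range (a+1+1),
              (-1)^k * ((a+1+b-k).choose (b+1) : R) * P^(a+1-k) * Mf y s K (k:ℤ) (a+1+b-k) := by
            rw [Finset.sum_range_succ, show a + 1 + b - (a+1) = b by omega, Nat.choose_succ_self]
            simp only [Nat.cast_zero, mul_zero, zero_mul, add_zero]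
            rw [Nf, Finset.mul_sum]
            refine Finset.sum_congr rfl fun k hk => ?_
            rw [Finset.mem_range] at hk
            rw [show a + (b+1) - k = a + 1 + b - k by omega, show a + 1 - k = (a - k) + 1 by omega]
            ring
          rw [hext]
          unfold Nf
          rw [← Finset.sum_add_distrib, Finset.mul_sum, Finset.mul_sum, ← Finset.sum_add_distrib,
            ← Finset.sum_add_distrib]
          refine Finset.sum_congr rfl fun k hk => ?_
          rw [Finset.mem_range] at hk
          rw [show a + 1 + (b+1) - k = (a + 1 + b - k) + 1 by omega,
              Mf_insert_succ y s c hc K k (by omega), Nat.choose_succ_succ]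
          push_cast
          ring
        rw [this, hq]; ring

lemma inj_sum {R ι : Type*} [CommRing R] (s : Finset ι) (a : ℕ) (F : Finset ι → R) :
    ∑ g ∈ (Fintype.piFinset (fun _ : Fin a => s)).filter Function.Injective, F (Finset.univ.image g)
      = (a.factorial : R) * ∑ A ∈ s.powersetCard a, F A := by
  have hmap : ∀ g ∈ (Fintype.piFinset (fun _ : Fin a => s)).filter Function.Injective,
      Finset.univ.image g ∈ s.powersetCard a := by
    intro g hg
    rw [Finset.mem_filter, Fintype.mem_piFinset] at hg
    rw [Finset.mem_powersetCard]
    refine ⟨?_, ?_⟩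
    · intro c hc
      obtain ⟨i, _, rfl⟩ := Finset.mem_image.1 hc
      exact hg.1 i
    · rw [Finset.card_image_of_injective _ hg.2]; simp
  rw [← Finset.sum_fiberwise_of_maps_to hmap, Finset.mul_sum]
  refine Finset.sum_congr rfl fun A hA => ?_
  rw [Finset.mem_powersetCard] at hA
  rw [Finset.sum_congr rfl (g := fun _ => F A)
    (fun g hg => by rw [(Finset.mem_filter.1 hg).2]), Finset.sum_const, nsmul_eq_mul]
  congr 2
  have hc : (Finset.univ : Finset (Fin a ≃ A)).card = a.factorial := by
    rw [Finset.card_univ, Fintype.card_equiv (Fintype.equivOfCardEq (by simp [hA.2]))]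
    simp
  rw [← hc]
  symm
  refine Finset.card_bij (fun e _ => fun i => ((e i : A) : ι)) ?_ ?_ ?_
  · intro e _
    simp only [Finset.mem_filter, Fintype.mem_piFinset]
    refine ⟨⟨fun i => hA.1 (e i).2, ?_⟩, ?_⟩
    · exact Subtype.val_injective.comp e.injective
    · ext c
      simp only [Finset.mem_image, Finset.mem_univ, true_and]
      constructor
      · rintro ⟨i, rfl⟩; exact (e i).2
      · intro hc; exact ⟨e.symm ⟨c, hc⟩, by simp⟩
  · intro e _ e' _ h
    ext i
    exact congrFun h i
  · intro g hg
    simp only [Finset.mem_filter, Fintype.mem_piFinset] at hg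
    have hm : ∀ i, g i ∈ A := fun i => by rw [← hg.2]; exact Finset.mem_image_of_mem _ (Finset.mem_univ _)
    refine ⟨Equiv.ofBijective (fun i => (⟨g i, hm i⟩ : A)) ⟨?_, ?_⟩, Finset.mem_univ _, ?_⟩
    · intro i j h; exact hg.1.2 (congrArg Subtype.val h)
    · rintro ⟨c, hc⟩
      have := hc
      rw [← hg.2] at this
      obtain ⟨i, _, rfl⟩ := Finset.mem_image.1 this
      exact ⟨i, rfl⟩
    · rfl

lemma inj_split_sum {R ι : Type*} [CommRing R] (u v : ι → R) (s : Finset ι) (m b : ℕ) :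
    ∑ g ∈ (Fintype.piFinset (fun _ : Fin (m+b) => s)).filter Function.Injective,
      (∏ i : Fin m, u (g (Fin.castAdd b i))) * ∏ i : Fin b, v (g (Fin.natAdd m i))
      = (m.factorial : R) * b.factorial * Ns u v s m b := by
  have h1 : ∑ g ∈ (Fintype.piFinset (fun _ : Fin (m+b) => s)).filter Function.Injective,
      (∏ i : Fin m, u (g (Fin.castAdd b i))) * ∏ i : Fin b, v (g (Fin.natAdd m i)) =
      ∑ g₁ ∈ (Fintype.piFinset (fun _ : Fin m => s)).filter Function.Injective,
      ∑ g₂ ∈ (Fintype.piFinset (fun _ : Fin b => s \ Finset.univ.image g₁)).filter Function.Injective,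
        (∏ i : Fin m, u (g₁ i)) * ∏ i : Fin b, v (g₂ i) := by
    rw [Finset.sum_sigma']
    refine Finset.sum_nbij' (fun g => ⟨fun i => g (Fin.castAdd b i), fun i => g (Fin.natAdd m i)⟩)
      (fun p => Fin.append p.1 p.2) ?_ ?_ ?_ ?_ ?_
    · intro g hg
      simp only [Finset.mem_filter, Fintype.mem_piFinset] at hg
      simp only [Finset.mem_sigma, Finset.mem_filter, Fintype.mem_piFinset, Finset.mem_sdiff,
        Finset.mem_image, Finset.mem_univ, true_and, not_exists]
      refine ⟨⟨fun i => hg.1 _, ?_⟩, fun i => ⟨hg.1 _, ?_⟩, ?_⟩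
      · exact hg.2.comp (Fin.castAdd_injective m b)
      · intro j h
        have := congrArg Fin.val (hg.2 h)
        simp at this
        omega
      · exact hg.2.comp (Fin.natAdd_injective b m)
    · rintro ⟨g₁, g₂⟩ hg
      simp only [Finset.mem_sigma, Finset.mem_filter, Fintype.mem_piFinset, Finset.mem_sdiff,
        Finset.mem_image, Finset.mem_univ, true_and, not_exists] at hg
      simp only [Finset.mem_filter, Fintype.mem_piFinset]
      refine ⟨?_, ?_⟩
      · intro i
        refine Fin.addCases (fun i => ?_) (fun i => ?_) i
        · rw [Fin.append_left]; exact hg.1.1 i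
        · rw [Fin.append_right]; exact (hg.2.1 i).1
      · rw [Fin.append_injective_iff]
        refine ⟨hg.1.2, hg.2.2, fun i j h => (hg.2.1 j).2 i h⟩
    · intro g _
      exact Fin.append_castAdd_natAdd
    · rintro ⟨g₁, g₂⟩ _
      simp
    · intro g _
      rfl
  rw [h1]
  have h2 : ∀ g₁ ∈ (Fintype.piFinset (fun _ : Fin m => s)).filter Function.Injective,
      ∑ g₂ ∈ (Fintype.piFinset (fun _ : Fin b => s \ Finset.univ.image g₁)).filter Function.Injective,
        (∏ i : Fin m, u (g₁ i)) * ∏ i : Fin b, v (g₂ i) =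
      (fun A : Finset ι => (∏ i ∈ A, u i) * (b.factorial * Es v (s \ A) b)) (Finset.univ.image g₁) := by
    intro g₁ hg
    have hinj := (Finset.mem_filter.1 hg).2
    simp only
    rw [Finset.prod_image (fun i _ j _ h => hinj h), ← Finset.mul_sum]
    congr 1
    rw [Es, ← inj_sum (s \ Finset.univ.image g₁) b (fun A => ∏ i ∈ A, v i)]
    refine Finset.sum_congr rfl fun g₂ hg₂ => ?_
    rw [Finset.prod_image (fun i _ j _ h => (Finset.mem_filter.1 hg₂).2 h)]
  rw [Finset.sum_congr rfl h2, inj_sum s m (fun A : Finset ι => (∏ i ∈ A, u i) * (b.factorial * Es v (s \ A) b)), Ns, mul_assoc]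
  congr 1
  rw [Finset.mul_sum]
  exact Finset.sum_congr rfl fun A _ => by ring

lemma genNet_proper_iff (m b : ℕ) (f : Fin (m+b) ⊕ Fin m → ℕ) :
    IsProperColoring (genNet (m+b) m) f ↔ (∀ v, 0 < f v) ∧
      Function.Injective (fun i => f (Sum.inl i)) ∧
      ∀ j : Fin m, f (Sum.inr j) ≠ f (Sum.inl (Fin.castAdd b j)) := by
  unfold IsProperColoring genNet
  constructor
  · rintro ⟨h0, h⟩
    refine ⟨h0, ?_, ?_⟩
    · intro i j hij
      by_contra hne
      exact h (Sum.inl i) (Sum.inl j) (by simp [hne]) hij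
    · intro j hj
      exact h (Sum.inl (Fin.castAdd b j)) (Sum.inr j) (by simp) hj.symm
  · rintro ⟨h0, h1, h2⟩
    refine ⟨h0, ?_⟩
    rintro (i | i) (j | j) hadj
    · intro h
      have := h1 h
      subst this
      simp at hadj
    · simp at hadj
      have : i = Fin.castAdd b j := Fin.ext (by simpa using hadj)
      subst this
      exact (h2 j).symm
    · simp at hadj
      have : j = Fin.castAdd b i := Fin.ext (by simpa using hadj)
      subst this
      exact h2 i
    · simp at hadj

lemma Xpoly_eq {R : Type*} [CommRing R] (x : ℕ → R) (s : Finset ℕ) (hs : ∀ c ∈ s, 0 < c) (m b : ℕ) :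
    ∑ f ∈ (Fintype.piFinset (fun _ : Fin (m+b) ⊕ Fin m => s)).filter
      (IsProperColoring (genNet (m+b) m)), ∏ v, x (f v)
      = (m.factorial : R) * b.factorial *
        Ns (fun i => (∑ c ∈ s, x c) * x i - x i ^ 2) x s m b := by
  rw [← inj_split_sum]
  have h1 : ∑ f ∈ (Fintype.piFinset (fun _ : Fin (m+b) ⊕ Fin m => s)).filter
      (IsProperColoring (genNet (m+b) m)), ∏ v, x (f v) =
      ∑ g ∈ (Fintype.piFinset (fun _ : Fin (m+b) => s)).filter Function.Injective,
      ∑ h ∈ Fintype.piFinset (fun j : Fin m => s.erase (g (Fin.castAdd b j))),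
        (∏ i, x (g i)) * ∏ j, x (h j) := by
    rw [Finset.sum_sigma']
    refine Finset.sum_nbij' (fun f => ⟨fun i => f (Sum.inl i), fun i => f (Sum.inr i)⟩)
      (fun p => Sum.elim p.1 p.2) ?_ ?_ ?_ ?_ ?_
    · intro f hf
      simp only [Finset.mem_filter, Fintype.mem_piFinset, genNet_proper_iff] at hf
      simp only [Finset.mem_sigma, Finset.mem_filter, Fintype.mem_piFinset, Finset.mem_erase]
      exact ⟨⟨fun i => hf.1 _, hf.2.2.1⟩, fun j => ⟨hf.2.2.2 j, hf.1 _⟩⟩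
    · rintro ⟨g, h⟩ hg
      simp only [Finset.mem_sigma, Finset.mem_filter, Fintype.mem_piFinset, Finset.mem_erase] at hg
      simp only [Finset.mem_filter, Fintype.mem_piFinset, genNet_proper_iff]
      refine ⟨?_, ?_, hg.1.2, fun j => (hg.2 j).1⟩
      · rintro (i | i)
        · exact hg.1.1 i
        · exact (hg.2 i).2
      · rintro (i | i)
        · exact hs _ (hg.1.1 i)
        · exact hs _ (hg.2 i).2
    · intro f _
      funext v
      rcases v with i | i <;> rfl
    · rintro ⟨g, h⟩ _
      rfl
    · intro f _
      rw [Fintype.prod_sum_type]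
  rw [h1]
  refine Finset.sum_congr (by ext; simp) fun g hg => ?_
  simp only [Finset.mem_filter, Fintype.mem_piFinset] at hg
  rw [← Finset.mul_sum, ← Finset.prod_univ_sum (fun j : Fin m => s.erase (g (Fin.castAdd b j))) (fun _ c => x c),
    Fin.prod_univ_add, mul_right_comm, ← Finset.prod_mul_distrib]
  congr 1
  refine Finset.prod_congr rfl fun j _ => ?_
  rw [← Finset.add_sum_erase s x (hg.1 (Fin.castAdd b j))]
  ring

/-- The cone spanned by alternants with strictly decreasing exponents. -/
noncomputable def Cone {R : Type*} [CommRing R] {r : ℕ} (y : Fin r → R) : AddSubmonoid R :=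
  AddSubmonoid.closure (alt y '' {α | StrictAnti α})

lemma alt_mem_Cone {R : Type*} [CommRing R] {r : ℕ} (y : Fin r → R) (α : Fin r → ℕ)
    (h : StrictAnti α) : alt y α ∈ Cone y :=
  AddSubmonoid.subset_closure ⟨α, h, rfl⟩

lemma alt_add_mem_Cone {R : Type*} [CommRing R] {r : ℕ} (y : Fin r → R) (α : Fin r → ℕ)
    (h : StrictAnti α) (k : Fin r) : alt y (fun i => α i + if i = k then 1 else 0) ∈ Cone y := by
  by_cases hi : Function.Injective (fun i => α i + if i = k then 1 else 0)
  · apply alt_mem_Cone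
    intro i j hij
    have h1 := h hij
    have h2 : ¬ (α i + (if i = k then 1 else 0) = α j + (if j = k then 1 else 0)) :=
      fun e => hij.ne (hi e)
    show α j + (if j = k then 1 else 0) < α i + (if i = k then 1 else 0)
    split_ifs at h2 ⊢ <;> omega
  · rw [alt_not_inj _ _ hi]; exact zero_mem _

lemma sum_mul_mem_Cone {R : Type*} [CommRing R] {r : ℕ} (y : Fin r → R) (z : R)
    (h : z ∈ Cone y) : (∑ i, y i) * z ∈ Cone y := by
  unfold Cone at h
  induction h using AddSubmonoid.closure_induction with
  | mem z hz =>
    obtain ⟨α, hα, rfl⟩ := hz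
    rw [sum_mul_alt]
    exact sum_mem fun k _ => alt_add_mem_Cone y α hα k
  | zero => rw [mul_zero]; exact zero_mem _
  | add a b _ _ ha hb => rw [mul_add]; exact add_mem ha hb

lemma pow_mul_mem_Cone {R : Type*} [CommRing R] {r : ℕ} (y : Fin r → R) (z : R)
    (h : z ∈ Cone y) (k : ℕ) : (∑ i, y i) ^ k * z ∈ Cone y := by
  induction k with
  | zero => simpa using h
  | succ k ih => rw [pow_succ', mul_assoc]; exact sum_mul_mem_Cone y _ ih

lemma nat_mul_mem_Cone {R : Type*} [CommRing R] {r : ℕ} (y : Fin r → R) (z : R)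
    (h : z ∈ Cone y) (k : ℕ) : (k : R) * z ∈ Cone y := by
  rw [← nsmul_eq_mul]; exact nsmul_mem h k

lemma gam_strictAnti (r c₁ c₂ : ℕ) : StrictAnti (gam r c₁ c₂) := by
  intro i j hij
  have : (i:ℕ) < j := hij
  have := j.2
  unfold gam
  split_ifs <;> omega

lemma Es_mul_vdm {R : Type*} [CommRing R] {r : ℕ} (y : Fin r → R) (a : ℕ) (ha : a ≤ r) :
    Es y Finset.univ a * alt y (gam r 0 0) = alt y (gam r a 0) := by
  rw [pieri_two y 0 a (by omega)]; simp

lemma SS_mul_vdm {R : Type*} [CommRing R] {r : ℕ} (y : Fin r → R) (a c : ℕ) (hc : c ≤ a)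
    (hr : a + c ≤ r) :
    SS y Finset.univ (a:ℤ) (c:ℤ) * alt y (gam r 0 0) = alt y (gam r a c) := by
  cases c with
  | zero =>
    rw [SS, Ez_neg y _ (((0:ℕ):ℤ)-1) (by simp), Ez_nat, Ez_nat, Es_zero, mul_one, mul_zero, sub_zero,
      Es_mul_vdm y a (by omega)]
  | succ c =>
    rw [SS, show ((a:ℤ)+1) = ((a+1:ℕ):ℤ) by push_cast; ring,
      show (((c+1:ℕ):ℤ)-1) = (c:ℤ) by push_cast; ring, Ez_nat, Ez_nat, Ez_nat, Ez_nat, sub_mul,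
      mul_comm (Es y _ a), mul_comm (Es y _ (a+1)), mul_assoc, mul_assoc,
      Es_mul_vdm y a (by omega), Es_mul_vdm y (a+1) (by omega), pieri_two y a (c+1) hr,
      pieri_two y (a+1) c (by omega), min_eq_right hc, min_eq_right (by omega),
      Finset.sum_range_succ _ (c+1)]
    have : ∀ p, a + (c+1) - p = a + 1 + c - p := by intro p; omega
    simp only [this]
    rw [add_sub_cancel_left, show a + 1 + c - (c+1) = a by omega]

lemma pieri_diff {R : Type*} [CommRing R] {r : ℕ} (y : Fin r → R) (a c : ℕ)
    (hr : c < r) (hc : c < a) :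
    (∑ i, y i) * alt y (gam r a c) - alt y (gam r a (c+1)) ∈ Cone y := by
  rw [sum_mul_alt, ← Finset.add_sum_erase _ _ (Finset.mem_univ (⟨c, hr⟩ : Fin r))]
  have : (fun i => gam r a c i + if i = (⟨c, hr⟩ : Fin r) then 1 else 0) = gam r a (c+1) := by
    funext i
    simp only [gam, Fin.ext_iff]
    split_ifs <;> omega
  rw [this, add_sub_cancel_left]
  exact sum_mem fun k _ => alt_add_mem_Cone y _ (gam_strictAnti _ _ _) k

lemma alternating_mem {M : Type*} [AddCommGroup M] (C : AddSubmonoid M) (K : ℕ) :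
    ∀ g : ℕ → M, (∀ j, g j ∈ C) → (∀ j, g j - g (j+1) ∈ C) →
    ∑ j ∈ Finset.range K, (-1 : ℤ)^j • g j ∈ C := by
  induction K using Nat.strong_induction_on with
  | _ K ih =>
    intro g h0 h1
    match K, ih with
    | 0, _ => simp
    | 1, _ => simpa using h0 0
    | K+2, ih =>
      rw [Finset.sum_range_succ', Finset.sum_range_succ']
      have h := ih K (by omega) (fun j => g (j+2)) (fun j => h0 _) (fun j => h1 _)
      have e : ∀ j, (-1:ℤ)^(j+1+1) • g (j+1+1) = (-1:ℤ)^j • g (j+2) := by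
        intro j; rw [pow_succ, pow_succ]; simp
      simp only [e]
      rw [add_assoc]
      refine add_mem h ?_
      have := h1 0
      simp only [zero_add, pow_one, pow_zero, neg_smul, one_smul] at *
      rw [neg_add_eq_sub]; exact this

noncomputable def hh {R : Type*} [CommRing R] {r : ℕ} (y : Fin r → R) (n m j : ℕ) : R :=
  ∑ i ∈ Finset.range (m - j + 1), ((m-j).choose i : R) *
    ((∑ i, y i) ^ (m - j - i) * alt y (gam r (n+i) j))

lemma hh_mem {R : Type*} [CommRing R] {r : ℕ} (y : Fin r → R) (n m j : ℕ) : hh y n m j ∈ Cone y :=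
  sum_mem fun _ _ => nat_mul_mem_Cone y _ (pow_mul_mem_Cone y _ (alt_mem_Cone y _ (gam_strictAnti _ _ _)) _) _

lemma hh_diff_mem {R : Type*} [CommRing R] {r : ℕ} (y : Fin r → R) (n m j : ℕ) (hj : j < m)
    (hmn : m ≤ n) (hr : n + m ≤ r) :
    hh y n m j - hh y n m (j+1) ∈ Cone y := by
  obtain ⟨d, hd⟩ : ∃ d, m - j = d + 1 := ⟨m - j - 1, by omega⟩
  have hd' : m - (j+1) = d := by omega
  unfold hh
  rw [hd, hd']
  have := Finset.sum_choose_succ_mul (R := R)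
    (fun i k => (∑ i, y i) ^ k * alt y (gam r (n+i) j)) d
  rw [this, ← Finset.sum_add_distrib, ← Finset.sum_sub_distrib]
  refine sum_mem fun i hi => ?_
  have hi' : i ≤ d := by have := Finset.mem_range.1 hi; omega
  rw [show d + 1 - i = (d - i) + 1 by omega]
  have e : (d.choose i : R) * ((∑ i, y i) ^ (d - i + 1) * alt y (gam r (n+i) j))
      + (d.choose i : R) * ((∑ i, y i) ^ (d - i) * alt y (gam r (n+(i+1)) j))
      - (d.choose i : R) * ((∑ i, y i) ^ (d - i) * alt y (gam r (n+i) (j+1))) =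
      (d.choose i : R) * ((∑ i, y i) ^ (d - i) * (((∑ i, y i) * alt y (gam r (n+i) j)
        - alt y (gam r (n+i) (j+1))) + alt y (gam r (n+(i+1)) j))) := by ring
  have key : (d.choose i : R) * ((∑ i, y i) ^ (d - i) * (((∑ i, y i) * alt y (gam r (n+i) j)
        - alt y (gam r (n+i) (j+1))) + alt y (gam r (n+(i+1)) j))) ∈ Cone y :=
    nat_mul_mem_Cone y _ (pow_mul_mem_Cone y _ (add_mem
      (pieri_diff y _ _ (by omega) (by omega)) (alt_mem_Cone y _ (gam_strictAnti _ _ _))) _) _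
  rw [← e] at key
  convert key using 2

lemma alt_sum_hh_mem {R : Type*} [CommRing R] {r : ℕ} (y : Fin r → R) (m b : ℕ)
    (hr : m + b + m ≤ r) :
    ∑ j ∈ Finset.range (m+1), (-1 : R)^j * (((m+b-j).choose b : R) * hh y (m+b) m j) ∈ Cone y := by
  have h := alternating_mem (Cone y) (m+1)
    (fun j => if j ≤ m then ((m+b-j).choose b : R) * hh y (m+b) m j else 0) ?_ ?_
  · convert h using 1
    refine Finset.sum_congr rfl fun j hj => ?_
    rw [if_pos (by have := Finset.mem_range.1 hj; omega), zsmul_eq_mul]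
    push_cast; rfl
  · intro j
    split_ifs
    · exact nat_mul_mem_Cone y _ (hh_mem _ _ _ _) _
    · exact zero_mem _
  · intro j
    rcases lt_or_ge j m with hj | hj
    · rw [if_pos (by omega), if_pos (by omega)]
      obtain ⟨w, hw⟩ := Nat.exists_eq_add_of_le
        (Nat.choose_le_choose b (show m + b - (j+1) ≤ m + b - j by omega))
      rw [hw]
      have e : (((m+b-(j+1)).choose b + w : ℕ) : R) * hh y (m+b) m j
        - ((m+b-(j+1)).choose b : R) * hh y (m+b) m (j+1) =
        ((m+b-(j+1)).choose b : R) * (hh y (m+b) m j - hh y (m+b) m (j+1)) + (w:R) * hh y (m+b) m j := by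
        push_cast; ring
      rw [e]
      exact add_mem (nat_mul_mem_Cone y _ (hh_diff_mem y _ _ _ hj (by omega) hr) _)
        (nat_mul_mem_Cone y _ (hh_mem _ _ _ _) _)
    · rw [if_neg (show ¬ (j+1 ≤ m) by omega), sub_zero]
      split_ifs
      · exact nat_mul_mem_Cone y _ (hh_mem _ _ _ _) _
      · exact zero_mem _

lemma choose_id (N b p : ℕ) (h : b + p ≤ N) :
    (N - p).choose b * N.choose p = N.choose b * (N - b).choose p := by
  have h1 := Nat.choose_mul (n := N) (k := b + p) (s := b) (by omega)
  have h2 := Nat.choose_mul (n := N) (k := b + p) (s := p) (by omega)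
  rw [show b + p - b = p by omega] at h1
  rw [show b + p - p = b by omega] at h2
  rw [mul_comm, ← h2, ← h1, Nat.choose_symm_add]

lemma Nf_mul_vdm {R : Type*} [CommRing R] {r : ℕ} (y : Fin r → R) (m b : ℕ)
    (hr : m + b + m ≤ r) :
    Nf (∑ i, y i) y Finset.univ (m+1) m b * alt y (gam r 0 0) =
    ∑ j ∈ Finset.range (m+1), (-1 : R)^j * (((m+b-j).choose b : R) * hh y (m+b) m j) := by
  have h1 : Nf (∑ i, y i) y Finset.univ (m+1) m b * alt y (gam r 0 0) =
      ∑ k ∈ Finset.range (m+1), ∑ p ∈ Finset.range (k+1),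
        (-1 : R)^(k-p) * (((m+b-k).choose b * (m+b-(k-p)).choose p : ℕ) : R) *
          ((∑ i, y i)^(m-k) * alt y (gam r (m+b+p) (k-p))) := by
    unfold Nf Mf
    rw [Finset.sum_mul]
    refine Finset.sum_congr rfl fun k hk => ?_
    have hk' : k ≤ m := by have := Finset.mem_range.1 hk; omega
    rw [Finset.mul_sum, Finset.sum_mul]
    symm
    have hsub : Finset.range (k+1) ⊆ Finset.range (m+1) := by
      intro p; simp only [Finset.mem_range]; omega
    refine Finset.sum_subset_zero_on_sdiff hsub ?_ ?_
    · intro p hp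
      simp only [Finset.mem_sdiff, Finset.mem_range] at hp
      rw [SS_neg _ _ _ _ (by omega)]; simp
    · intro p hp
      have hp' : p ≤ k := by have := Finset.mem_range.1 hp; omega
      rw [show (k:ℤ) + ((m+b-k:ℕ):ℤ) + (p:ℤ) = ((m+b+p:ℕ):ℤ) by omega,
        show (k:ℤ) - (p:ℤ) = ((k-p:ℕ):ℤ) by omega,
        ← SS_mul_vdm y (m+b+p) (k-p) (by omega) (by omega)]
      have e1 : (-1:R)^k * (-1)^p = (-1)^(k-p) := by
        obtain ⟨q, rfl⟩ := Nat.exists_eq_add_of_le hp'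
        rw [show p + q - p = q by omega, pow_add, mul_right_comm, ← mul_pow]; simp
      have e2 : (m+b-k+p).choose (m+b-k) = (m+b-(k-p)).choose p := by
        rw [show m+b-(k-p) = m+b-k+p by omega, Nat.choose_symm_add]
      rw [← e1, e2]; push_cast; ring
  rw [h1]
  unfold hh
  simp only [Finset.mul_sum]
  rw [Finset.sum_sigma', Finset.sum_sigma']
  refine Finset.sum_nbij' (fun q => ⟨q.1 - q.2, q.2⟩) (fun q => ⟨q.1 + q.2, q.2⟩) ?_ ?_ ?_ ?_ ?_
  · rintro ⟨k, p⟩ h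
    simp only [Finset.mem_sigma, Finset.mem_range] at h ⊢
    omega
  · rintro ⟨k, p⟩ h
    simp only [Finset.mem_sigma, Finset.mem_range] at h ⊢
    omega
  · rintro ⟨k, p⟩ h
    simp only [Finset.mem_sigma, Finset.mem_range] at h
    simp only [Sigma.mk.injEq, heq_eq_eq, and_true]
    omega
  · rintro ⟨k, p⟩ h
    simp
  · rintro ⟨k, p⟩ h
    simp only [Finset.mem_sigma, Finset.mem_range] at h
    simp only
    have hid := choose_id (m+b-(k-p)) b p (by omega)
    rw [show m+b-(k-p)-p = m+b-k by omega, show m + b - (k-p) - b = m - (k-p) by omega] at hid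
    rw [hid, show m - (k-p) - p = m - k by omega]
    push_cast; ring

lemma main_mem_Cone {R : Type*} [CommRing R] {r : ℕ} (y : Fin r → R) (m b : ℕ)
    (hr : m + b + m ≤ r) :
    Ns (fun i => (∑ i, y i) * y i - y i ^ 2) y Finset.univ m b * alt y (gam r 0 0) ∈ Cone y := by
  rw [Ns_formula (∑ i, y i) y (m+1) Finset.univ m b (by omega), Nf_mul_vdm y m b hr]
  exact alt_sum_hh_mem y m b hr

lemma Es_map {R ι κ : Type*} [CommRing R] (e : ι ↪ κ) (v : κ → R) (s : Finset ι) (b : ℕ) :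
    Es v (s.map e) b = Es (fun i => v (e i)) s b := by
  simp [Es, Finset.powersetCard_map]

lemma Ns_map {R ι κ : Type*} [CommRing R] (e : ι ↪ κ) (u v : κ → R) (s : Finset ι) (a b : ℕ) :
    Ns u v (s.map e) a b = Ns (fun i => u (e i)) (fun i => v (e i)) s a b := by
  unfold Ns
  rw [Finset.powersetCard_map, Finset.sum_map]
  refine Finset.sum_congr rfl fun A _ => ?_
  simp only [RelEmbedding.coe_toEmbedding, Finset.mapEmbedding_apply, Finset.prod_map]
  rw [← Es_map]
  congr 2
  ext c
  simp only [Finset.mem_sdiff, Finset.mem_map]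
  constructor
  · rintro ⟨⟨i, hi, rfl⟩, h⟩
    exact ⟨i, ⟨hi, fun h' => h ⟨i, h', rfl⟩⟩, rfl⟩
  · rintro ⟨i, ⟨hi, h⟩, rfl⟩
    refine ⟨⟨i, hi, rfl⟩, ?_⟩
    rintro ⟨j, hj, hij⟩
    exact h (e.injective hij ▸ hj)

def shiftEmb (r : ℕ) : Fin r ↪ ℕ := ⟨fun i => i + 1, fun i j h => Fin.ext (by simpa using h)⟩

lemma univ_map_shift (r : ℕ) : (Finset.univ : Finset (Fin r)).map (shiftEmb r) = Finset.Icc 1 r := by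
  ext c
  simp only [Finset.mem_map, Finset.mem_univ, true_and, Finset.mem_Icc]
  constructor
  · rintro ⟨i, rfl⟩
    have := i.2
    show 1 ≤ (i:ℕ) + 1 ∧ (i:ℕ) + 1 ≤ r
    omega
  · intro h
    refine ⟨⟨c - 1, by omega⟩, ?_⟩
    show c - 1 + 1 = c
    omega

/-! ### coefficients of alternants -/

noncomputable def yv (r : ℕ) : Fin r → MvPolynomial ℕ ℚ := fun i => MvPolynomial.X ((i:ℕ)+1)

noncomputable def expo {r : ℕ} (β : Fin r → ℕ) : ℕ →₀ ℕ := ∑ i : Fin r, Finsupp.single ((i:ℕ)+1) (β i)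

lemma expo_apply {r : ℕ} (β : Fin r → ℕ) (i : Fin r) : expo β ((i:ℕ)+1) = β i := by
  unfold expo
  rw [Finsupp.finsetSum_apply, Finset.sum_eq_single i]
  · simp
  · intro j _ hj
    rw [Finsupp.single_apply, if_neg]
    intro h; exact hj (Fin.ext (by omega))
  · simp

lemma alt_coeff {r : ℕ} (α β : Fin r → ℕ) (hα : StrictAnti α) (hβ : StrictAnti β) :
    MvPolynomial.coeff (expo β) (alt (yv r) α) = if α = β then 1 else 0 := by
  rw [alt_apply, MvPolynomial.coeff_sum]
  have hmon : ∀ σ : Equiv.Perm (Fin r), ∏ i, yv r (σ i) ^ α i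
      = MvPolynomial.monomial (expo (fun i => α (σ.symm i))) (1:ℚ) := by
    intro σ
    unfold expo yv
    rw [← Equiv.prod_comp σ.symm]
    simp only [Equiv.apply_symm_apply, MvPolynomial.X_pow_eq_monomial]
    rw [← MvPolynomial.monomial_sum_one]
  have hc : ∀ σ : Equiv.Perm (Fin r), MvPolynomial.coeff (expo β)
      (((Equiv.Perm.sign σ : ℤ) : MvPolynomial ℕ ℚ) * ∏ i, yv r (σ i) ^ α i)
      = ((Equiv.Perm.sign σ : ℤ) : ℚ) * if (fun i => α (σ.symm i)) = β then 1 else 0 := by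
    intro σ
    rw [hmon, show (((Equiv.Perm.sign σ : ℤ) : MvPolynomial ℕ ℚ)) =
      MvPolynomial.C ((Equiv.Perm.sign σ : ℤ) : ℚ) by simp, MvPolynomial.coeff_C_mul,
      MvPolynomial.coeff_monomial]
    congr 1
    refine if_congr ?_ rfl rfl
    constructor
    · intro h
      funext i
      rw [← expo_apply (fun i => α (σ.symm i)) i, h, expo_apply]
    · intro h; rw [h]
  simp only [hc]
  have hone : ∀ σ : Equiv.Perm (Fin r), (fun i => α (σ.symm i)) = β → α = β := by
    intro σ h
    rw [← StrictAnti.range_inj hα hβ, ← h]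
    exact (σ.symm.surjective.range_comp α).symm
  split_ifs with h
  · subst h
    rw [Finset.sum_eq_single 1]
    · have : (fun i => α ((1 : Equiv.Perm (Fin r)).symm i)) = α := by funext i; rfl
      simp [this]
    · intro σ _ hσ
      rw [if_neg, mul_zero]
      intro h
      apply hσ
      have : ∀ i, σ.symm i = i := fun i => hα.injective (congrFun h i)
      ext i
      have h2 := this (σ i)
      rw [Equiv.symm_apply_apply] at h2
      simp [← h2]
    · simp
  · refine Finset.sum_eq_zero fun σ _ => ?_
    rw [if_neg (fun h' => h (hone σ h')), mul_zero]

lemma Cone_coeff_nonneg {r : ℕ} (β : Fin r → ℕ) (hβ : StrictAnti β) (z : MvPolynomial ℕ ℚ)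
    (hz : z ∈ Cone (yv r)) : 0 ≤ MvPolynomial.coeff (expo β) z := by
  unfold Cone at hz
  induction hz using AddSubmonoid.closure_induction with
  | mem z hz =>
    obtain ⟨α, hα, rfl⟩ := hz
    rw [alt_coeff α β hα hβ]
    split_ifs <;> norm_num
  | zero => simp
  | add a b _ _ ha hb => rw [MvPolynomial.coeff_add]; exact add_nonneg ha hb

/-! ### row lengths -/

lemma rowLen_list_pos {N : ℕ} (lam : Nat.Partition N) (i : ℕ)
    (h : i < ((lam.parts.sort (· ≤ ·)).reverse).length) :
    0 < ((lam.parts.sort (· ≤ ·)).reverse)[i] := by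
  apply lam.parts_pos
  have := List.getElem_mem h
  rwa [List.mem_reverse, Multiset.mem_sort] at this

lemma rowLen_antitone {N : ℕ} (lam : Nat.Partition N) : Antitone (rowLen lam) := by
  intro i j hij
  unfold rowLen
  rcases lt_or_ge j ((lam.parts.sort (· ≤ ·)).reverse).length with h | h
  · rw [List.getD_eq_getElem _ _ h, List.getD_eq_getElem _ _ (by omega)]
    have hs : ((lam.parts.sort (· ≤ ·)).reverse).Pairwise (fun a b => b ≤ a) := by
      rw [List.pairwise_reverse]
      exact Multiset.pairwise_sort _ _
    rcases hij.eq_or_lt with rfl | hlt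
    · exact le_rfl
    · exact List.pairwise_iff_getElem.1 hs i j (by omega) h hlt
  · rw [List.getD_eq_default _ _ h]; exact Nat.zero_le _

lemma rowLen_zero {N : ℕ} (lam : Nat.Partition N) (i : ℕ) (h : N ≤ i) : rowLen lam i = 0 := by
  unfold rowLen
  apply List.getD_eq_default
  rw [List.length_reverse, Multiset.length_sort]
  refine le_trans ?_ h
  have h1 : lam.parts.card • 1 ≤ lam.parts.sum :=
    Multiset.card_nsmul_le_sum (fun x hx => lam.parts_pos hx)
  rw [lam.parts_sum] at h1
  simpa using h1

lemma rowLen_inj {N : ℕ} (lam nu : Nat.Partition N) (h : rowLen lam = rowLen nu) : lam = nu := by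
  have key : ∀ a b : Nat.Partition N, rowLen a = rowLen b →
      ((a.parts.sort (· ≤ ·)).reverse).length ≤ ((b.parts.sort (· ≤ ·)).reverse).length := by
    intro a b hab
    by_contra hlt
    push Not at hlt
    have h1 := congrFun hab ((b.parts.sort (· ≤ ·)).reverse).length
    unfold rowLen at h1
    rw [List.getD_eq_default _ _ le_rfl, List.getD_eq_getElem _ _ hlt] at h1
    exact (rowLen_list_pos a _ hlt).ne' h1
  have hl : ((lam.parts.sort (· ≤ ·)).reverse) = ((nu.parts.sort (· ≤ ·)).reverse) := by
    apply List.ext_getElem (le_antisymm (key _ _ h) (key _ _ h.symm))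
    intro i h1 h2
    have h3 := congrFun h i
    unfold rowLen at h3
    rwa [List.getD_eq_getElem _ _ h1, List.getD_eq_getElem _ _ h2] at h3
  have hl' := congrArg List.reverse hl
  rw [List.reverse_reverse, List.reverse_reverse] at hl'
  apply Nat.Partition.ext
  rw [← Multiset.sort_eq lam.parts (· ≤ ·), hl', Multiset.sort_eq]

/-! ### coefficients of Schur polynomials -/

lemma coeff_sum_monomial {A : Type*} (S : Finset A) (w : A → (ℕ →₀ ℕ)) (μ : ℕ →₀ ℕ) :
    MvPolynomial.coeff μ (∑ a ∈ S, MvPolynomial.monomial (w a) (1:ℚ))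
      = ((S.filter (fun a => w a = μ)).card : ℚ) := by
  rw [MvPolynomial.coeff_sum]
  simp only [MvPolynomial.coeff_monomial]
  rw [Finset.sum_boole]

/-- cells of a shape with at most `r` rows -/
def cellsOf (r : ℕ) (ν : ℕ → ℕ) : Finset (ℕ × ℕ) :=
  (Finset.range r).biUnion fun i => (Finset.range (ν i)).map ⟨fun j => (i, j), fun _ _ h => (Prod.mk.inj h).2⟩

lemma mem_cellsOf (r : ℕ) (ν : ℕ → ℕ) (h0 : ∀ i, r ≤ i → ν i = 0) (c : ℕ × ℕ) :
    c ∈ cellsOf r ν ↔ c.2 < ν c.1 := by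
  obtain ⟨i, j⟩ := c
  simp only [cellsOf, Finset.mem_biUnion, Finset.mem_range, Finset.mem_map]
  constructor
  · rintro ⟨i', _, j', h, he⟩
    obtain ⟨rfl, rfl⟩ := Prod.mk.inj he
    exact h
  · intro h
    refine ⟨i, ?_, j, h, rfl⟩
    by_contra hi
    rw [h0 i (by omega)] at h
    omega

lemma wtT_eq (r : ℕ) (ν : ℕ → ℕ) (t : ℕ × ℕ → ℕ) :
    wtT (fun c => (MvPolynomial.X c : MvPolynomial ℕ ℚ)) r ν t =
      MvPolynomial.monomial (∑ c ∈ cellsOf r ν, Finsupp.single (t c) 1) (1:ℚ) := by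
  rw [MvPolynomial.monomial_sum_one, cellsOf, Finset.prod_biUnion]
  · simp only [Finset.prod_map]
    rfl
  · intro i _ i' _ hne
    rw [Function.onFun, Finset.disjoint_left]
    intro c h1 h2
    obtain ⟨j, _, rfl⟩ := Finset.mem_map.1 h1
    obtain ⟨j', _, h⟩ := Finset.mem_map.1 h2
    exact hne (Prod.mk.inj h).1.symm

lemma sum_single_apply {A : Type*} (S : Finset A) (t : A → ℕ) (i : ℕ) :
    (∑ c ∈ S, Finsupp.single (t c) 1 : ℕ →₀ ℕ) i = (S.filter (fun c => t c = i)).card := by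
  rw [Finsupp.finsetSum_apply, Finset.card_filter]
  refine Finset.sum_congr rfl fun c _ => ?_
  rw [Finsupp.single_apply]

lemma Sch_coeff {N : ℕ} (lam : Nat.Partition N) (r : ℕ) (hr : N ≤ r) (μ : ℕ →₀ ℕ) :
    MvPolynomial.coeff μ (Sch (fun c => (MvPolynomial.X c : MvPolynomial ℕ ℚ)) r (rowLen lam))
      = if ∀ i, μ i ≠ 0 → i ∈ Finset.Icc 1 r then schurFn lam μ else 0 := by
  have h0 : ∀ i, r ≤ i → rowLen lam i = 0 := fun i hi => rowLen_zero lam i (by omega)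
  have hcard : ∀ (t : Cell → ℕ) i, Nat.card {c : Cell // c ∈ diag lam ∧ t c = i} =
      (∑ c ∈ cellsOf r (rowLen lam), Finsupp.single (t c) 1 : ℕ →₀ ℕ) i := by
    intro t i
    rw [sum_single_apply]
    apply Nat.subtype_card
    intro c
    rw [Finset.mem_filter, mem_cellsOf r _ h0]
    rfl
  unfold Sch
  simp only [wtT_eq]
  rw [coeff_sum_monomial]
  split_ifs with hμ
  · unfold schurFn
    congr 1
    symm
    apply Nat.subtype_card
    intro t
    rw [Finset.mem_filter, mem_Tab r _ (rowLen_antitone lam) h0]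
    constructor
    · rintro ⟨⟨h1, h2, h3, h4⟩, hw⟩
      refine ⟨⟨fun c hc => h1 c hc, fun c hc => (h2 c hc).1, fun i j h => h3 i j h, fun i j h => h4 i j h⟩, ?_⟩
      intro i
      rw [hcard, hw]
    · rintro ⟨⟨h1, h2, h3, h4⟩, hw⟩
      refine ⟨⟨fun c hc => h1 c hc, fun c hc => ⟨h2 c hc, ?_⟩, fun i j h => h3 i j h, fun i j h => h4 i j h⟩, ?_⟩
      · have hne : μ (t c) ≠ 0 := by
          rw [← hw, hcard, sum_single_apply]
          refine (Finset.card_pos.2 ⟨c, ?_⟩).ne'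
          rw [Finset.mem_filter, mem_cellsOf r _ h0]
          exact ⟨hc, rfl⟩
        exact (Finset.mem_Icc.1 (hμ _ hne)).2
      · ext i
        rw [← hcard, hw]
  · rw [Nat.cast_eq_zero, Finset.card_eq_zero, Finset.filter_eq_empty_iff]
    intro t ht hw
    apply hμ
    intro i hi
    rw [mem_Tab r _ (rowLen_antitone lam) h0] at ht
    rw [← hw, sum_single_apply] at hi
    obtain ⟨c, hc⟩ := Finset.card_pos.1 (Nat.pos_of_ne_zero hi)
    rw [Finset.mem_filter, mem_cellsOf r _ h0] at hc
    have := ht.2.1 c hc.1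
    rw [Finset.mem_Icc, ← hc.2]
    exact ⟨this.1, this.2⟩

lemma Xp_coeff {V : Type*} [Fintype V] [DecidableEq V] (G : SimpleGraph V) (r : ℕ) (μ : ℕ →₀ ℕ) :
    MvPolynomial.coeff μ (∑ f ∈ (Fintype.piFinset (fun _ : V => Finset.Icc 1 r)).filter
      (IsProperColoring G), ∏ v, (MvPolynomial.X (f v) : MvPolynomial ℕ ℚ))
      = if ∀ i, μ i ≠ 0 → i ∈ Finset.Icc 1 r then XCoeff G μ else 0 := by
  have hcard : ∀ (f : V → ℕ) i, Nat.card {v : V // f v = i} =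
      (∑ v, Finsupp.single (f v) 1 : ℕ →₀ ℕ) i := by
    intro f i
    rw [sum_single_apply]
    apply Nat.subtype_card
    intro c
    simp
  have hm : ∀ f : V → ℕ, ∏ v, (MvPolynomial.X (f v) : MvPolynomial ℕ ℚ) =
      MvPolynomial.monomial (∑ v, Finsupp.single (f v) 1) (1:ℚ) := by
    intro f
    rw [MvPolynomial.monomial_sum_one]; rfl
  simp only [hm]
  rw [coeff_sum_monomial]
  split_ifs with hμ
  · unfold XCoeff
    congr 1
    symm
    apply Nat.subtype_card
    intro f
    rw [Finset.mem_filter, Finset.mem_filter, Fintype.mem_piFinset]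
    constructor
    · rintro ⟨⟨_, h2⟩, hw⟩
      refine ⟨h2, fun i => ?_⟩
      rw [hcard, hw]
    · rintro ⟨h, hw⟩
      refine ⟨⟨fun v => hμ _ ?_, h⟩, ?_⟩
      · rw [← hw, hcard, sum_single_apply]
        exact (Finset.card_pos.2 ⟨v, by simp⟩).ne'
      · ext i
        rw [← hcard, hw]
  · rw [Nat.cast_eq_zero, Finset.card_eq_zero, Finset.filter_eq_empty_iff]
    intro f hf hw
    apply hμ
    intro i hi
    rw [Finset.mem_filter, Fintype.mem_piFinset] at hf
    rw [← hw, sum_single_apply] at hi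
    obtain ⟨v, hv⟩ := Finset.card_pos.1 (Nat.pos_of_ne_zero hi)
    rw [Finset.mem_filter] at hv
    rw [← hv.2]
    exact hf.1 v

lemma beta_strictAnti {N : ℕ} (nu : Nat.Partition N) (r : ℕ) :
    StrictAnti (fun j : Fin r => rowLen nu j + (r - 1 - j)) := by
  intro i j hij
  have h1 : (i:ℕ) < j := hij
  have h2 := j.2
  have h3 := rowLen_antitone nu h1.le
  simp only
  omega

lemma coeff_nonneg_of_expansion (m b r : ℕ) (hr : r = m + b + m) (c : Nat.Partition r →₀ ℚ)
    (hc : ∀ μ, XCoeff (genNet (m+b) m) μ = c.sum fun ν a => a * schurFn ν μ)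
    (lam : Nat.Partition r) : 0 ≤ c lam := by
  set x : ℕ → MvPolynomial ℕ ℚ := fun c => MvPolynomial.X c with hx
  set Xp := ∑ f ∈ (Fintype.piFinset (fun _ : Fin (m+b) ⊕ Fin m => Finset.Icc 1 r)).filter
      (IsProperColoring (genNet (m+b) m)), ∏ v, x (f v) with hXp
  have hexp : Xp = c.sum fun ν a => MvPolynomial.C a * Sch x r (rowLen ν) := by
    ext μ
    refine (Xp_coeff (genNet (m+b) m) r μ).trans ?_
    rw [Finsupp.sum, MvPolynomial.coeff_sum]
    simp only [MvPolynomial.coeff_C_mul, hx]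
    split_ifs with hμ
    · rw [hc, Finsupp.sum]
      refine Finset.sum_congr rfl fun ν _ => ?_
      rw [Sch_coeff ν r le_rfl, if_pos hμ]
    · symm
      refine Finset.sum_eq_zero fun ν _ => ?_
      rw [Sch_coeff ν r le_rfl, if_neg hμ, mul_zero]
  have hvdm : alt (yv r) (gam r 0 0) = vdm x r := by
    rw [vdm_eq_alt]
    congr 1
  have hcoef : MvPolynomial.coeff (expo (fun j : Fin r => rowLen lam j + (r - 1 - j)))
      (Xp * vdm x r) = c lam := by
    rw [hexp, Finsupp.sum, Finset.sum_mul, MvPolynomial.coeff_sum]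
    have : ∀ ν ∈ c.support, MvPolynomial.coeff (expo (fun j : Fin r => rowLen lam j + (r - 1 - j)))
        (MvPolynomial.C (c ν) * Sch x r (rowLen ν) * vdm x r) = if ν = lam then c ν else 0 := by
      intro ν _
      rw [mul_assoc, mul_comm (Sch _ _ _), ← alt_eq_Sch x r (rowLen ν) (rowLen_antitone ν)
        (fun i hi => rowLen_zero ν i hi), MvPolynomial.coeff_C_mul]
      have h := alt_coeff (fun j : Fin r => rowLen ν j + (r - 1 - j))
        (fun j : Fin r => rowLen lam j + (r - 1 - j)) (beta_strictAnti ν r) (beta_strictAnti lam r)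
      rw [show (fun i : Fin r => x ((i:ℕ)+1)) = yv r from rfl, h]
      have hiff : ((fun j : Fin r => rowLen ν j + (r - 1 - j)) =
          (fun j : Fin r => rowLen lam j + (r - 1 - j))) ↔ ν = lam := by
        constructor
        · intro e
          apply rowLen_inj
          funext i
          rcases lt_or_ge i r with hi | hi
          · have := congrFun e ⟨i, hi⟩
            simp only at this
            omega
          · rw [rowLen_zero ν i hi, rowLen_zero lam i hi]
        · rintro rfl; rfl
      rw [if_congr hiff rfl rfl]
      split_ifs <;> simp
    rw [Finset.sum_congr rfl this, Finset.sum_ite_eq']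
    split_ifs with h
    · rfl
    · simpa using (Finsupp.notMem_support_iff.1 h).symm
  rw [← hcoef]
  apply Cone_coeff_nonneg _ (beta_strictAnti lam r)
  rw [hXp, Xpoly_eq x (Finset.Icc 1 r) (fun c hc => (Finset.mem_Icc.1 hc).1), ← hvdm,
    ← univ_map_shift, Finset.sum_map, Ns_map, ← Nat.cast_mul, mul_assoc]
  apply nat_mul_mem_Cone
  exact main_mem_Cone (yv r) m b hr.ge


end NetHelpers

/-- For `n ≥ 1` and `n ≥ m ≥ 0`, the generalized net `GN_{n,m}` is
Schur-positive: every Schur coefficient of its chromatic symmetric function is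
nonnegative. -/
theorem genNet_schur_positive (n m : ℕ) (hn : 1 ≤ n) (hm : m ≤ n)
    (lam : Nat.Partition (n + m)) :
    0 ≤ sCoeff (XCoeff (genNet n m)) lam := by
  obtain ⟨b, rfl⟩ := Nat.exists_eq_add_of_le hm
  unfold sCoeff
  split_ifs with h
  · exact coeff_nonneg_of_expansion m b _ rfl h.choose h.choose_spec lam
  · exact le_rfl
end
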